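/- (Solutions with inhomogeneity of exact polyhomogeneous leading order; flat case of Proposition 3.2.) Let n ≥ 3, p > n, and γ, γ' ∈ (2−n, 0) with γ' < γ. Set c_γ = (γ² + (n−2)γ)^{−1}. Suppose f : ℝⁿ → ℝ is smooth and the function f̂ defined by f̂(x) = f(x) − ‖x‖^{γ−2} for ‖x‖ ≥ 1 and f̂(x) = 0 for ‖x‖ < 1 satisfies ‖f̂‖_{L^p_{γ'−2}} < ∞ and ‖f·1_{‖x‖<1}‖_{L^p} < ∞. Let γ'' = max{γ', 2γ} if max{γ', 2γ} > 2−n, and otherwise let γ'' be any number in (2−n, γ). Then there exists a unique smooth bounded function w : ℝⁿ → ℝ tending to 0 at infinity with Δw = f, and the function ŵ defined by ŵ(x) = w(x) − c_γ ‖x‖^{γ} for ‖x‖ ≥ 1 and ŵ(x) = w(x) − c_γ for ‖x‖ < 1 satisfies ‖ŵ‖_{W^{2,p}_{γ''}} < ∞. -/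

import Mathlib

/-!
The profile `c_γ ‖x‖^γ`, smoothed near the origin by `cutPow`, has Laplacian exactly `‖x‖^(γ-2)`
outside the unit ball (`lap_cutPow`). Subtracting it leaves the equation `Δv = g` with `g` smooth and
in `L^p_{γ'-2}`, and `w` is the sum of `v` and the profile. Outside the unit ball `ŵ = v`, inside it
`ŵ` is smooth, and the unit sphere is a null set (`glue_fin`); so it suffices to put `v` into
`W^{2,p}_{γ'}`. Indeed `γ' > 2 - n` excludes the degenerate choice of `γ''`, whence
`γ'' = max γ' (2γ) ≥ γ'`, and the `γ''`-norm is the weaker one. Uniqueness is Liouville's theorem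
(`Ker.harmonic_zero`).

The solution `v` is the Newton potential of `g` (`Ker.weighted_solution`). Everything rests on
`∫ ‖x-y‖^(α-n) ⟨y⟩^(-s) dy ≤ C ⟨x⟩^(α-s)` for `0 < α < s < n` (`kernel_jap`): Hölder's inequality then
gives `|v| ≤ C ⟨x⟩^γ'` (`riesz_pointwise`), and Schur's test gives the weighted `L^p` bounds on `v`
and `∇v` (`riesz_schur`). Second derivatives are handled by the Calderón–Zygmund inequality applied
to `⟨x⟩^a v` with cutoffs, the commutators being of lower order (`Ker.hess_wt`).

The Calderón–Zygmund inequality is needed only for `p > 2`, and is derived from the case `p = 2`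
(integration by parts, `integral_hess_sq_le`) by a good-`λ` argument. The tool is the representation
`u = E_s ⋆ Δu + ρ_s ⋆ u` at scale `s`, with `E_s` a truncated fundamental solution and `ρ_s` a
mollifier (`Ker.repr`). It bounds the local `L²` distance of `∂ᵢ∂ⱼu` from its mollification by the
local `L²` norm of `Δu` (`Ker.local_L2`). On the balls where the averages of `|∂ᵢ∂ⱼu|² + A |Δu|²`
first reach a level `l`, the mollification is `O(l^(1/2))` and the error carries a factor `1/A`
(`Ker.one_ball`). Summing over a Vitali family and over levels, and taking `A` large, absorbs the
Hessian on the right-hand side (`Ker.calderon_zygmund`).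
-/

noncomputable section

open MeasureTheory Filter
open scoped ENNReal Topology

/-- `n`-dimensional Euclidean space. -/
abbrev Euc (n : ℕ) := EuclideanSpace ℝ (Fin n)

/-- The Japanese bracket `⟨x⟩ = (1 + ‖x‖²)^(1/2)`. -/
def jap {n : ℕ} (x : Euc n) : ℝ := Real.sqrt (1 + ‖x‖ ^ 2)

/-- Partial derivative `∂ᵢ f` of a real-valued function. -/
def pd {n : ℕ} (i : Fin n) (f : Euc n → ℝ) (x : Euc n) : ℝ :=
  fderiv ℝ f x (EuclideanSpace.single i 1)

/-- The Euclidean Laplacian `Δf = Σᵢ ∂ᵢ²f`. -/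
def lap {n : ℕ} (f : Euc n → ℝ) (x : Euc n) : ℝ :=
  ∑ i, pd i (pd i f) x

/-- Divergence of a vector field. -/
def divg {n : ℕ} (W : Euc n → Euc n) (x : Euc n) : ℝ :=
  ∑ i, pd i (fun y => W y i) x

/-- The conformal Killing operator `(𝒟W)ᵢⱼ = ∂ᵢWⱼ + ∂ⱼWᵢ − (2/n)(div W)δᵢⱼ`. -/
def confKill {n : ℕ} (W : Euc n → Euc n) (x : Euc n) : Matrix (Fin n) (Fin n) ℝ :=
  Matrix.of fun i j =>
    pd i (fun y => W y j) x + pd j (fun y => W y i) x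
      - (2 / (n : ℝ)) * divg W x * (if i = j then 1 else 0)

/-- The Frobenius norm of a matrix. -/
def frob {n : ℕ} (M : Matrix (Fin n) (Fin n) ℝ) : ℝ :=
  Real.sqrt (∑ i, ∑ j, (M i j) ^ 2)

/-- The vector Laplacian `(Δ_L W)ⱼ = −Σᵢ ∂ᵢ (𝒟W)ᵢⱼ`. -/
def vecLap {n : ℕ} (W : Euc n → Euc n) (x : Euc n) : Euc n :=
  (EuclideanSpace.equiv (Fin n) ℝ).symm
    (fun j => -∑ i, pd i (fun y => confKill W y i j) x)

/-- Weighted `L^p_δ` norm (as an extended nonnegative real). -/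
def LpW {n : ℕ} {F : Type*} [NormedAddCommGroup F] (p δ : ℝ) (f : Euc n → F) : ℝ≥0∞ :=
  (∫⁻ x, ENNReal.ofReal ((jap x ^ (-δ - (n : ℝ) / p) * ‖f x‖) ^ p)) ^ (1 / p)

/-- Weighted Sobolev `W^{k,p}_δ` norm. -/
def SobW {n : ℕ} {F : Type*} [NormedAddCommGroup F] [NormedSpace ℝ F]
    (k : ℕ) (p δ : ℝ) (f : Euc n → F) : ℝ≥0∞ :=
  ∑ j ∈ Finset.range (k + 1),
    (∫⁻ x, ENNReal.ofReal
      ((jap x ^ (-δ - (n : ℝ) / p + (j : ℝ)) * ‖iteratedFDeriv ℝ j f x‖) ^ p)) ^ (1 / p)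

/-- Weighted `L^∞_δ` norm. -/
def LinfW {n : ℕ} {F : Type*} [NormedAddCommGroup F] (δ : ℝ) (f : Euc n → F) : ℝ≥0∞ :=
  ⨆ x, ENNReal.ofReal (jap x ^ (-δ) * ‖f x‖)

/-- Weighted `L^∞_δ` norm of a matrix field, pointwise Frobenius norm. -/
def LinfWM {n : ℕ} (δ : ℝ) (σ : Euc n → Matrix (Fin n) (Fin n) ℝ) : ℝ≥0∞ :=
  ⨆ x, ENNReal.ofReal (jap x ^ (-δ) * frob (σ x))

/-- `N = 2n/(n−2)`. -/
def Nc (n : ℕ) : ℝ := 2 * n / ((n : ℝ) - 2)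
/-- `c_n = (n−2)/(4(n−1))`. -/
def cc (n : ℕ) : ℝ := ((n : ℝ) - 2) / (4 * ((n : ℝ) - 1))
/-- `b_n = (n−2)/(4n)`. -/
def bc (n : ℕ) : ℝ := ((n : ℝ) - 2) / (4 * (n : ℝ))

/-- Componentwise smoothness of a matrix field. -/
def SmoothMat {n : ℕ} (σ : Euc n → Matrix (Fin n) (Fin n) ℝ) : Prop :=
  ∀ i j, ContDiff ℝ (⊤ : ℕ∞) fun x => σ x i j

/-- A matrix field is symmetric, trace-free and divergence-free. -/
def SymTT {n : ℕ} (σ : Euc n → Matrix (Fin n) (Fin n) ℝ) : Prop :=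
  (∀ x i j, σ x i j = σ x j i) ∧ (∀ x, ∑ i, σ x i i = 0) ∧
    (∀ x j, ∑ i, pd i (fun y => σ y i j) x = 0)

/-- The left-hand side of the Lichnerowicz (Hamiltonian) equation (i). -/
def HamExpr {n : ℕ} (τ : Euc n → ℝ) (σ : Euc n → Matrix (Fin n) (Fin n) ℝ)
    (ρ : Euc n → ℝ) (u : Euc n → ℝ) (W : Euc n → Euc n) (x : Euc n) : ℝ :=
  lap u x + cc n * frob (σ x + confKill W x) ^ 2 * u x ^ (-(Nc n) - 1)
    - bc n * τ x ^ 2 * u x ^ (Nc n - 1) + cc n * ρ x * u x ^ (-(Nc n) / 2)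

/-- Equation (i): the Lichnerowicz equation. -/
def HamEq {n : ℕ} (τ : Euc n → ℝ) (σ : Euc n → Matrix (Fin n) (Fin n) ℝ)
    (ρ : Euc n → ℝ) (u : Euc n → ℝ) (W : Euc n → Euc n) : Prop :=
  ∀ x, HamExpr τ σ ρ u W x = 0

/-- Equation (ii): the momentum constraint `Δ_L W + ((n−1)/n) u^N ∇τ + J = 0`. -/
def MomEq {n : ℕ} (τ : Euc n → ℝ) (J : Euc n → Euc n)
    (u : Euc n → ℝ) (W : Euc n → Euc n) : Prop :=
  ∀ x, vecLap W x + ((((n : ℝ) - 1) / n) * u x ^ Nc n) • gradient τ x + J x = 0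

/-- Global supersolution property for `φ₊`. -/
def GlobalSuperSol {n : ℕ} (p δ : ℝ) (τ : Euc n → ℝ)
    (σ : Euc n → Matrix (Fin n) (Fin n) ℝ) (ρ : Euc n → ℝ) (J : Euc n → Euc n)
    (φp : Euc n → ℝ) : Prop :=
  ∀ φ : Euc n → ℝ, Continuous φ → (∀ x, 0 < φ x ∧ φ x ≤ φp x) →
    ∀ W : Euc n → Euc n, ContDiff ℝ (⊤ : ℕ∞) W → SobW 2 p δ W < ⊤ → MomEq τ J φ W →
    ∀ x, HamExpr τ σ ρ φp W x ≤ 0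

/-- Global subsolution property for `φ₋`. -/
def GlobalSubSol {n : ℕ} (p δ : ℝ) (τ : Euc n → ℝ)
    (σ : Euc n → Matrix (Fin n) (Fin n) ℝ) (ρ : Euc n → ℝ) (J : Euc n → Euc n)
    (φm : Euc n → ℝ) : Prop :=
  ∀ φ : Euc n → ℝ, Continuous φ → (∀ x, φm x ≤ φ x) →
    ∀ W : Euc n → Euc n, ContDiff ℝ (⊤ : ℕ∞) W → SobW 2 p δ W < ⊤ → MomEq τ J φ W →
    ∀ x, 0 ≤ HamExpr τ σ ρ φm W x

/-! ### Calculus with partial derivatives -/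

section pdcalc
variable {n : ℕ}

lemma contDiff_pd {f : Euc n → ℝ} (hf : ContDiff ℝ (⊤ : ℕ∞) f) (i : Fin n) :
    ContDiff ℝ (⊤ : ℕ∞) (pd i f) := by
  unfold pd
  exact (hf.fderiv_right (m := (⊤ : ℕ∞)) (by simp)).clm_apply contDiff_const

lemma contDiff_lap {f : Euc n → ℝ} (hf : ContDiff ℝ (⊤ : ℕ∞) f) :
    ContDiff ℝ (⊤ : ℕ∞) (lap f) := by
  unfold lap
  exact ContDiff.sum fun i _ => contDiff_pd (contDiff_pd hf i) i

lemma ContDiff.diff' {f : Euc n → ℝ} (hf : ContDiff ℝ (⊤ : ℕ∞) f) : Differentiable ℝ f :=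
  hf.differentiable (by simp)

lemma pd_congr {f g : Euc n → ℝ} {x : Euc n} (h : f =ᶠ[𝓝 x] g) (i : Fin n) :
    pd i f x = pd i g x := by
  unfold pd; rw [h.fderiv_eq]

lemma pd_congr_ev {f g : Euc n → ℝ} {x : Euc n} (h : f =ᶠ[𝓝 x] g) (i : Fin n) :
    pd i f =ᶠ[𝓝 x] pd i g := by
  filter_upwards [h.eventuallyEq_nhds] with y hy using pd_congr hy i

lemma lap_congr {f g : Euc n → ℝ} {x : Euc n} (h : f =ᶠ[𝓝 x] g) :
    lap f x = lap g x := by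
  unfold lap
  exact Finset.sum_congr rfl fun i _ => pd_congr (pd_congr_ev h i) i

lemma pd_add {f g : Euc n → ℝ} (hf : Differentiable ℝ f) (hg : Differentiable ℝ g) (i : Fin n) :
    pd i (fun x => f x + g x) = fun x => pd i f x + pd i g x := by
  funext x; unfold pd; rw [fderiv_fun_add (hf x) (hg x)]; rfl

lemma pd_sub {f g : Euc n → ℝ} (hf : Differentiable ℝ f) (hg : Differentiable ℝ g) (i : Fin n) :
    pd i (fun x => f x - g x) = fun x => pd i f x - pd i g x := by
  funext x; unfold pd; rw [fderiv_fun_sub (hf x) (hg x)]; rfl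

lemma pd_const_mul {f : Euc n → ℝ} (c : ℝ) (hf : Differentiable ℝ f) (i : Fin n) :
    pd i (fun x => c * f x) = fun x => c * pd i f x := by
  funext x; unfold pd; rw [fderiv_const_mul (hf x)]; rfl

lemma pd_mul {f g : Euc n → ℝ} (hf : Differentiable ℝ f) (hg : Differentiable ℝ g) (i : Fin n) :
    pd i (fun x => f x * g x) = fun x => pd i f x * g x + f x * pd i g x := by
  funext x; unfold pd; rw [fderiv_fun_mul (hf x) (hg x)]; simp; ring

lemma lap_add {f g : Euc n → ℝ} (hf : ContDiff ℝ (⊤ : ℕ∞) f) (hg : ContDiff ℝ (⊤ : ℕ∞) g) :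
    lap (fun x => f x + g x) = fun x => lap f x + lap g x := by
  funext x; unfold lap
  rw [← Finset.sum_add_distrib]
  refine Finset.sum_congr rfl fun i _ => ?_
  rw [pd_add hf.diff' hg.diff', pd_add (contDiff_pd hf i).diff' (contDiff_pd hg i).diff']

lemma lap_sub {f g : Euc n → ℝ} (hf : ContDiff ℝ (⊤ : ℕ∞) f) (hg : ContDiff ℝ (⊤ : ℕ∞) g) :
    lap (fun x => f x - g x) = fun x => lap f x - lap g x := by
  funext x; unfold lap
  rw [← Finset.sum_sub_distrib]
  refine Finset.sum_congr rfl fun i _ => ?_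
  rw [pd_sub hf.diff' hg.diff', pd_sub (contDiff_pd hf i).diff' (contDiff_pd hg i).diff']

lemma lap_const_mul {f : Euc n → ℝ} (c : ℝ) (hf : ContDiff ℝ (⊤ : ℕ∞) f) :
    lap (fun x => c * f x) = fun x => c * lap f x := by
  funext x; unfold lap
  rw [Finset.mul_sum]
  refine Finset.sum_congr rfl fun i _ => ?_
  rw [pd_const_mul c hf.diff', pd_const_mul c (contDiff_pd hf i).diff']

lemma pd_smul_arg {f : Euc n → ℝ} (c : ℝ) (hf : Differentiable ℝ f) (i : Fin n) :
    pd i (fun x => f (c • x)) = fun x => c * pd i f (c • x) := by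
  funext x; unfold pd
  have h : HasFDerivAt (fun x : Euc n => f (c • x)) ((fderiv ℝ f (c • x)).comp
      (c • ContinuousLinearMap.id ℝ (Euc n))) x :=
    (hf (c • x)).hasFDerivAt.comp x ((hasFDerivAt_id x).const_smul c)
  rw [h.fderiv]; simp

lemma lap_smul_arg {f : Euc n → ℝ} (c : ℝ) (hf : ContDiff ℝ (⊤ : ℕ∞) f) :
    lap (fun x => f (c • x)) = fun x => c ^ 2 * lap f (c • x) := by
  funext x; unfold lap
  rw [Finset.mul_sum]
  refine Finset.sum_congr rfl fun i _ => ?_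
  have h2 : Differentiable ℝ (fun x : Euc n => pd i f (c • x)) :=
    (contDiff_pd hf i).diff'.comp (differentiable_id.const_smul c)
  rw [pd_smul_arg c hf.diff', pd_const_mul c h2, pd_smul_arg c (contDiff_pd hf i).diff']
  ring

lemma pd_comm {f : Euc n → ℝ} (hf : ContDiff ℝ (⊤ : ℕ∞) f) (i j : Fin n) (x : Euc n) :
    pd i (pd j f) x = pd j (pd i f) x := by
  have hd : Differentiable ℝ (fderiv ℝ f) :=
    (hf.fderiv_right (m := (⊤ : ℕ∞)) (by simp)).differentiable (by simp)
  have key : ∀ a b : Fin n, pd a (pd b f) x =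
      fderiv ℝ (fderiv ℝ f) x (EuclideanSpace.single a 1) (EuclideanSpace.single b 1) := by
    intro a b
    unfold pd
    rw [fderiv_clm_apply (hd x) (by fun_prop)]
    simp
  rw [key, key]
  have h2 : (2 : WithTop ℕ∞) ≤ ((⊤ : ℕ∞) : WithTop ℕ∞) :=
    WithTop.coe_le_coe.2 (le_top : (2 : ℕ∞) ≤ ⊤)
  exact (hf.contDiffAt.isSymmSndFDerivAt (by simpa using h2)).eq _ _

lemma pd_radial {q q' : ℝ → ℝ} (hq : ∀ t, HasDerivAt q (q' t) t) (i : Fin n) :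
    pd i (fun x : Euc n => q (‖x‖ ^ 2)) = fun x => 2 * (x i * q' (‖x‖ ^ 2)) := by
  funext x; unfold pd
  have h := (hq (‖x‖ ^ 2)).comp_hasFDerivAt x ((hasStrictFDerivAt_norm_sq x).hasFDerivAt)
  have h' : HasFDerivAt (fun x : Euc n => q (‖x‖ ^ 2)) _ x := h
  rw [h'.fderiv]
  simp [EuclideanSpace.inner_single_right]
  ring

lemma pd_coord (i : Fin n) (x : Euc n) : pd i (fun x : Euc n => x i) x = 1 := by
  unfold pd
  have h : HasFDerivAt (fun x : Euc n => x i) (EuclideanSpace.proj i : Euc n →L[ℝ] ℝ) x :=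
    (EuclideanSpace.proj i : Euc n →L[ℝ] ℝ).hasFDerivAt
  rw [h.fderiv]; simp

lemma contDiff_coord (i : Fin n) : ContDiff ℝ (⊤ : ℕ∞) (fun x : Euc n => x i) :=
  (EuclideanSpace.proj i : Euc n →L[ℝ] ℝ).contDiff

lemma contDiff_radial {q : ℝ → ℝ} (hq : ContDiff ℝ (⊤ : ℕ∞) q) :
    ContDiff ℝ (⊤ : ℕ∞) (fun x : Euc n => q (‖x‖ ^ 2)) :=
  hq.comp (contDiff_norm_sq ℝ)

lemma lap_radial {q q' q'' : ℝ → ℝ} (hq : ∀ t, HasDerivAt q (q' t) t)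
    (hq' : ∀ t, HasDerivAt q' (q'' t) t) (x : Euc n) :
    lap (fun x : Euc n => q (‖x‖ ^ 2)) x
      = 4 * ‖x‖ ^ 2 * q'' (‖x‖ ^ 2) + 2 * n * q' (‖x‖ ^ 2) := by
  unfold lap
  have hd : Differentiable ℝ (fun x : Euc n => q' (‖x‖ ^ 2)) := fun y =>
    ((hq' (‖y‖ ^ 2)).comp_hasFDerivAt y
      ((hasStrictFDerivAt_norm_sq y).hasFDerivAt)).differentiableAt
  have key : ∀ i : Fin n, pd i (pd i (fun x : Euc n => q (‖x‖ ^ 2))) x =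
      2 * q' (‖x‖ ^ 2) + 4 * q'' (‖x‖ ^ 2) * (x i) ^ 2 := by
    intro i
    rw [pd_radial hq, pd_const_mul 2 ((contDiff_coord i).diff'.fun_mul hd),
      pd_mul (contDiff_coord i).diff' hd, pd_radial hq']
    simp only [pd_coord]
    ring
  rw [Finset.sum_congr rfl fun i _ => key i, Finset.sum_add_distrib, ← Finset.mul_sum,
    ← Finset.mul_sum]
  have hx : ∑ i, (x i) ^ 2 = ‖x‖ ^ 2 := by
    simp [EuclideanSpace.norm_sq_eq]
  rw [hx]
  simp
  ring

lemma HasCompactSupport.pd' {f : Euc n → ℝ} (hf : HasCompactSupport f) (i : Fin n) :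
    HasCompactSupport (pd i f) :=
  (hf.fderiv ℝ).comp_left (g := fun L : Euc n →L[ℝ] ℝ => L (EuclideanSpace.single i 1)) rfl

lemma HasCompactSupport.lap' {f : Euc n → ℝ} (hf : HasCompactSupport f) :
    HasCompactSupport (lap f) := by
  have h : ∀ x, x ∉ tsupport f → lap f x = 0 := by
    intro x hx
    have h0 : f =ᶠ[𝓝 x] fun _ => (0 : ℝ) := by
      rw [notMem_tsupport_iff_eventuallyEq] at hx
      exact hx
    rw [lap_congr h0]
    have hz : ∀ i : Fin n, pd i (fun _ : Euc n => (0 : ℝ)) = fun _ => 0 := by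
      intro i; funext y; simp [pd]
    simp [lap, hz]
  exact HasCompactSupport.intro hf.isCompact h

lemma lap_mul {f g : Euc n → ℝ} (hf : ContDiff ℝ (⊤ : ℕ∞) f) (hg : ContDiff ℝ (⊤ : ℕ∞) g) :
    lap (fun x => f x * g x) = fun x => f x * lap g x + 2 * (∑ i, pd i f x * pd i g x)
      + lap f x * g x := by
  funext x
  unfold lap
  have key : ∀ i : Fin n, pd i (pd i (fun x => f x * g x)) x =
      f x * pd i (pd i g) x + 2 * (pd i f x * pd i g x) + pd i (pd i f) x * g x := by
    intro i
    have hfi := (contDiff_pd hf i).diff'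
    have hgi := (contDiff_pd hg i).diff'
    rw [pd_mul hf.diff' hg.diff', pd_add (hfi.fun_mul hg.diff') (hf.diff'.fun_mul hgi),
      pd_mul hfi hg.diff', pd_mul hf.diff' hgi]
    ring
  simp only [key, Finset.sum_add_distrib, Finset.mul_sum, Finset.sum_mul]

/-- Integration by parts against a compactly supported function. -/
lemma integral_mul_pd {a b : Euc n → ℝ} (ha : ContDiff ℝ (⊤ : ℕ∞) a)
    (hb : ContDiff ℝ (⊤ : ℕ∞) b) (hbc : HasCompactSupport b) (i : Fin n) :
    ∫ x, a x * pd i b x = - ∫ x, pd i a x * b x := by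
  unfold pd
  refine integral_mul_fderiv_eq_neg_fderiv_mul_of_integrable ?_ ?_ ?_ (fun x _ => ha.diff' x)
    (fun x _ => hb.diff' x)
  · exact ((contDiff_pd ha i).continuous.mul hb.continuous).integrable_of_hasCompactSupport
      hbc.mul_left
  · exact (ha.continuous.mul (contDiff_pd hb i).continuous).integrable_of_hasCompactSupport
      (hbc.pd' i).mul_left
  · exact (ha.continuous.mul hb.continuous).integrable_of_hasCompactSupport hbc.mul_left

lemma integral_mul_lap {a b : Euc n → ℝ} (ha : ContDiff ℝ (⊤ : ℕ∞) a)
    (hb : ContDiff ℝ (⊤ : ℕ∞) b) (hbc : HasCompactSupport b) :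
    ∫ x, a x * lap b x = ∫ x, lap a x * b x := by
  unfold lap
  simp only [Finset.mul_sum, Finset.sum_mul]
  rw [integral_finsetSum, integral_finsetSum]
  · refine Finset.sum_congr rfl fun i _ => ?_
    rw [integral_mul_pd ha (contDiff_pd hb i) (hbc.pd' i),
      integral_mul_pd (contDiff_pd ha i) hb hbc, neg_neg]
  · intro i _
    exact ((contDiff_pd (contDiff_pd ha i) i).continuous.mul
      hb.continuous).integrable_of_hasCompactSupport hbc.mul_left
  · intro i _
    exact (ha.continuous.mul
      (contDiff_pd (contDiff_pd hb i) i).continuous).integrable_of_hasCompactSupport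
        ((hbc.pd' i).pd' i).mul_left

/-- The `L²` case of the Calderón–Zygmund inequality: integrating by parts twice,
`∑ᵢⱼ ∫ (∂ᵢ∂ⱼu)² = ∫ (Δu)²`. -/
lemma integral_hess_sq_le {u : Euc n → ℝ} (hu : ContDiff ℝ (⊤ : ℕ∞) u)
    (huc : HasCompactSupport u) (i j : Fin n) :
    ∫ x, (pd i (pd j u) x) ^ 2 ≤ ∫ x, (lap u x) ^ 2 := by
  have hs : ∀ a b : Fin n, ContDiff ℝ (⊤ : ℕ∞) (pd a (pd b u)) := fun a b =>
    contDiff_pd (contDiff_pd hu b) a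
  have hc : ∀ a b : Fin n, HasCompactSupport (pd a (pd b u)) := fun a b => (huc.pd' b).pd' a
  have hI : ∀ a b c d : Fin n, Integrable (fun x => pd a (pd b u) x * pd c (pd d u) x) :=
    fun a b c d => ((hs a b).continuous.mul (hs c d).continuous).integrable_of_hasCompactSupport
      (hc c d).mul_left
  have swap : ∀ a b : Fin n, ∫ x, pd a (pd b u) x * pd a (pd b u) x
      = ∫ x, pd a (pd a u) x * pd b (pd b u) x := by
    intro a b
    have e1 : ∀ x, pd a (pd b (pd b u)) x = pd b (pd a (pd b u)) x :=
      fun x => pd_comm (contDiff_pd hu b) a b x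
    have e2 : pd a (pd b u) = pd b (pd a u) := funext fun x => pd_comm hu a b x
    calc ∫ x, pd a (pd b u) x * pd a (pd b u) x
        = ∫ x, pd a (pd b u) x * pd b (pd a u) x := by rw [e2]
      _ = - ∫ x, pd b (pd a (pd b u)) x * pd a u x :=
          integral_mul_pd (hs a b) (contDiff_pd hu a) (huc.pd' a) b
      _ = - ∫ x, pd a (pd b (pd b u)) x * pd a u x := by simp only [e1]
      _ = ∫ x, pd b (pd b u) x * pd a (pd a u) x := by
          rw [integral_mul_pd (hs b b) (contDiff_pd hu a) (huc.pd' a) a]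
      _ = _ := by simp only [mul_comm]
  have tot : ∫ x, (lap u x) ^ 2 = ∑ a, ∑ b, ∫ x, pd a (pd b u) x * pd a (pd b u) x := by
    simp only [swap]
    have : ∀ x, (lap u x) ^ 2 = ∑ a, ∑ b, pd a (pd a u) x * pd b (pd b u) x := by
      intro x; unfold lap; rw [sq, Finset.sum_mul_sum]
    simp only [this]
    rw [integral_finsetSum _ fun a _ => integrable_finsetSum _ fun b _ => hI a a b b]
    refine Finset.sum_congr rfl fun a _ => ?_
    rw [integral_finsetSum _ fun b _ => hI a a b b]
  rw [tot]
  have hnn : ∀ a b : Fin n, 0 ≤ ∫ x, pd a (pd b u) x * pd a (pd b u) x := fun a b =>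
    integral_nonneg fun x => mul_self_nonneg _
  calc ∫ x, (pd i (pd j u) x) ^ 2 = ∫ x, pd i (pd j u) x * pd i (pd j u) x := by
        simp only [sq]
    _ ≤ ∑ b, ∫ x, pd i (pd b u) x * pd i (pd b u) x :=
        Finset.single_le_sum (f := fun b => ∫ x, pd i (pd b u) x * pd i (pd b u) x)
          (fun b _ => hnn i b) (Finset.mem_univ j)
    _ ≤ _ := Finset.single_le_sum
          (f := fun a => ∑ b, ∫ x, pd a (pd b u) x * pd a (pd b u) x)
          (fun a _ => Finset.sum_nonneg fun b _ => hnn a b) (Finset.mem_univ i)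

/-! ### Convolution -/

/-- The convolution `k * φ` of real functions on Euclidean space. -/
def cv (k φ : Euc n → ℝ) (x : Euc n) : ℝ := ∫ y, k y * φ (x - y)

lemma cv_eq_convolution (k φ : Euc n → ℝ) :
    cv k φ = convolution k φ (ContinuousLinearMap.mul ℝ ℝ) volume := rfl

lemma cv_comm' (k φ : Euc n → ℝ) (x : Euc n) : cv k φ x = ∫ y, k (x - y) * φ y := by
  unfold cv
  rw [← integral_sub_left_eq_self _ volume x]
  simp

lemma cv_comm (k φ : Euc n → ℝ) : cv k φ = cv φ k := by
  funext x; rw [cv_comm']; unfold cv; simp only [mul_comm]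

lemma contDiff_cv {k φ : Euc n → ℝ} (hk : LocallyIntegrable k) (hφ : ContDiff ℝ (⊤ : ℕ∞) φ)
    (hc : HasCompactSupport φ) : ContDiff ℝ (⊤ : ℕ∞) (cv k φ) :=
  hc.contDiff_convolution_right (ContinuousLinearMap.mul ℝ ℝ) hk hφ

lemma pd_cv {k φ : Euc n → ℝ} (hk : LocallyIntegrable k) (hφ : ContDiff ℝ (⊤ : ℕ∞) φ)
    (hc : HasCompactSupport φ) (i : Fin n) : pd i (cv k φ) = cv k (pd i φ) := by
  funext x
  unfold pd
  rw [cv_eq_convolution, (hc.hasFDerivAt_convolution_right (ContinuousLinearMap.mul ℝ ℝ) hk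
    (hφ.of_le (by simp)) x).fderiv, convolution_precompR_apply _ hk (hc.fderiv ℝ)
    (hφ.continuous_fderiv (by simp))]
  rfl

lemma lap_cv {k φ : Euc n → ℝ} (hk : LocallyIntegrable k) (hφ : ContDiff ℝ (⊤ : ℕ∞) φ)
    (hc : HasCompactSupport φ) (x : Euc n) : lap (cv k φ) x = cv k (lap φ) x := by
  unfold lap
  have : ∀ i, pd i (pd i (cv k φ)) x = cv k (pd i (pd i φ)) x := by
    intro i
    rw [pd_cv hk hφ hc, pd_cv hk (contDiff_pd hφ i) (hc.pd' i)]
  simp only [this]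
  unfold cv
  simp only [Finset.mul_sum]
  rw [integral_finsetSum]
  intro i _
  exact ((hc.pd' i).pd' i).convolutionExists_right (ContinuousLinearMap.mul ℝ ℝ) hk
    (contDiff_pd (contDiff_pd hφ i) i).continuous x

lemma hasCompactSupport_cv {k φ : Euc n → ℝ} (hk : HasCompactSupport k)
    (hφ : HasCompactSupport φ) : HasCompactSupport (cv k φ) :=
  HasCompactSupport.convolution (ContinuousLinearMap.mul ℝ ℝ) hk hφ

end pdcalc

/-! ### A regularized fundamental solution -/

/-- A smooth function `G` on `ℝⁿ` which coincides with the fundamental solution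
`c ‖x‖^(2-n)` of the Laplacian outside the unit ball, and whose Laplacian is a
probability density supported in the unit ball. The constant `C` bounds `G` and its first derivatives
by the kernels `‖x‖^(2-n)` and `‖x‖^(1-n)`. -/
structure Ker (n : ℕ) where
  G : Euc n → ℝ
  c : ℝ
  C : ℝ
  smooth : ContDiff ℝ (⊤ : ℕ∞) G
  eq_out : ∀ x, 1 ≤ ‖x‖ → G x = c * ‖x‖ ^ (2 - (n : ℝ))
  lap_nonneg : ∀ x, 0 ≤ lap G x
  lap_out : ∀ x, 1 ≤ ‖x‖ → lap G x = 0
  lap_int : ∫ x, lap G x = 1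
  C_pos : 0 < C
  bound0 : ∀ x, x ≠ 0 → |G x| ≤ C * ‖x‖ ^ (2 - (n : ℝ))
  bound1 : ∀ x i, x ≠ 0 → |pd i G x| ≤ C * ‖x‖ ^ (1 - (n : ℝ))

/-- A smooth monotone step, `0` for `t ≤ 1/4` and `1` for `t ≥ 1/2`. -/
def step (t : ℝ) : ℝ := Real.smoothTransition (4 * t - 1)

lemma step_contDiff : ContDiff ℝ (⊤ : ℕ∞) step :=
  Real.smoothTransition.contDiff.comp (by fun_prop)

lemma step_zero {t : ℝ} (h : t ≤ 1 / 4) : step t = 0 :=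
  Real.smoothTransition.zero_of_nonpos (by linarith)

lemma step_one {t : ℝ} (h : 1 / 2 ≤ t) : step t = 1 :=
  Real.smoothTransition.one_of_one_le (by linarith)

lemma step_mono : Monotone step := fun a b h =>
  Real.smoothTransition.monotone (by linarith)

lemma step_nonneg (t : ℝ) : 0 ≤ step t := Real.smoothTransition.nonneg _
lemma step_le_one (t : ℝ) : step t ≤ 1 := Real.smoothTransition.le_one _

/-- The power `t^a`, cut off smoothly: it is `t^a` for `t ≥ 1/2` and vanishes for `t ≤ 1/4`. -/
def cutPow (a t : ℝ) : ℝ := t ^ a * step t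

lemma cutPow_contDiff (a : ℝ) : ContDiff ℝ (⊤ : ℕ∞) (cutPow a) := by
  rw [contDiff_iff_contDiffAt]
  intro t
  rcases lt_or_ge t (1 / 4) with h | h
  · have : cutPow a =ᶠ[𝓝 t] fun _ => 0 := by
      filter_upwards [gt_mem_nhds h] with s hs
      simp [cutPow, step_zero hs.le]
    exact contDiffAt_const.congr_of_eventuallyEq this
  · exact (Real.contDiffAt_rpow_const_of_ne (by linarith)).mul step_contDiff.contDiffAt

lemma cutPow_eq {a t : ℝ} (h : 1 / 2 ≤ t) : cutPow a t = t ^ a := by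
  simp [cutPow, step_one h]

lemma cutPow_deriv_low {a t : ℝ} (h : t < 1 / 4) : deriv (cutPow a) t = 0 := by
  have : cutPow a =ᶠ[𝓝 t] fun _ => 0 := by
    filter_upwards [gt_mem_nhds h] with s hs
    simp [cutPow, step_zero hs.le]
  rw [this.deriv_eq]; simp

lemma cutPow_deriv {a t : ℝ} (h : 0 < t) :
    deriv (cutPow a) t = a * t ^ (a - 1) * step t + t ^ a * deriv step t := by
  have h1 := (Real.hasDerivAt_rpow_const (p := a) (Or.inl h.ne')).fun_mul
    ((step_contDiff.differentiable (by simp)) t).hasDerivAt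
  exact h1.deriv

lemma deriv_contDiff {q : ℝ → ℝ} (hq : ContDiff ℝ (⊤ : ℕ∞) q) :
    ContDiff ℝ (⊤ : ℕ∞) (deriv q) := by
  exact (contDiff_infty_iff_deriv.1 hq).2

/-- The kernel is the radial function `η(‖x‖²)`, where `η'` is the cut-off power `t^(-n/2)`,
divided by the integral of its Laplacian; monotonicity of the cutoff makes the Laplacian
nonnegative. -/
lemma exists_ker (n : ℕ) (hn : 3 ≤ n) : Nonempty (Ker n) := by
  have hnR : (3 : ℝ) ≤ n := by exact_mod_cast hn
  set m : ℝ → ℝ := cutPow (-((n : ℝ) / 2)) with hm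
  have hms : ContDiff ℝ (⊤ : ℕ∞) m := cutPow_contDiff _
  set b : ℝ := 2 / ((n : ℝ) - 2) with hb
  set η : ℝ → ℝ := fun t => -b + ∫ τ in (1 : ℝ)..t, m τ with hη
  have hη' : ∀ t, HasDerivAt η (m t) t := fun t =>
    (intervalIntegral.integral_hasDerivAt_right (hms.continuous.intervalIntegrable _ _)
      (hms.continuous.stronglyMeasurableAtFilter _ _) hms.continuous.continuousAt).const_add _
  have hm' : ∀ t, HasDerivAt m (deriv m t) t := fun t =>
    ((hms.differentiable (by simp)) t).hasDerivAt
  have hηs : ContDiff ℝ (⊤ : ℕ∞) η := by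
    rw [contDiff_infty_iff_deriv]
    refine ⟨fun t => (hη' t).differentiableAt, ?_⟩
    rw [show deriv η = m from funext fun t => (hη' t).deriv]
    exact hms
  -- `η` is the exact power for `t ≥ 1/2`
  have hηe : ∀ t, 1 / 2 ≤ t → η t = -b * t ^ (1 - (n : ℝ) / 2) := by
    intro t ht
    have hI : ∫ τ in (1 : ℝ)..t, m τ = ∫ τ in (1 : ℝ)..t, τ ^ (-((n : ℝ) / 2)) := by
      refine intervalIntegral.integral_congr fun τ hτ => ?_
      have : 1 / 2 ≤ τ := by
        rcases Set.mem_uIcc.1 hτ with h | h <;> linarith [h.1]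
      exact cutPow_eq this
    have h0 : (0 : ℝ) ∉ Set.uIcc 1 t := by
      intro h
      rcases Set.mem_uIcc.1 h with h | h <;> linarith [h.1]
    rw [hη]
    simp only
    rw [hI, integral_rpow (Or.inr ⟨by linarith, h0⟩), Real.one_rpow,
      show -((n : ℝ) / 2) + 1 = 1 - (n : ℝ) / 2 by ring, hb]
    have h1 : (n : ℝ) - 2 ≠ 0 := by linarith
    rw [show 1 - (n : ℝ) / 2 = -(((n : ℝ) - 2) / 2) by ring]
    field_simp
    ring
  set G : Euc n → ℝ := fun x => η (‖x‖ ^ 2) with hG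
  have hGs : ContDiff ℝ (⊤ : ℕ∞) G := contDiff_radial hηs
  have hlap : ∀ x, lap G x = 4 * ‖x‖ ^ 2 * deriv m (‖x‖ ^ 2) + 2 * n * m (‖x‖ ^ 2) :=
    fun x => lap_radial hη' hm' x
  have hlow : ∀ x, ‖x‖ ^ 2 < 1 / 4 → lap G x = 0 := by
    intro x hx
    rw [hlap, hm, cutPow_deriv_low hx]
    simp [cutPow, step_zero hx.le]
  have hhigh : ∀ x, 0 < ‖x‖ ^ 2 →
      lap G x = 4 * (‖x‖ ^ 2) ^ (1 - (n : ℝ) / 2) * deriv step (‖x‖ ^ 2) := by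
    intro x hx
    rw [hlap, hm, cutPow_deriv hx]
    unfold cutPow
    set t := ‖x‖ ^ 2
    have e1 : t ^ (1 - (n : ℝ) / 2) = t * t ^ (-((n : ℝ) / 2)) := by
      rw [sub_eq_add_neg, Real.rpow_add hx, Real.rpow_one]
    have e2 : t ^ (-((n : ℝ) / 2)) = t * t ^ (-((n : ℝ) / 2) - 1) := by
      rw [Real.rpow_sub hx, Real.rpow_one]; field_simp
    rw [e1, e2]; ring
  have hst' : ∀ t, 0 ≤ deriv step t := fun t => step_mono.deriv_nonneg
  have hnn : ∀ x, 0 ≤ lap G x := by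
    intro x
    rcases lt_or_ge (‖x‖ ^ 2) (1 / 4) with h | h
    · rw [hlow x h]
    · rw [hhigh x (by linarith)]
      have := hst' (‖x‖ ^ 2)
      positivity
  have hout : ∀ x, 1 ≤ ‖x‖ → lap G x = 0 := by
    intro x hx
    have h1 : 1 ≤ ‖x‖ ^ 2 := by nlinarith
    rw [hhigh x (by linarith)]
    have : step =ᶠ[𝓝 (‖x‖ ^ 2)] fun _ => 1 := by
      filter_upwards [lt_mem_nhds (show (1 / 2 : ℝ) < ‖x‖ ^ 2 by linarith)] with s hs
      exact step_one hs.le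
    rw [this.deriv_eq]; simp
  have hcs : HasCompactSupport (lap G) :=
    HasCompactSupport.intro (isCompact_closedBall (0 : Euc n) 1) fun x hx =>
      hout x (by simp at hx; exact hx.le)
  have hpos : 0 < ∫ x, lap G x := by
    obtain ⟨t, ht, hts⟩ := exists_deriv_eq_slope step (a := 1 / 4) (b := 1 / 2) (by norm_num)
      step_contDiff.continuous.continuousOn
      (step_contDiff.differentiable (by simp)).differentiableOn
    rw [step_zero le_rfl, step_one le_rfl] at hts
    have ht0 : 0 < t := by linarith [ht.1]
    let x : Euc n := EuclideanSpace.single ⟨0, by omega⟩ (Real.sqrt t)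
    have hx : ‖x‖ ^ 2 = t := by
      simp [x, Real.sq_sqrt ht0.le]
    refine (contDiff_lap hGs).continuous.integral_pos_of_hasCompactSupport_nonneg_nonzero
      hcs hnn (x := x) ?_
    rw [hhigh x (by rw [hx]; exact ht0), hx, hts]
    have : 0 < t ^ (1 - (n : ℝ) / 2) := Real.rpow_pos_of_pos ht0 _
    have h3 : (0 : ℝ) < (1 - 0) / (1 / 2 - 1 / 4) := by norm_num
    positivity
  set I := ∫ x, lap G x with hI
  have hGout : ∀ x : Euc n, 1 ≤ ‖x‖ → G x = -b * ‖x‖ ^ (2 - (n : ℝ)) := by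
    intro x hx
    have h1 : 1 ≤ ‖x‖ ^ 2 := by nlinarith
    rw [hG]
    simp only
    rw [hηe _ (by linarith), ← Real.rpow_natCast, ← Real.rpow_mul (norm_nonneg x)]
    congr 2; push_cast; ring
  obtain ⟨B, hB⟩ := (isCompact_closedBall (0 : Euc n) 1).exists_bound_of_continuousOn
    hGs.continuous.continuousOn
  have hb0 : 0 < b := by rw [hb]; apply div_pos <;> linarith
  refine ⟨⟨fun x => I⁻¹ * G x, I⁻¹ * -b, I⁻¹ * (|B| + b + 2), contDiff_const.mul hGs,
    ?_, ?_, ?_, ?_, ?_, ?_, ?_⟩⟩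
  · intro x hx; simp only [hGout x hx]; ring
  · intro x; rw [lap_const_mul _ hGs]; have := hnn x; positivity
  · intro x hx; rw [lap_const_mul _ hGs]; simp [hout x hx]
  · rw [lap_const_mul _ hGs, integral_const_mul]; exact inv_mul_cancel₀ hpos.ne'
  · positivity
  · intro x hx
    have hx0 : 0 < ‖x‖ := norm_pos_iff.2 hx
    rw [abs_mul, abs_of_pos (inv_pos.2 hpos), mul_assoc]
    refine mul_le_mul_of_nonneg_left ?_ (inv_pos.2 hpos).le
    have hr : 0 < ‖x‖ ^ (2 - (n : ℝ)) := Real.rpow_pos_of_pos hx0 _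
    rcases le_or_gt 1 ‖x‖ with h | h
    · rw [hGout x h, abs_mul, abs_neg, abs_of_pos hb0, abs_of_pos hr]
      gcongr
      linarith [abs_nonneg B]
    · have h1 : |G x| ≤ B := hB x (by simpa using h.le)
      have h2 : 1 ≤ ‖x‖ ^ (2 - (n : ℝ)) :=
        Real.one_le_rpow_of_pos_of_le_one_of_nonpos hx0 h.le (by linarith)
      nlinarith [le_abs_self B, abs_nonneg B]
  · intro x i hx
    have hx0 : 0 < ‖x‖ := norm_pos_iff.2 hx
    rw [pd_const_mul _ hGs.diff', abs_mul, abs_of_pos (inv_pos.2 hpos), mul_assoc]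
    refine mul_le_mul_of_nonneg_left ?_ (inv_pos.2 hpos).le
    rw [pd_radial hη']
    have hr : 0 < ‖x‖ ^ (1 - (n : ℝ)) := Real.rpow_pos_of_pos hx0 _
    have h1 : |x i| ≤ ‖x‖ := by simpa using PiLp.norm_apply_le x i
    have h2 : |m (‖x‖ ^ 2)| ≤ ‖x‖ ^ (-(n : ℝ)) := by
      rw [hm]; unfold cutPow
      rw [← Real.rpow_natCast ‖x‖ 2, ← Real.rpow_mul hx0.le, abs_mul,
        abs_of_nonneg (step_nonneg _), abs_of_pos (Real.rpow_pos_of_pos hx0 _),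
        show ((2 : ℕ) : ℝ) * -((n : ℝ) / 2) = -(n : ℝ) by push_cast; ring]
      exact mul_le_of_le_one_right (Real.rpow_pos_of_pos hx0 _).le (step_le_one _)
    have h3 : ‖x‖ ^ (1 - (n : ℝ)) = ‖x‖ * ‖x‖ ^ (-(n : ℝ)) := by
      rw [sub_eq_add_neg, Real.rpow_add hx0, Real.rpow_one]
    simp only
    rw [abs_mul, abs_mul]
    calc |(2 : ℝ)| * (|x i| * |m (‖x‖ ^ 2)|) ≤ 2 * (‖x‖ * ‖x‖ ^ (-(n : ℝ))) := by
          rw [abs_of_pos (by norm_num : (0 : ℝ) < 2)]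
          gcongr
      _ ≤ (|B| + b + 2) * ‖x‖ ^ (1 - (n : ℝ)) := by
          rw [← h3]; gcongr; linarith [abs_nonneg B]

/-! ### The fundamental solution, cutoffs and the representation formula -/

section potential
variable {n : ℕ}

lemma finrank_euc : Module.finrank ℝ (Euc n) = n := by simp

lemma nontrivial_euc (hn : 3 ≤ n) : Nontrivial (Euc n) := by
  have : Nontrivial (Fin n) := Fin.nontrivial_iff_two_le.2 (by omega)
  have : Nonempty (Fin n) := ⟨⟨0, by omega⟩⟩
  infer_instance

lemma measurable_norm_rpow (b : ℝ) : Measurable (fun x : Euc n => ‖x‖ ^ b) := by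
  fun_prop

lemma locInt_norm_rpow (hn : 3 ≤ n) {β : ℝ} (hβ : 0 < β) :
    LocallyIntegrable (fun x : Euc n => ‖x‖ ^ (β - n)) := by
  have := nontrivial_euc hn
  rw [locallyIntegrable_iff]
  intro k hk
  obtain ⟨r, hr⟩ := hk.isBounded.subset_ball (0 : Euc n)
  refine IntegrableOn.mono_set ?_ hr
  rw [integrableOn_fun_norm_addHaar (volume : Measure (Euc n)) (f := fun t => t ^ (β - n)),
    finrank_euc]
  have h1 : IntegrableOn (fun y : ℝ => y ^ (β - 1)) (Set.Ioo 0 r) := by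
    by_cases h : 0 ≤ r
    · have := (intervalIntegral.intervalIntegrable_rpow' (a := 0) (b := r)
        (by linarith : -1 < β - 1))
      rw [intervalIntegrable_iff_integrableOn_Ioo_of_le h] at this
      exact this
    · rw [Set.Ioo_eq_empty (by linarith)]; exact integrableOn_empty
  refine h1.congr_fun (fun y hy => ?_) measurableSet_Ioo
  have hy0 : 0 < y := hy.1
  simp only [smul_eq_mul]
  rw [← Real.rpow_natCast, ← Real.rpow_add hy0]
  congr 1
  rw [Nat.cast_sub (by omega)]
  push_cast; ring

lemma pd_reflect {φ : Euc n → ℝ} (hφ : Differentiable ℝ φ) (x : Euc n) (i : Fin n) :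
    pd i (fun y => φ (x - y)) = fun y => - pd i φ (x - y) := by
  funext y
  unfold pd
  have h : HasFDerivAt (fun y => φ (x - y)) ((fderiv ℝ φ (x - y)).comp
      (-(ContinuousLinearMap.id ℝ (Euc n)))) y :=
    (hφ (x - y)).hasFDerivAt.comp y ((hasFDerivAt_id y).const_sub x)
  rw [h.fderiv]
  simp

lemma contDiff_reflect {φ : Euc n → ℝ} (hφ : ContDiff ℝ (⊤ : ℕ∞) φ) (x : Euc n) :
    ContDiff ℝ (⊤ : ℕ∞) (fun y => φ (x - y)) := hφ.comp (contDiff_const.sub contDiff_id)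

lemma lap_reflect {φ : Euc n → ℝ} (hφ : ContDiff ℝ (⊤ : ℕ∞) φ) (x y : Euc n) :
    lap (fun y => φ (x - y)) y = lap φ (x - y) := by
  unfold lap
  refine Finset.sum_congr rfl fun i _ => ?_
  rw [pd_reflect hφ.diff']
  have : (fun y => -pd i φ (x - y)) = fun y => (-1) * pd i φ (x - y) := by funext y; ring
  rw [this, pd_const_mul _ (contDiff_reflect (contDiff_pd hφ i) x).diff',
    pd_reflect (contDiff_pd hφ i).diff']
  simp

lemma hcs_reflect {φ : Euc n → ℝ} (hφ : HasCompactSupport φ) (x : Euc n) :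
    HasCompactSupport (fun y => φ (x - y)) :=
  hφ.comp_homeomorph (Homeomorph.subLeft x)

lemma cv_pd_parts {k φ : Euc n → ℝ} (hk : ContDiff ℝ (⊤ : ℕ∞) k) (hφ : ContDiff ℝ (⊤ : ℕ∞) φ)
    (hc : HasCompactSupport φ) (i : Fin n) (x : Euc n) :
    cv k (pd i φ) x = cv (pd i k) φ x := by
  have h := integral_mul_pd hk (contDiff_reflect hφ x) (hcs_reflect hc x) i
  rw [pd_reflect hφ.diff'] at h
  simp only [mul_neg, integral_neg, neg_inj] at h
  exact h

lemma cv_lap_parts {k φ : Euc n → ℝ} (hk : ContDiff ℝ (⊤ : ℕ∞) k) (hφ : ContDiff ℝ (⊤ : ℕ∞) φ)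
    (hc : HasCompactSupport φ) (x : Euc n) :
    cv k (lap φ) x = cv (lap k) φ x := by
  have h := integral_mul_lap hk (contDiff_reflect hφ x) (hcs_reflect hc x)
  simp only [lap_reflect hφ] at h
  exact h

/-- The smooth radial cutoff: `1` on `‖x‖ ≤ R`, `0` on `‖x‖ ≥ 2R`. -/
def cut (R : ℝ) (x : Euc n) : ℝ := 1 - step (‖x‖ ^ 2 * (4 * R ^ 2)⁻¹)

lemma cut_contDiff (R : ℝ) : ContDiff ℝ (⊤ : ℕ∞) (cut R : Euc n → ℝ) :=
  contDiff_const.sub (step_contDiff.comp ((contDiff_norm_sq ℝ).mul contDiff_const))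

lemma cut_one {R : ℝ} (hR : 0 < R) {x : Euc n} (hx : ‖x‖ ≤ R) : cut R x = 1 := by
  unfold cut
  rw [step_zero, sub_zero]
  rw [← div_eq_mul_inv, div_le_iff₀ (by positivity)]
  nlinarith [norm_nonneg x]

lemma cut_zero {R : ℝ} (hR : 0 < R) {x : Euc n} (hx : 2 * R ≤ ‖x‖) : cut R x = 0 := by
  unfold cut
  rw [step_one, sub_self]
  rw [← div_eq_mul_inv, le_div_iff₀ (by positivity)]
  nlinarith [norm_nonneg x]

lemma cut_nonneg (R : ℝ) (x : Euc n) : 0 ≤ cut R x := sub_nonneg.2 (step_le_one _)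
lemma cut_le_one (R : ℝ) (x : Euc n) : cut R x ≤ 1 := by
  unfold cut; linarith [step_nonneg (‖x‖ ^ 2 * (4 * R ^ 2)⁻¹)]

lemma cut_hcs {R : ℝ} (hR : 0 < R) : HasCompactSupport (cut R : Euc n → ℝ) := by
  refine HasCompactSupport.intro (isCompact_closedBall (0 : Euc n) (2 * R)) fun x hx => ?_
  refine cut_zero hR ?_
  simp at hx
  exact hx.le

lemma cut_smul {R : ℝ} (x : Euc n) : cut R x = cut 1 (R⁻¹ • x) := by
  unfold cut
  rw [norm_smul, mul_pow]
  congr 2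
  simp only [norm_inv, Real.norm_eq_abs, inv_pow, sq_abs, mul_inv]
  ring

namespace Ker
variable (κ : Ker n)

/-- The fundamental solution `c ‖x‖^(2-n)` of the Laplacian. -/
def Gam (x : Euc n) : ℝ := κ.c * ‖x‖ ^ (2 - (n : ℝ))
/-- The fundamental solution smoothed at scale `s`. -/
def Gs (s : ℝ) (x : Euc n) : ℝ := s ^ (2 - (n : ℝ)) * κ.G (s⁻¹ • x)
/-- The mollifier `Δ(Gs s)` at scale `s`. -/
def rho (s : ℝ) (x : Euc n) : ℝ := s ^ (-(n : ℝ)) * lap κ.G (s⁻¹ • x)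
/-- The compactly supported parametrix `Γ - Gs s`. -/
def Es (s : ℝ) (x : Euc n) : ℝ := κ.Gam x - κ.Gs s x

lemma Gs_smooth (s : ℝ) : ContDiff ℝ (⊤ : ℕ∞) (κ.Gs s) :=
  contDiff_const.mul (κ.smooth.comp (contDiff_const_smul _))

lemma rho_smooth (s : ℝ) : ContDiff ℝ (⊤ : ℕ∞) (κ.rho s) :=
  contDiff_const.mul ((contDiff_lap κ.smooth).comp (contDiff_const_smul _))

lemma lap_Gs {s : ℝ} (hs : 0 < s) : lap (κ.Gs s) = κ.rho s := by
  funext x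
  unfold Gs rho
  rw [lap_const_mul (f := fun x => κ.G (s⁻¹ • x)) _ (κ.smooth.comp (contDiff_const_smul _)), lap_smul_arg _ κ.smooth]
  simp only
  rw [← mul_assoc]
  congr 1
  rw [← Real.rpow_natCast, Real.inv_rpow hs.le, ← Real.rpow_neg hs.le, ← Real.rpow_add hs]
  congr 1; push_cast; ring

lemma norm_inv_smul {s : ℝ} (hs : 0 < s) (x : Euc n) : ‖s⁻¹ • x‖ = ‖x‖ / s := by
  rw [norm_smul, norm_inv, Real.norm_of_nonneg hs.le]; field_simp

lemma Gs_eq {s : ℝ} (hs : 0 < s) {x : Euc n} (h : s ≤ ‖x‖) : κ.Gs s x = κ.Gam x := by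
  unfold Gs Gam
  rw [κ.eq_out _ (by rw [norm_inv_smul hs, le_div_iff₀ hs]; linarith), norm_inv_smul hs,
    Real.div_rpow (norm_nonneg _) hs.le]
  have := (Real.rpow_pos_of_pos hs (2 - (n : ℝ))).ne'
  field_simp

lemma Gs_bound {s : ℝ} (hs : 0 < s) {x : Euc n} (h : x ≠ 0) :
    |κ.Gs s x| ≤ κ.C * ‖x‖ ^ (2 - (n : ℝ)) := by
  unfold Gs
  have h0 := Real.rpow_pos_of_pos hs (2 - (n : ℝ))
  rw [abs_mul, abs_of_pos h0]
  have := κ.bound0 (s⁻¹ • x) (smul_ne_zero (inv_ne_zero hs.ne') h)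
  rw [norm_inv_smul hs, Real.div_rpow (norm_nonneg _) hs.le] at this
  calc _ ≤ _ := mul_le_mul_of_nonneg_left this h0.le
    _ = _ := by field_simp

lemma Gam_bound {x : Euc n} (h : x ≠ 0) :
    |κ.Gam x| ≤ κ.C * ‖x‖ ^ (2 - (n : ℝ)) := by
  rw [← κ.Gs_eq (norm_pos_iff.2 h) le_rfl]
  exact κ.Gs_bound (norm_pos_iff.2 h) h

lemma pd_Gs_bound {s : ℝ} (hs : 0 < s) {x : Euc n} (h : x ≠ 0) (i : Fin n) :
    |pd i (κ.Gs s) x| ≤ κ.C * ‖x‖ ^ (1 - (n : ℝ)) := by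
  unfold Gs
  rw [pd_const_mul (f := fun x => κ.G (s⁻¹ • x)) _
    (κ.smooth.comp (contDiff_const_smul _)).diff', pd_smul_arg _ κ.smooth.diff']
  simp only
  have h0 := Real.rpow_pos_of_pos hs (1 - (n : ℝ))
  have e : s ^ (2 - (n : ℝ)) * s⁻¹ = s ^ (1 - (n : ℝ)) := by
    rw [← Real.rpow_neg_one, ← Real.rpow_add hs]; congr 1; ring
  rw [← mul_assoc, e, abs_mul, abs_of_pos h0]
  have := κ.bound1 (s⁻¹ • x) i (smul_ne_zero (inv_ne_zero hs.ne') h)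
  rw [norm_inv_smul hs, Real.div_rpow (norm_nonneg _) hs.le] at this
  calc _ ≤ _ := mul_le_mul_of_nonneg_left this h0.le
    _ = _ := by field_simp

lemma rho_nonneg {s : ℝ} (hs : 0 < s) (x : Euc n) : 0 ≤ κ.rho s x :=
  mul_nonneg (Real.rpow_nonneg hs.le _) (κ.lap_nonneg _)

lemma rho_out {s : ℝ} (hs : 0 < s) {x : Euc n} (h : s ≤ ‖x‖) : κ.rho s x = 0 := by
  unfold rho
  rw [κ.lap_out _ (by rw [norm_inv_smul hs, le_div_iff₀ hs]; linarith), mul_zero]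

lemma rho_int {s : ℝ} (hs : 0 < s) : ∫ x, κ.rho s x = 1 := by
  unfold rho
  rw [integral_const_mul, Measure.integral_comp_inv_smul volume (lap κ.G), κ.lap_int, finrank_euc,
    abs_of_pos (by positivity), smul_eq_mul, mul_one, ← Real.rpow_natCast, ← Real.rpow_add hs]
  simp

lemma rho_hcs {s : ℝ} (hs : 0 < s) : HasCompactSupport (κ.rho s) := by
  refine HasCompactSupport.intro (isCompact_closedBall (0 : Euc n) s) fun x hx => ?_
  refine κ.rho_out hs ?_
  simp at hx
  exact hx.le

lemma rho_integrable {s : ℝ} (hs : 0 < s) : Integrable (κ.rho s) :=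
  (κ.rho_smooth s).continuous.integrable_of_hasCompactSupport (κ.rho_hcs hs)

lemma rho_bound : ∃ B, 0 < B ∧ ∀ s, 0 < s → ∀ x, κ.rho s x ≤ B * s ^ (-(n : ℝ)) := by
  have h1 : κ.rho 1 = lap κ.G := by funext x; simp [rho]
  have hc := κ.rho_hcs one_pos
  rw [h1] at hc
  obtain ⟨B, hB⟩ := (contDiff_lap κ.smooth).continuous.bounded_above_of_compact_support hc
  refine ⟨max B 1, by positivity, fun s hs x => ?_⟩
  unfold rho
  rw [mul_comm]
  refine mul_le_mul_of_nonneg_right ?_ (Real.rpow_nonneg hs.le _)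
  exact (le_abs_self _).trans ((hB _).trans (le_max_left _ _))

lemma Gam_meas : Measurable κ.Gam := (measurable_norm_rpow _).const_mul _

lemma ae_ne : ∀ᵐ x : Euc n, x ≠ 0 ∨ n = 0 := by
  rcases Nat.eq_zero_or_pos n with h | h
  · exact Eventually.of_forall fun _ => Or.inr h
  · have : Nonempty (Fin n) := ⟨⟨0, h⟩⟩
    have : Nontrivial (Euc n) := inferInstance
    filter_upwards [compl_mem_ae_iff.2 (measure_singleton (μ := volume) (0 : Euc n))] with x hx
    exact Or.inl hx

lemma ae_ne0 (hn : 3 ≤ n) : ∀ᵐ x : Euc n, x ≠ 0 := by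
  filter_upwards [ae_ne (n := n)] with x hx
  exact hx.resolve_right (by omega)

lemma ae_sub_ne (hn : 3 ≤ n) (x : Euc n) : ∀ᵐ y : Euc n, x - y ≠ 0 := by
  have := nontrivial_euc hn
  filter_upwards [compl_mem_ae_iff.2 (measure_singleton (μ := volume) (x : Euc n))] with y hy
  exact sub_ne_zero.2 (fun h => hy h.symm)

lemma Gam_locInt (hn : 3 ≤ n) : LocallyIntegrable κ.Gam := by
  refine LocallyIntegrable.mono (((locInt_norm_rpow hn (two_pos)).smul κ.C))
    κ.Gam_meas.aestronglyMeasurable ?_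
  filter_upwards [ae_ne0 hn] with x hx
  simp only [Pi.smul_apply, smul_eq_mul, Real.norm_eq_abs]
  exact (κ.Gam_bound hx).trans (le_abs_self _)

lemma Gs_locInt (s : ℝ) : LocallyIntegrable (κ.Gs s) :=
  (κ.Gs_smooth s).continuous.locallyIntegrable

lemma Es_locInt (hn : 3 ≤ n) (s : ℝ) : LocallyIntegrable (κ.Es s) :=
  (κ.Gam_locInt hn).sub (κ.Gs_locInt s)

lemma Es_out {s : ℝ} (hs : 0 < s) {x : Euc n} (h : s ≤ ‖x‖) : κ.Es s x = 0 := by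
  rw [Es, κ.Gs_eq hs h, sub_self]

lemma Es_hcs {s : ℝ} (hs : 0 < s) : HasCompactSupport (κ.Es s) := by
  refine HasCompactSupport.intro (isCompact_closedBall (0 : Euc n) s) fun x hx => ?_
  refine κ.Es_out hs ?_
  simp at hx
  exact hx.le

lemma cvEx {k φ : Euc n → ℝ} (hk : LocallyIntegrable k) (hφ : Continuous φ)
    (hc : HasCompactSupport φ) (x : Euc n) : Integrable (fun y => k y * φ (x - y)) :=
  hc.convolutionExists_right (ContinuousLinearMap.mul ℝ ℝ) hk hφ x

lemma cv_Gs_lap {s : ℝ} (hs : 0 < s) {φ : Euc n → ℝ} (hφ : ContDiff ℝ (⊤ : ℕ∞) φ)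
    (hc : HasCompactSupport φ) (x : Euc n) : cv (κ.Gs s) (lap φ) x = cv (κ.rho s) φ x := by
  rw [cv_lap_parts (κ.Gs_smooth s) hφ hc, κ.lap_Gs hs]

lemma tendsto_cv_Gs (hn : 3 ≤ n) {φ : Euc n → ℝ} (hφ : Continuous φ)
    (hc : HasCompactSupport φ) (x : Euc n) :
    Tendsto (fun s => cv (κ.Gs s) φ x) (𝓝[>] 0) (𝓝 (cv κ.Gam φ x)) := by
  unfold cv
  refine tendsto_integral_filter_of_dominated_convergence
    (fun y => ‖(κ.C * ‖y‖ ^ (2 - (n : ℝ))) * φ (x - y)‖) ?_ ?_ ?_ ?_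
  · refine Eventually.of_forall fun s => ?_
    exact (cvEx (κ.Gs_locInt s) hφ hc x).aestronglyMeasurable
  · filter_upwards [self_mem_nhdsWithin] with s hs
    filter_upwards [ae_ne0 hn] with y hy
    rw [norm_mul, norm_mul]
    exact mul_le_mul_of_nonneg_right ((κ.Gs_bound hs hy).trans (le_abs_self _)) (norm_nonneg _)
  · exact (cvEx ((locInt_norm_rpow hn (two_pos)).smul κ.C) hφ hc x).norm
  · filter_upwards [ae_ne0 hn] with y hy
    refine Tendsto.congr' ?_ tendsto_const_nhds
    filter_upwards [Ioc_mem_nhdsGT (norm_pos_iff.2 hy)] with s hs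
    rw [κ.Gs_eq hs.1 hs.2]

lemma tendsto_cv_rho {φ : Euc n → ℝ} (hφ : Continuous φ) (x : Euc n) :
    Tendsto (fun s => cv (κ.rho s) φ x) (𝓝[>] 0) (𝓝 (φ x)) := by
  refine convolution_tendsto_right (φ := fun s => κ.rho s) (g := fun _ => φ) (k := fun _ => x)
    (x₀ := x) (μ := volume) ?_ ?_ ?_ ?_ ?_ tendsto_const_nhds
  · filter_upwards [self_mem_nhdsWithin] with s hs
    exact κ.rho_nonneg hs
  · filter_upwards [self_mem_nhdsWithin] with s hs
    exact κ.rho_int hs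
  · rw [tendsto_smallSets_iff]
    intro t ht
    obtain ⟨ε, hε, hb⟩ := Metric.mem_nhds_iff.1 ht
    filter_upwards [Ioc_mem_nhdsGT hε] with s hs
    refine Set.Subset.trans (fun y hy => ?_) hb
    rw [mem_ball_zero_iff]
    by_contra h
    exact hy (κ.rho_out hs.1 (hs.2.trans (not_lt.1 h)))
  · exact Eventually.of_forall fun _ => hφ.aestronglyMeasurable
  · exact (hφ.tendsto x).comp tendsto_snd

/-- `Γ` is a fundamental solution: `Γ ⋆ Δφ = φ`. -/
lemma cv_Gam_lap (hn : 3 ≤ n) {φ : Euc n → ℝ} (hφ : ContDiff ℝ (⊤ : ℕ∞) φ)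
    (hc : HasCompactSupport φ) (x : Euc n) : cv κ.Gam (lap φ) x = φ x := by
  refine tendsto_nhds_unique (κ.tendsto_cv_Gs hn (contDiff_lap hφ).continuous hc.lap' x) ?_
  refine Tendsto.congr' ?_ (κ.tendsto_cv_rho hφ.continuous x)
  filter_upwards [self_mem_nhdsWithin] with s hs
  rw [κ.cv_Gs_lap hs hφ hc]

lemma cv_Es_lap_hcs (hn : 3 ≤ n) {s : ℝ} (hs : 0 < s) {φ : Euc n → ℝ}
    (hφ : ContDiff ℝ (⊤ : ℕ∞) φ) (hc : HasCompactSupport φ) (x : Euc n) :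
    cv (κ.Es s) (lap φ) x = φ x - cv (κ.rho s) φ x := by
  rw [← κ.cv_Gam_lap hn hφ hc, ← κ.cv_Gs_lap hs hφ hc]
  unfold cv
  rw [← integral_sub (cvEx (κ.Gam_locInt hn) (contDiff_lap hφ).continuous hc.lap' x)
    (cvEx (κ.Gs_locInt s) (contDiff_lap hφ).continuous hc.lap' x)]
  simp only [Es, sub_mul]

/-- Convolution with a kernel supported in the `s`-ball only sees the function near `x`. -/
lemma cv_congr_ball {k φ ψ : Euc n → ℝ} {s : ℝ} (hk : ∀ y, s ≤ ‖y‖ → k y = 0) (x : Euc n)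
    (h : ∀ y, ‖y - x‖ < s → φ y = ψ y) : cv k φ x = cv k ψ x := by
  unfold cv
  congr 1
  funext y
  by_cases hy : s ≤ ‖y‖
  · rw [hk y hy]; simp
  · rw [h (x - y) (by simpa using not_le.1 hy)]

/-- Representation formula: `u = Es ⋆ Δu + ρ ⋆ u` for any smooth `u`. -/
lemma repr (hn : 3 ≤ n) {s : ℝ} (hs : 0 < s) {u : Euc n → ℝ}
    (hu : ContDiff ℝ (⊤ : ℕ∞) u) (x : Euc n) :
    u x = cv (κ.Es s) (lap u) x + cv (κ.rho s) u x := by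
  set R := ‖x‖ + s + 1 with hR
  have hR0 : 0 < R := by positivity
  have hφ : ContDiff ℝ (⊤ : ℕ∞) (fun y => cut R y * u y) := (cut_contDiff R).mul hu
  have hc : HasCompactSupport (fun y => cut R y * u y) := (cut_hcs hR0).mul_right
  have h := κ.cv_Es_lap_hcs hn hs hφ hc x
  have e : ∀ y, ‖y - x‖ < s → y ∈ Metric.ball (0 : Euc n) R := by
    intro y hy
    rw [mem_ball_zero_iff]
    calc ‖y‖ = ‖(y - x) + x‖ := by simp
      _ ≤ ‖y - x‖ + ‖x‖ := norm_add_le _ _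
      _ < R := by rw [hR]; linarith
  have e2 : ∀ y ∈ Metric.ball (0 : Euc n) R, cut R y * u y = u y := by
    intro y hy
    rw [cut_one hR0 (mem_ball_zero_iff.1 hy).le, one_mul]
  rw [cv_congr_ball (fun y hy => κ.Es_out hs hy) x (ψ := lap u), cv_congr_ball (ψ := u)
    (fun y hy => κ.rho_out hs hy) x, e2 x (e x (by simpa using hs))] at h
  · linarith
  · intro y hy
    exact e2 y (e y hy)
  · intro y hy
    refine lap_congr ?_
    filter_upwards [Metric.isOpen_ball.mem_nhds (e y hy)] with z hz
    exact e2 z hz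

end Ker
end potential

/-! ### Limits of solutions, Liouville's theorem, Newton potentials -/

section limits
variable {n : ℕ}

lemma tendsto_cv_bdd {v : ℕ → Euc n → ℝ} {w ψ : Euc n → ℝ} {M : ℝ}
    (hv : ∀ k, Continuous (v k)) (hM : ∀ k x, |v k x| ≤ M)
    (hl : ∀ x, Tendsto (fun k => v k x) atTop (𝓝 (w x)))
    (hψ : Continuous ψ) (hc : HasCompactSupport ψ) (x : Euc n) :
    Tendsto (fun k => cv (v k) ψ x) atTop (𝓝 (cv w ψ x)) := by
  unfold cv
  have hi : Integrable (fun y => ψ (x - y)) :=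
    (hψ.comp (by fun_prop : Continuous fun y => x - y)).integrable_of_hasCompactSupport
      (hcs_reflect hc x)
  refine tendsto_integral_filter_of_dominated_convergence (fun y => M * ‖ψ (x - y)‖) ?_ ?_ ?_ ?_
  · exact Eventually.of_forall fun k => (hv k).aestronglyMeasurable.mul hi.aestronglyMeasurable
  · refine Eventually.of_forall fun k => Eventually.of_forall fun y => ?_
    rw [norm_mul]
    exact mul_le_mul_of_nonneg_right (hM k y) (norm_nonneg _)
  · exact hi.norm.const_mul M
  · exact Eventually.of_forall fun y => (hl y).mul_const _

lemma locInt_of_bdd {w : Euc n → ℝ} {M : ℝ} (hw : AEStronglyMeasurable w volume)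
    (hM : ∀ x, |w x| ≤ M) : LocallyIntegrable w := by
  refine LocallyIntegrable.mono (f := fun _ => M) (locallyIntegrable_const M) hw ?_
  exact Eventually.of_forall fun x => (hM x).trans (le_abs_self _)

/-- Bounded pointwise limits of smooth solutions of `Δ v_k = g_k`, with `g_k = g` eventually on
compact sets, solve `Δ w = g`, and derivatives up to order two converge pointwise: near each point,
`v_k = A + v_k ⋆ ρ_1` with a fixed smooth `A` by `Ker.repr`, and derivatives fall on `ρ_1`. -/
lemma Ker.limit_solution (κ : Ker n) (hn : 3 ≤ n) {v : ℕ → Euc n → ℝ} {w g : Euc n → ℝ} {M : ℝ}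
    (hv : ∀ k, ContDiff ℝ (⊤ : ℕ∞) (v k)) (hM : ∀ k x, |v k x| ≤ M)
    (hl : ∀ x, Tendsto (fun k => v k x) atTop (𝓝 (w x)))
    (hg : ContDiff ℝ (⊤ : ℕ∞) g)
    (hlap : ∀ R, ∀ᶠ k in atTop, ∀ x, ‖x‖ < R → lap (v k) x = g x) :
    ContDiff ℝ (⊤ : ℕ∞) w ∧ (∀ x, lap w x = g x) ∧
      (∀ i x, Tendsto (fun k => pd i (v k) x) atTop (𝓝 (pd i w x))) ∧
      (∀ i j x, Tendsto (fun k => pd i (pd j (v k)) x) atTop (𝓝 (pd i (pd j w) x))) := by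
  have hwM : ∀ x, |w x| ≤ M := fun x =>
    le_of_tendsto (hl x).abs (Eventually.of_forall fun k => hM k x)
  have hwm : AEStronglyMeasurable w volume :=
    aestronglyMeasurable_of_tendsto_ae atTop (fun k => (hv k).continuous.aestronglyMeasurable)
      (Eventually.of_forall hl)
  have hwl := locInt_of_bdd hwm hwM
  have hρ := κ.rho_smooth 1
  have hρc := κ.rho_hcs one_pos
  have key : ∀ x0 : Euc n, ∃ A : Euc n → ℝ, ContDiff ℝ (⊤ : ℕ∞) A ∧
      (∀ᶠ k in atTop, ∀ x, ‖x - x0‖ < 1 → v k x = A x + cv (v k) (κ.rho 1) x) ∧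
      (∀ x, ‖x - x0‖ < 1 → w x = A x + cv w (κ.rho 1) x) := by
    intro x0
    set R := ‖x0‖ + 2 with hR
    have hR0 : 0 < R := by positivity
    refine ⟨cv (κ.Es 1) (fun y => cut R y * g y), contDiff_cv (κ.Es_locInt hn 1)
      ((cut_contDiff R).mul hg) ((cut_hcs hR0).mul_right), ?_⟩
    have h1 : ∀ᶠ k in atTop, ∀ x, ‖x - x0‖ < 1 →
        v k x = cv (κ.Es 1) (fun y => cut R y * g y) x + cv (v k) (κ.rho 1) x := by
      filter_upwards [hlap R] with k hk x hx
      rw [κ.repr hn one_pos (hv k) x, cv_comm (v k)]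
      congr 1
      refine Ker.cv_congr_ball (fun y hy => κ.Es_out one_pos hy) x fun y hy => ?_
      have hy' : ‖y‖ < R := by
        calc ‖y‖ = ‖(y - x) + (x - x0) + x0‖ := by simp
          _ ≤ ‖y - x‖ + ‖x - x0‖ + ‖x0‖ := norm_add₃_le
          _ < R := by rw [hR]; linarith
      rw [hk y hy', cut_one hR0 hy'.le, one_mul]
    refine ⟨h1, fun x hx => ?_⟩
    refine tendsto_nhds_unique (hl x) ?_
    have h2 := (tendsto_cv_bdd (fun k => (hv k).continuous) hM hl hρ.continuous hρc x).const_add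
      (cv (κ.Es 1) (fun y => cut R y * g y) x)
    refine h2.congr' ?_
    filter_upwards [h1] with k hk
    rw [hk x hx]
  have hnb : ∀ x0 : Euc n, ∀ᶠ x in 𝓝 x0, ‖x - x0‖ < 1 := by
    intro x0
    filter_upwards [Metric.ball_mem_nhds x0 one_pos] with x hx
    rwa [mem_ball_iff_norm] at hx
  have hsm : ContDiff ℝ (⊤ : ℕ∞) w := by
    rw [contDiff_iff_contDiffAt]
    intro x0
    obtain ⟨A, hA, _, h2⟩ := key x0
    refine ContDiffAt.congr_of_eventuallyEq
      ((hA.add (contDiff_cv hwl hρ hρc)).contDiffAt (x := x0)) ?_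
    filter_upwards [hnb x0] with x hx
    exact h2 x hx
  have hvl : ∀ k, LocallyIntegrable (v k) := fun k => (hv k).continuous.locallyIntegrable
  have hpd : ∀ i x, Tendsto (fun k => pd i (v k) x) atTop (𝓝 (pd i w x)) := by
    intro i x0
    obtain ⟨A, hA, h1, h2⟩ := key x0
    have e : ∀ u : Euc n → ℝ, LocallyIntegrable u →
        (∀ x, ‖x - x0‖ < 1 → u x = A x + cv u (κ.rho 1) x) →
        pd i u x0 = pd i A x0 + cv u (pd i (κ.rho 1)) x0 := by
      intro u hu h
      rw [pd_congr ((hnb x0).mono h) i, pd_add hA.diff' (contDiff_cv hu hρ hρc).diff',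
        pd_cv hu hρ hρc]
    rw [e w hwl h2]
    refine Tendsto.congr' ?_ ((tendsto_cv_bdd (fun k => (hv k).continuous) hM hl
      (contDiff_pd hρ i).continuous (hρc.pd' i) x0).const_add (pd i A x0))
    filter_upwards [h1] with k hk
    rw [e _ (hvl k) hk]
  have hpd2 : ∀ i j x, Tendsto (fun k => pd i (pd j (v k)) x) atTop (𝓝 (pd i (pd j w) x)) := by
    intro i j x0
    obtain ⟨A, hA, h1, h2⟩ := key x0
    have e : ∀ u : Euc n → ℝ, LocallyIntegrable u →
        (∀ x, ‖x - x0‖ < 1 → u x = A x + cv u (κ.rho 1) x) →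
        pd i (pd j u) x0 = pd i (pd j A) x0 + cv u (pd i (pd j (κ.rho 1))) x0 := by
      intro u hu h
      have hh : pd j u =ᶠ[𝓝 x0] pd j (fun x => A x + cv u (κ.rho 1) x) := by
        exact pd_congr_ev ((hnb x0).mono h) j
      rw [pd_congr hh i, pd_add hA.diff' (contDiff_cv hu hρ hρc).diff',
        pd_cv hu hρ hρc, pd_add (contDiff_pd hA j).diff'
        (contDiff_cv hu (contDiff_pd hρ j) (hρc.pd' j)).diff',
        pd_cv hu (contDiff_pd hρ j) (hρc.pd' j)]
    rw [e w hwl h2]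
    refine Tendsto.congr' ?_ ((tendsto_cv_bdd (fun k => (hv k).continuous) hM hl
      (contDiff_pd (contDiff_pd hρ j) i).continuous ((hρc.pd' j).pd' i) x0).const_add
      (pd i (pd j A) x0))
    filter_upwards [h1] with k hk
    rw [e _ (hvl k) hk]
  refine ⟨hsm, fun x => ?_, hpd, hpd2⟩
  refine tendsto_nhds_unique (f := fun k => lap (v k) x) (l := atTop) ?_ ?_
  · exact tendsto_finsetSum _ fun i _ => hpd2 i i x
  · refine Tendsto.congr' ?_ tendsto_const_nhds
    filter_upwards [hlap (‖x‖ + 1)] with k hk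
    rw [hk x (by linarith)]

/-- Liouville's theorem: by `Ker.repr`, a harmonic `h` satisfies `h x = ∫ ρ_1(y) h(x - s y) dy` for
all `s > 0`, and the right-hand side tends to zero as `s → ∞`. -/
lemma Ker.harmonic_zero (κ : Ker n) (hn : 3 ≤ n) {h : Euc n → ℝ} (hh : ContDiff ℝ (⊤ : ℕ∞) h)
    (hlap : ∀ x, lap h x = 0) (hM : ∃ M, ∀ x, |h x| ≤ M)
    (h0 : Tendsto h (cocompact (Euc n)) (𝓝 0)) : h = 0 := by
  obtain ⟨M, hM⟩ := hM
  funext x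
  have e : ∀ s : ℝ, 0 < s → h x = ∫ y, κ.rho 1 y * h (x - s • y) := by
    intro s hs
    have h1 := κ.repr hn hs hh x
    have h2 : cv (κ.Es s) (lap h) x = 0 := by
      unfold cv; simp [hlap]
    rw [h2, zero_add] at h1
    rw [h1]
    unfold cv
    have := Measure.integral_comp_smul (volume : Measure (Euc n))
      (fun y => κ.rho s y * h (x - y)) s
    rw [finrank_euc, abs_of_pos (by positivity), smul_eq_mul] at this
    have h3 : ∫ y, κ.rho s y * h (x - y) =
        s ^ n * ∫ y, κ.rho s (s • y) * h (x - s • y) := by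
      rw [this]; field_simp
    rw [h3, ← integral_const_mul]
    congr 1; funext y
    unfold Ker.rho
    rw [smul_smul, inv_mul_cancel₀ hs.ne', Real.rpow_neg hs.le, Real.rpow_natCast]
    simp
    field_simp
  have lim : Tendsto (fun s : ℝ => ∫ y, κ.rho 1 y * h (x - s • y)) atTop (𝓝 (∫ y : Euc n, (0:ℝ))) := by
    refine tendsto_integral_filter_of_dominated_convergence (fun y => κ.rho 1 y * M) ?_ ?_ ?_ ?_
    · refine Eventually.of_forall fun s => ?_
      exact ((κ.rho_smooth 1).continuous.mul (hh.continuous.comp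
        (by fun_prop))).aestronglyMeasurable
    · refine Eventually.of_forall fun s => Eventually.of_forall fun y => ?_
      rw [norm_mul, Real.norm_of_nonneg (κ.rho_nonneg one_pos y)]
      exact mul_le_mul_of_nonneg_left (hM _) (κ.rho_nonneg one_pos y)
    · exact (κ.rho_integrable one_pos).mul_const M
    · filter_upwards [Ker.ae_ne0 hn] with y hy
      rw [← mul_zero (κ.rho 1 y)]
      refine Tendsto.const_mul _ (h0.comp ?_)
      rw [← Metric.cobounded_eq_cocompact, ← tendsto_norm_atTop_iff_cobounded]
      refine tendsto_atTop_mono (f := fun s : ℝ => s * ‖y‖ - ‖x‖) ?_ ?_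
      · intro s
        have := norm_sub_norm_le (s • y) x
        rw [norm_sub_rev, norm_smul] at this
        have h2 := mul_le_mul_of_nonneg_right (le_abs_self s) (norm_nonneg y)
        rw [Real.norm_eq_abs] at this
        linarith
      · exact tendsto_atTop_add_const_right _ _ (tendsto_id.atTop_mul_const (norm_pos_iff.2 hy))
  rw [integral_zero] at lim
  refine tendsto_nhds_unique ?_ lim
  refine Tendsto.congr' ?_ tendsto_const_nhds
  filter_upwards [eventually_gt_atTop 0] with s hs
  exact e s hs

/-- Newtonian potentials of test functions: smooth solutions with kernel bounds. -/
lemma Ker.newton_hcs (κ : Ker n) (hn : 3 ≤ n) {g : Euc n → ℝ} (hg : ContDiff ℝ (⊤ : ℕ∞) g)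
    (hc : HasCompactSupport g) :
    ContDiff ℝ (⊤ : ℕ∞) (cv κ.Gam g) ∧ (∀ x, lap (cv κ.Gam g) x = g x) ∧
    (∀ x, |cv κ.Gam g x| ≤ κ.C * ∫ y, ‖x - y‖ ^ (2 - (n : ℝ)) * |g y|) ∧
    (∀ i x, |pd i (cv κ.Gam g) x| ≤ κ.C * ∫ y, ‖x - y‖ ^ (1 - (n : ℝ)) * |g y|) := by
  have hΓ := κ.Gam_locInt hn
  have hi : ∀ β : ℝ, 0 < β → ∀ x : Euc n, Integrable (fun y => ‖y‖ ^ (β - n) * |g (x - y)|) :=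
    fun β hβ x => Ker.cvEx (φ := fun y => |g y|) (locInt_norm_rpow hn hβ) hg.continuous.abs
      (hc.comp_left (g := fun t : ℝ => |t|) abs_zero) x
  have hf : ∀ b : ℝ, ∀ x : Euc n, ∫ y, ‖y‖ ^ (b - n) * |g (x - y)| =
      ∫ y, ‖x - y‖ ^ (b - n) * |g y| := fun b x =>
    cv_comm' (fun y => ‖y‖ ^ (b - n)) (fun y => |g y|) x
  refine ⟨contDiff_cv hΓ hg hc, fun x => ?_, fun x => ?_, fun i x => ?_⟩
  · rw [lap_cv hΓ hg hc, κ.cv_Gam_lap hn hg hc]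
  · rw [← hf, ← integral_const_mul]
    unfold cv
    rw [← Real.norm_eq_abs]
    refine norm_integral_le_of_norm_le ((hi 2 two_pos x).const_mul _) ?_
    filter_upwards [Ker.ae_ne0 hn] with y hy
    rw [norm_mul, ← mul_assoc]
    exact mul_le_mul_of_nonneg_right (κ.Gam_bound hy) (norm_nonneg _)
  · rw [← hf, ← integral_const_mul, pd_cv hΓ hg hc]
    refine le_of_tendsto (κ.tendsto_cv_Gs hn (contDiff_pd hg i).continuous (hc.pd' i) x).abs ?_
    filter_upwards [self_mem_nhdsWithin] with s hs
    rw [cv_pd_parts (κ.Gs_smooth s) hg hc]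
    unfold cv
    rw [← Real.norm_eq_abs]
    refine norm_integral_le_of_norm_le ((hi 1 one_pos x).const_mul _) ?_
    filter_upwards [Ker.ae_ne0 hn] with y hy
    rw [norm_mul, ← mul_assoc]
    exact mul_le_mul_of_nonneg_right (κ.pd_Gs_bound hs hy i) (norm_nonneg _)

end limits

/-! ### Kernel integrals against powers of the Japanese bracket -/

section weights
variable {n : ℕ}

lemma jap_pos (x : Euc n) : 0 < jap x := Real.sqrt_pos.2 (by positivity)
lemma one_le_jap (x : Euc n) : 1 ≤ jap x := by
  unfold jap; rw [Real.one_le_sqrt]; nlinarith [sq_nonneg ‖x‖]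
lemma norm_le_jap (x : Euc n) : ‖x‖ ≤ jap x := by
  unfold jap; apply Real.le_sqrt_of_sq_le; linarith
lemma jap_le (x : Euc n) : jap x ≤ 1 + ‖x‖ := by
  unfold jap; apply Real.sqrt_le_iff.2; constructor
  · positivity
  · nlinarith [norm_nonneg x]
lemma jap_sq (x : Euc n) : jap x ^ 2 = 1 + ‖x‖ ^ 2 := Real.sq_sqrt (by positivity)
lemma jap_lip (x y : Euc n) : jap x ≤ jap y + ‖x - y‖ := by
  have h1 := jap_sq x
  have h2 := jap_sq y
  have h3 := jap_pos x
  have h4 := jap_pos y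
  have h5 := norm_nonneg (x - y)
  have h6 : ‖x‖ ≤ ‖y‖ + ‖x - y‖ := by
    have := norm_sub_norm_le x y; linarith
  have h7 := norm_le_jap y
  nlinarith [norm_nonneg x, norm_nonneg y, mul_nonneg (sub_nonneg.2 h7) h5]

lemma jap_continuous : Continuous (jap : Euc n → ℝ) := by
  unfold jap; fun_prop

lemma jap_rpow_continuous (b : ℝ) : Continuous (fun x : Euc n => jap x ^ b) :=
  jap_continuous.rpow_const fun x => Or.inl (jap_pos x).ne'

lemma lintegral_inv_smul {r : ℝ} (hr : 0 < r) {h : Euc n → ℝ≥0∞} (hh : Measurable h) :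
    ∫⁻ y, h (r⁻¹ • y) = ENNReal.ofReal (r ^ n) * ∫⁻ y, h y := by
  have h1 := lintegral_map (μ := (volume : Measure (Euc n))) hh
    (measurable_const_smul (r⁻¹) : Measurable fun y : Euc n => r⁻¹ • y)
  rw [← h1, Measure.map_addHaar_smul _ (inv_ne_zero hr.ne'), lintegral_smul_measure, finrank_euc]
  congr 2
  rw [abs_of_pos (by positivity)]
  simp

/-- Homogeneous scaling of the integral of a power of the norm over a dilated region. -/
lemma lintegral_norm_rpow_scale (P : ℝ → Prop) (hP : MeasurableSet {t | P t}) (b : ℝ)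
    (hfin : ∫⁻ y : Euc n, {y : Euc n | P ‖y‖}.indicator (fun y => ENNReal.ofReal (‖y‖ ^ b)) y ≠ ⊤) :
    ∃ C : ℝ, 0 ≤ C ∧ ∀ r : ℝ, 0 < r →
      ∫⁻ y : Euc n, {y : Euc n | P (‖y‖ / r)}.indicator (fun y => ENNReal.ofReal (‖y‖ ^ b)) y ≤
        ENNReal.ofReal (C * r ^ ((n : ℝ) + b)) := by
  set h : Euc n → ℝ≥0∞ := {y : Euc n | P ‖y‖}.indicator (fun y => ENNReal.ofReal (‖y‖ ^ b)) with hh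
  have hm : Measurable h :=
    ((measurable_norm_rpow b).ennreal_ofReal).indicator (measurable_norm hP)
  refine ⟨(∫⁻ y, h y).toReal, ENNReal.toReal_nonneg, fun r hr => ?_⟩
  have e : ∀ y : Euc n, {y : Euc n | P (‖y‖ / r)}.indicator
      (fun y => ENNReal.ofReal (‖y‖ ^ b)) y = ENNReal.ofReal (r ^ b) * h (r⁻¹ • y) := by
    intro y
    rw [hh]
    by_cases hy : P (‖y‖ / r)
    · rw [Set.indicator_of_mem (by exact hy), Set.indicator_of_mem (by
        show P _; rwa [Ker.norm_inv_smul hr]), ← ENNReal.ofReal_mul (by positivity),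
        Ker.norm_inv_smul hr, Real.div_rpow (norm_nonneg _) hr.le]
      have := (Real.rpow_pos_of_pos hr b).ne'
      congr 1; field_simp
    · rw [Set.indicator_of_notMem (by exact hy), Set.indicator_of_notMem (by
        show ¬ P _; rwa [Ker.norm_inv_smul hr]), mul_zero]
  simp only [e]
  rw [lintegral_const_mul (f := fun y => h (r⁻¹ • y)) _ (hm.comp (measurable_const_smul _)),
    lintegral_inv_smul hr hm,
    mul_comm (ENNReal.toReal _), ENNReal.ofReal_mul (by positivity), ENNReal.ofReal_toReal hfin,
    Real.rpow_add hr, Real.rpow_natCast, ENNReal.ofReal_mul (by positivity)]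
  rw [← mul_assoc, mul_comm (ENNReal.ofReal (r ^ b))]

lemma lintegral_norm_rpow_in (hn : 3 ≤ n) {β : ℝ} (hβ : 0 < β) :
    ∃ C : ℝ, 0 ≤ C ∧ ∀ r : ℝ, 0 < r →
      ∫⁻ y : Euc n, {y : Euc n | ‖y‖ ≤ r}.indicator
        (fun y => ENNReal.ofReal (‖y‖ ^ (β - n))) y ≤ ENNReal.ofReal (C * r ^ β) := by
  have hfin : ∫⁻ y : Euc n, {y : Euc n | ‖y‖ ≤ 1}.indicator
      (fun y => ENNReal.ofReal (‖y‖ ^ (β - n))) y ≠ ⊤ := by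
    have : {y : Euc n | ‖y‖ ≤ 1} = Metric.closedBall 0 1 := by ext y; simp
    rw [this, lintegral_indicator measurableSet_closedBall]
    have h := (locallyIntegrable_iff.1 (locInt_norm_rpow hn hβ)) _ (isCompact_closedBall 0 1)
    have h2 := h.2
    rw [hasFiniteIntegral_iff_ofReal (Eventually.of_forall fun y => by positivity)] at h2
    exact h2.ne
  obtain ⟨C, hC, h⟩ := lintegral_norm_rpow_scale (fun t => t ≤ 1) measurableSet_Iic _ hfin
  refine ⟨C, hC, fun r hr => ?_⟩
  have := h r hr
  simp only [div_le_one hr] at this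
  convert this using 4
  ring

lemma lintegral_norm_rpow_out {β : ℝ} (hβ : 0 < β) :
    ∃ C : ℝ, 0 ≤ C ∧ ∀ r : ℝ, 0 < r →
      ∫⁻ y : Euc n, {y : Euc n | r < ‖y‖}.indicator
        (fun y => ENNReal.ofReal (‖y‖ ^ (-β - n))) y ≤ ENNReal.ofReal (C * r ^ (-β)) := by
  have hfin : ∫⁻ y : Euc n, {y : Euc n | 1 < ‖y‖}.indicator
      (fun y => ENNReal.ofReal (‖y‖ ^ (-β - n))) y ≠ ⊤ := by
    have hi : Integrable (fun y : Euc n => 2 ^ ((n + β) / 2) * (1 + ‖y‖ ^ 2) ^ (-(n + β) / 2)) := by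
      refine Integrable.const_mul ?_ _
      exact integrable_rpow_neg_one_add_norm_sq (E := Euc n) (by rw [finrank_euc]; linarith)
    have h2 := hi.2
    rw [hasFiniteIntegral_iff_ofReal (Eventually.of_forall fun y => by positivity)] at h2
    refine ((lintegral_mono fun y => ?_).trans_lt h2).ne
    by_cases hy : 1 < ‖y‖
    · rw [Set.indicator_of_mem (by exact hy)]
      refine ENNReal.ofReal_le_ofReal ?_
      have e : ‖y‖ ^ (-β - n) = (‖y‖ ^ 2) ^ (-(n + β) / 2) := by
        rw [← Real.rpow_natCast, ← Real.rpow_mul (norm_nonneg _)]; congr 1; push_cast; ring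
      have e2 : (2 : ℝ) ^ ((n + β) / 2) = 2⁻¹ ^ (-(n + β) / 2) := by
        rw [Real.inv_rpow (by norm_num), ← Real.rpow_neg (by norm_num)]; congr 1; ring
      rw [e, e2, ← Real.mul_rpow (by norm_num) (by positivity)]
      refine Real.rpow_le_rpow_of_nonpos (by positivity) (by nlinarith) ?_
      have : (0:ℝ) ≤ n := Nat.cast_nonneg n
      linarith
    · rw [Set.indicator_of_notMem (by exact hy)]; exact zero_le
  obtain ⟨C, hC, h⟩ := lintegral_norm_rpow_scale (fun t => 1 < t) measurableSet_Ioi _ hfin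
  refine ⟨C, hC, fun r hr => ?_⟩
  have := h r hr
  simp only [one_lt_div hr] at this
  convert this using 4
  ring

/-- The basic estimate `∫ ‖x-y‖^(α-n) ⟨y⟩^(-s) dy ≤ C ⟨x⟩^(α-s)` for `0 < α < s < n`. The regions
`‖x-y‖ ≤ ⟨x⟩/2`, `‖y‖ ≤ 2⟨x⟩` and `‖y‖ > 2⟨x⟩` are treated separately. -/
lemma kernel_jap (hn : 3 ≤ n) {α s : ℝ} (hα : 0 < α) (hαs : α < s) (hs : s < n) :
    ∃ C : ℝ, 0 ≤ C ∧ ∀ x : Euc n,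
      ∫⁻ y, ENNReal.ofReal (‖x - y‖ ^ (α - n) * jap y ^ (-s)) ≤
        ENNReal.ofReal (C * jap x ^ (α - s)) := by
  obtain ⟨C1, hC1, h1⟩ := lintegral_norm_rpow_in hn hα
  obtain ⟨C2, hC2, h2⟩ := lintegral_norm_rpow_in hn (sub_pos.2 hs)
  obtain ⟨C3, hC3, h3⟩ := lintegral_norm_rpow_out (sub_pos.2 hαs)
  refine ⟨(1/2) ^ (α - s) * C1 + (1/2) ^ (α - n) * 2 ^ ((n:ℝ) - s) * C2 +
    2⁻¹ ^ (α - n) * 2 ^ (α - s) * C3, by positivity, fun x => ?_⟩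
  set J := jap x with hJ
  have hJ0 : 0 < J := jap_pos x
  set F1 : Euc n → ℝ≥0∞ := {y : Euc n | ‖y‖ ≤ J / 2}.indicator
        (fun y => ENNReal.ofReal (‖y‖ ^ (α - n))) with hF1
  set F2 : Euc n → ℝ≥0∞ := {y : Euc n | ‖y‖ ≤ 2 * J}.indicator
        (fun y => ENNReal.ofReal (‖y‖ ^ ((n - s) - n))) with hF2
  set F3 : Euc n → ℝ≥0∞ := {y : Euc n | 2 * J < ‖y‖}.indicator
        (fun y => ENNReal.ofReal (‖y‖ ^ (-(s - α) - n))) with hF3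
  have m1 : Measurable F1 := ((measurable_norm_rpow _).ennreal_ofReal).indicator
    (measurable_norm measurableSet_Iic)
  have m2 : Measurable F2 := ((measurable_norm_rpow _).ennreal_ofReal).indicator
    (measurable_norm measurableSet_Iic)
  have m3 : Measurable F3 := ((measurable_norm_rpow _).ennreal_ofReal).indicator
    (measurable_norm measurableSet_Ioi)
  have key : ∀ y : Euc n, y ≠ 0 → ENNReal.ofReal (‖x - y‖ ^ (α - n) * jap y ^ (-s)) ≤
      ENNReal.ofReal ((J / 2) ^ (-s)) * F1 (x - y) +
      ENNReal.ofReal ((J / 2) ^ (α - n)) * F2 y + ENNReal.ofReal (2⁻¹ ^ (α - n)) * F3 y := by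
    intro y hy0
    have hy0' := norm_pos_iff.2 hy0
    by_cases c1 : ‖x - y‖ ≤ J / 2
    · refine le_trans ?_ (le_trans le_self_add le_self_add)
      rw [hF1, Set.indicator_of_mem (by exact c1), ← ENNReal.ofReal_mul (by positivity), mul_comm]
      refine ENNReal.ofReal_le_ofReal (mul_le_mul_of_nonneg_right ?_ (by positivity))
      refine Real.rpow_le_rpow_of_nonpos (by positivity) ?_ (by linarith)
      have := jap_lip x y
      linarith
    · push Not at c1
      by_cases c2 : ‖y‖ ≤ 2 * J
      · refine le_trans ?_ (le_trans le_add_self le_self_add)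
        rw [hF2, Set.indicator_of_mem (by exact c2), ← ENNReal.ofReal_mul (by positivity)]
        refine ENNReal.ofReal_le_ofReal (mul_le_mul ?_ ?_ (by have := jap_pos y; positivity)
          (by positivity))
        · exact Real.rpow_le_rpow_of_nonpos (by positivity) c1.le (by linarith)
        · rw [show (n:ℝ) - s - n = -s by ring]
          exact Real.rpow_le_rpow_of_nonpos hy0' (norm_le_jap y) (by linarith)
      · refine le_trans ?_ le_add_self
        push Not at c2
        rw [hF3, Set.indicator_of_mem (by exact c2), ← ENNReal.ofReal_mul (by positivity)]
        refine ENNReal.ofReal_le_ofReal ?_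
        rw [show -(s - α) - (n:ℝ) = (α - n) + (-s) by ring, Real.rpow_add hy0', ← mul_assoc,
          ← Real.mul_rpow (by norm_num) hy0'.le]
        refine mul_le_mul ?_ ?_ (by have := jap_pos y; positivity) (by positivity)
        · refine Real.rpow_le_rpow_of_nonpos (by positivity) ?_ (by linarith)
          have := norm_sub_norm_le y x
          rw [norm_sub_rev] at this
          have := norm_le_jap x
          linarith
        · exact Real.rpow_le_rpow_of_nonpos hy0' (norm_le_jap y) (by linarith)
  calc _ ≤ ∫⁻ y, (ENNReal.ofReal ((J / 2) ^ (-s)) * F1 (x - y) +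
      ENNReal.ofReal ((J / 2) ^ (α - n)) * F2 y + ENNReal.ofReal (2⁻¹ ^ (α - n)) * F3 y) := by
        refine lintegral_mono_ae ?_
        filter_upwards [Ker.ae_ne0 hn] with y hy using key y hy
    _ = ENNReal.ofReal ((J / 2) ^ (-s)) * (∫⁻ y, F1 y) +
      ENNReal.ofReal ((J / 2) ^ (α - n)) * (∫⁻ y, F2 y) +
        ENNReal.ofReal (2⁻¹ ^ (α - n)) * (∫⁻ y, F3 y) := by
        have m1' : Measurable fun y => F1 (x - y) := m1.comp (measurable_const.sub measurable_id)
        rw [lintegral_add_right _ (m3.const_mul _), lintegral_add_right _ (m2.const_mul _),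
          lintegral_const_mul _ m1', lintegral_const_mul _ m2, lintegral_const_mul _ m3,
          lintegral_sub_left_eq_self F1 x]
    _ ≤ ENNReal.ofReal ((J / 2) ^ (-s)) * ENNReal.ofReal (C1 * (J / 2) ^ α) +
      ENNReal.ofReal ((J / 2) ^ (α - n)) * ENNReal.ofReal (C2 * (2 * J) ^ ((n:ℝ) - s)) +
        ENNReal.ofReal (2⁻¹ ^ (α - n)) * ENNReal.ofReal (C3 * (2 * J) ^ (-(s - α))) := by
        gcongr
        · exact h1 _ (by positivity)
        · exact h2 _ (by positivity)
        · exact h3 _ (by positivity)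
    _ = _ := by
        rw [← ENNReal.ofReal_mul (by positivity), ← ENNReal.ofReal_mul (by positivity),
          ← ENNReal.ofReal_mul (by positivity), ← ENNReal.ofReal_add (by positivity) (by positivity),
          ← ENNReal.ofReal_add (by positivity) (by positivity)]
        congr 1
        have e1 : (J / 2) ^ (-s) * (C1 * (J / 2) ^ α) = (1/2) ^ (α - s) * C1 * J ^ (α - s) := by
          rw [show (J / 2) ^ (-s) * (C1 * (J / 2) ^ α) = C1 * ((J / 2) ^ (-s) * (J / 2) ^ α) by ring,
            ← Real.rpow_add (by positivity), show J / 2 = (1 / 2) * J by ring,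
            Real.mul_rpow (by norm_num) hJ0.le, show -s + α = α - s by ring]
          ring
        have e2 : (J / 2) ^ (α - n) * (C2 * (2 * J) ^ ((n:ℝ) - s)) =
            (1/2) ^ (α - n) * 2 ^ ((n:ℝ) - s) * C2 * J ^ (α - s) := by
          rw [show J / 2 = (1 / 2) * J by ring, Real.mul_rpow (by norm_num) hJ0.le,
            Real.mul_rpow (by norm_num) hJ0.le, show α - s = (α - n) + (n - s) by ring,
            Real.rpow_add hJ0]
          ring
        have e3 : (2:ℝ)⁻¹ ^ (α - n) * (C3 * (2 * J) ^ (-(s - α))) =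
            2⁻¹ ^ (α - n) * 2 ^ (α - s) * C3 * J ^ (α - s) := by
          rw [show -(s - α) = α - s by ring, Real.mul_rpow (by norm_num) hJ0.le]; ring
        rw [e1, e2, e3]; ring

end weights

/-! ### Weighted bounds for Riesz potentials -/

section schur
variable {n : ℕ}

/-- The weighted `L^p` integral `∫ (⟨y⟩^a |g|)^p`. -/
def wt (p a : ℝ) (g : Euc n → ℝ) : ℝ≥0∞ := ∫⁻ y, ENNReal.ofReal ((jap y ^ a * |g y|) ^ p)

/-- The Riesz potential `∫ ‖x-y‖^(α-n) |g y| dy`. -/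
def riesz (α : ℝ) (g : Euc n → ℝ) (x : Euc n) : ℝ≥0∞ :=
  ∫⁻ y, ENNReal.ofReal (‖x - y‖ ^ (α - n) * |g y|)

lemma holder_ofReal {p q : ℝ} (hpq : p.HolderConjugate q) {F H : Euc n → ℝ}
    (hF : Measurable F) (hH : Measurable H) (hF0 : ∀ y, 0 ≤ F y) (hH0 : ∀ y, 0 ≤ H y) :
    ∫⁻ y, ENNReal.ofReal (F y * H y) ≤
      (∫⁻ y, ENNReal.ofReal (F y ^ p)) ^ (1 / p) * (∫⁻ y, ENNReal.ofReal (H y ^ q)) ^ (1 / q) := by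
  have h := ENNReal.lintegral_mul_le_Lp_mul_Lq volume hpq hF.ennreal_ofReal.aemeasurable
    hH.ennreal_ofReal.aemeasurable
  simp only [Pi.mul_apply] at h
  convert h using 1
  · refine lintegral_congr fun y => ?_
    rw [ENNReal.ofReal_mul (hF0 y)]
  · congr 2
    · refine lintegral_congr fun y => ?_
      rw [ENNReal.ofReal_rpow_of_nonneg (hF0 y) hpq.nonneg]
    · refine lintegral_congr fun y => ?_
      rw [ENNReal.ofReal_rpow_of_nonneg (hH0 y) hpq.symm.nonneg]

/-- Pointwise decay of the Newton kernel potential: Hölder's inequality, with `kernel_jap` applied to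
the dual power of the weighted kernel. -/
lemma riesz_pointwise (hn : 3 ≤ n) {p δ : ℝ} (hp : (n : ℝ) < p) (h1 : 2 - (n : ℝ) < δ)
    (h2 : δ < 0) : ∃ K : ℝ, 0 ≤ K ∧ ∀ g : Euc n → ℝ, Measurable g → ∀ x,
      riesz 2 g x ≤ ENNReal.ofReal (K * jap x ^ δ) * (wt p (2 - δ - n / p) g) ^ (1 / p) := by
  have hn' : (3:ℝ) ≤ n := by exact_mod_cast hn
  have hp1 : 1 < p := by linarith
  have hp0 : 0 < p := by linarith
  set q := p / (p - 1) with hq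
  have hpq : p.HolderConjugate q := Real.HolderConjugate.conjExponent hp1
  have hq0 : 0 < q := hpq.symm.pos
  set a := 2 - δ - n / p with ha
  have hqi : n / q = n - n / p := by
    rw [hq]; field_simp
  have e1 : (n:ℝ) = (n - n / p) * q := by rw [← hqi]; field_simp
  have hnp : (n:ℝ) / p < 1 := by rw [div_lt_one hp0]; exact hp
  have hα : 0 < n - (n - 2) * q := by
    have : 0 < (2 - n / p) * q := mul_pos (by linarith) hq0
    nlinarith
  have hαs : n - (n - 2) * q < a * q := by
    have : 0 < (-δ) * q := mul_pos (by linarith) hq0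
    rw [ha]; nlinarith
  have hs : a * q < n := by
    have : 0 < (n - 2 + δ) * q := mul_pos (by linarith) hq0
    rw [ha]; nlinarith
  obtain ⟨C, hC, h⟩ := kernel_jap hn hα hαs hs
  refine ⟨C ^ (1 / q), by positivity, fun g hg x => ?_⟩
  have hj : ∀ y : Euc n, 0 < jap y := jap_pos
  have hh := holder_ofReal hpq.symm (F := fun y => ‖x - y‖ ^ (2 - (n:ℝ)) * jap y ^ (-a))
    (H := fun y => jap y ^ a * |g y|) (by
      exact (by fun_prop : Measurable fun y => ‖x - y‖ ^ (2 - (n:ℝ))).mul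
        (jap_rpow_continuous _).measurable)
    ((jap_rpow_continuous _).measurable.mul (by fun_prop))
    (fun y => by have := hj y; positivity) (fun y => by have := hj y; positivity)
  unfold riesz
  calc _ = ∫⁻ y, ENNReal.ofReal ((‖x - y‖ ^ (2 - (n:ℝ)) * jap y ^ (-a)) * (jap y ^ a * |g y|)) := by
        refine lintegral_congr fun y => ?_
        congr 1
        rw [Real.rpow_neg (hj y).le]
        have := (Real.rpow_pos_of_pos (hj y) a).ne'
        field_simp
    _ ≤ _ := hh
    _ ≤ _ := by
        unfold wt
        refine mul_le_mul_left ?_ _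
        have h3 : ∫⁻ y, ENNReal.ofReal ((‖x - y‖ ^ (2 - (n:ℝ)) * jap y ^ (-a)) ^ q) ≤
            ENNReal.ofReal (C * jap x ^ ((n - (n - 2) * q) - a * q)) := by
          refine le_trans (le_of_eq (lintegral_congr fun y => ?_)) (h x)
          congr 1
          rw [Real.mul_rpow (by positivity) (by have := hj y; positivity),
            ← Real.rpow_mul (norm_nonneg _), ← Real.rpow_mul (hj y).le]
          congr 2 <;> ring
        refine (ENNReal.rpow_le_rpow h3 (by positivity)).trans (le_of_eq ?_)
        rw [ENNReal.ofReal_rpow_of_nonneg (by have := hj x; positivity) (by positivity),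
          Real.mul_rpow hC (by have := hj x; positivity), ← Real.rpow_mul (hj x).le]
        congr 3
        have : ((n:ℝ) - (n - 2) * q - a * q) * (1 / q) = n / q - (n - 2) - a := by field_simp
        rw [this, hqi, ha]
        ring

lemma riesz_measurable (α : ℝ) {g : Euc n → ℝ} (hg : Measurable g) : Measurable (riesz α g) := by
  unfold riesz
  refine Measurable.lintegral_prod_right' (f := fun z : Euc n × Euc n =>
    ENNReal.ofReal (‖z.1 - z.2‖ ^ (α - n) * |g z.2|)) ?_
  fun_prop

/-- Weighted `L^p` bound for Riesz potentials by Schur's test. With `s = 2 - δ` and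
`t = n + δ - 2 + α`, the kernel is integrated against `⟨y⟩^(-s)` in `y` and `⟨x⟩^(-t)` in `x`. -/
lemma riesz_schur (hn : 3 ≤ n) {p δ α : ℝ} (hp : (n : ℝ) < p) (h1 : 2 - (n : ℝ) < δ)
    (h2 : δ < 0) (hα : 0 < α) (hα2 : α ≤ 2) : ∃ K : ℝ, 0 ≤ K ∧ ∀ g : Euc n → ℝ, Measurable g →
      ∫⁻ x, ENNReal.ofReal (jap x ^ ((2 - δ - n / p - α) * p)) * (riesz α g x) ^ p ≤
        ENNReal.ofReal K * wt p (2 - δ - n / p) g := by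
  have hn' : (3:ℝ) ≤ n := by exact_mod_cast hn
  have hp1 : 1 < p := by linarith
  have hp0 : 0 < p := by linarith
  set q := p / (p - 1) with hq
  have hpq : p.HolderConjugate q := Real.HolderConjugate.conjExponent hp1
  have hq0 : 0 < q := hpq.symm.pos
  have hpqi : p / q = p - 1 := by rw [hq]; field_simp
  have hpqs : 1 / p + 1 / q = 1 := by simpa using hpq.inv_add_inv_eq_one
  set a := 2 - δ - n / p with ha
  have hap : a * p = 2 * p - δ * p - n := by rw [ha]; field_simp
  set s := 2 - δ with hs
  set t := n + δ - 2 + α with ht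
  obtain ⟨C1, hC1, k1⟩ := kernel_jap (n := n) hn hα (s := s) (by linarith) (by linarith)
  obtain ⟨C2, hC2, k2⟩ := kernel_jap (n := n) hn hα (s := t) (by linarith) (by linarith)
  have hj : ∀ y : Euc n, 0 < jap y := jap_pos
  refine ⟨C1 ^ (p - 1) * C2, by positivity, fun g hg => ?_⟩
  set k : Euc n → Euc n → ℝ := fun x y => ‖x - y‖ ^ (α - n) with hk
  have hk0 : ∀ x y, 0 ≤ k x y := fun x y => by positivity
  -- Hölder with the weight `⟨y⟩^(-s)`
  have step1 : ∀ x, (riesz α g x) ^ p ≤ ENNReal.ofReal ((C1 * jap x ^ (α - s)) ^ (p - 1)) *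
      ∫⁻ y, ENNReal.ofReal (k x y * jap y ^ (s * (p - 1)) * |g y| ^ p) := by
    intro x
    have hh := holder_ofReal hpq.symm (F := fun y => (k x y) ^ (1 / q) * jap y ^ (-s / q))
      (H := fun y => (k x y) ^ (1 / p) * jap y ^ (s / q) * |g y|)
      (by exact (by fun_prop : Measurable fun y => (‖x - y‖ ^ (α - n)) ^ (1 / q)).mul
              (jap_rpow_continuous _).measurable)
      (by exact ((by fun_prop : Measurable fun y => (‖x - y‖ ^ (α - n)) ^ (1 / p)).mul
              (jap_rpow_continuous _).measurable).mul (by fun_prop))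
      (fun y => by have := hj y; have := hk0 x y; positivity)
      (fun y => by have := hj y; have := hk0 x y; positivity)
    have e0 : riesz α g x = ∫⁻ y, ENNReal.ofReal (((k x y) ^ (1 / q) * jap y ^ (-s / q)) *
        ((k x y) ^ (1 / p) * jap y ^ (s / q) * |g y|)) := by
      unfold riesz
      refine lintegral_congr fun y => ?_
      congr 1
      have : (k x y) ^ (1 / q) * (k x y) ^ (1 / p) = k x y := by
        rw [← Real.rpow_add_of_nonneg (hk0 x y) (by positivity) (by positivity), add_comm, hpqs,
          Real.rpow_one]
      have j : jap y ^ (-s / q) * jap y ^ (s / q) = 1 := by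
        rw [← Real.rpow_add (hj y)]; ring_nf; simp
      calc ‖x - y‖ ^ (α - n) * |g y| = ((k x y) ^ (1 / q) * (k x y) ^ (1 / p)) *
            (jap y ^ (-s / q) * jap y ^ (s / q)) * |g y| := by rw [this, j, mul_one]
        _ = _ := by ring
    rw [← e0] at hh
    refine (ENNReal.rpow_le_rpow hh hp0.le).trans ?_
    rw [ENNReal.mul_rpow_of_nonneg _ _ hp0.le, ← ENNReal.rpow_mul, ← ENNReal.rpow_mul,
      one_div_mul_cancel hp0.ne', ENNReal.rpow_one, show 1 / q * p = p - 1 by rw [← hpqi]; ring]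
    refine mul_le_mul' ?_ (le_of_eq (lintegral_congr fun y => ?_))
    · rw [← ENNReal.ofReal_rpow_of_nonneg (by have := hj x; positivity) (by linarith)]
      refine ENNReal.rpow_le_rpow ?_ (by linarith)
      refine le_trans (le_of_eq (lintegral_congr fun y => ?_)) (k1 x)
      congr 1
      rw [Real.mul_rpow (by have := hk0 x y; positivity) (by have := hj y; positivity),
        ← Real.rpow_mul (hk0 x y), ← Real.rpow_mul (hj y).le, one_div_mul_cancel hq0.ne',
        Real.rpow_one, div_mul_cancel₀ _ hq0.ne']
    · congr 1
      rw [Real.mul_rpow (by have := hk0 x y; have := hj y; positivity) (abs_nonneg _),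
        Real.mul_rpow (by have := hk0 x y; positivity) (by have := hj y; positivity),
        ← Real.rpow_mul (hk0 x y), ← Real.rpow_mul (hj y).le, one_div_mul_cancel hp0.ne',
        Real.rpow_one]
      congr 3
      rw [← hpqi]; ring
  have mk : Measurable (fun z : Euc n × Euc n => k z.1 z.2) := by
    simp only [hk]; fun_prop
  have mG : Measurable (fun y : Euc n => jap y ^ (s * (p - 1)) * |g y| ^ p) :=
    (jap_rpow_continuous _).measurable.mul (by fun_prop)
  calc _ ≤ ∫⁻ x, ∫⁻ y, ENNReal.ofReal (C1 ^ (p - 1)) *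
        ENNReal.ofReal (jap x ^ (-t) * k x y * (jap y ^ (s * (p - 1)) * |g y| ^ p)) := by
        refine lintegral_mono fun x => ?_
        refine (mul_le_mul_right (step1 x) _).trans (le_of_eq ?_)
        have m2 : Measurable (fun y => ENNReal.ofReal (k x y * jap y ^ (s * (p - 1)) * |g y| ^ p)) :=
          ((mk.comp measurable_prodMk_left).mul (jap_rpow_continuous _).measurable |>.mul
            (by fun_prop)).ennreal_ofReal
        rw [← mul_assoc, ← lintegral_const_mul _ m2]
        refine lintegral_congr fun y => ?_
        have p1 := hj x
        have p2 := hj y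
        have p3 := hk0 x y
        rw [← ENNReal.ofReal_mul (by positivity), ← ENNReal.ofReal_mul (by positivity),
          ← ENNReal.ofReal_mul (by positivity)]
        congr 1
        rw [Real.mul_rpow hC1 (by positivity), ← Real.rpow_mul p1.le]
        have : jap x ^ ((a - α) * p) * jap x ^ ((α - s) * (p - 1)) = jap x ^ (-t) := by
          rw [← Real.rpow_add p1]
          congr 1
          rw [sub_mul, hap, ht, hs]; ring
        rw [← this]; ring
    _ = ∫⁻ y, ∫⁻ x, ENNReal.ofReal (C1 ^ (p - 1)) *
        ENNReal.ofReal (jap x ^ (-t) * k x y * (jap y ^ (s * (p - 1)) * |g y| ^ p)) := by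
        refine lintegral_lintegral_swap ?_
        refine Measurable.aemeasurable ?_
        refine Measurable.const_mul ?_ _
        exact ((((jap_rpow_continuous _).measurable.comp measurable_fst).mul mk).mul
          (mG.comp measurable_snd)).ennreal_ofReal
    _ ≤ ∫⁻ y, ENNReal.ofReal (C1 ^ (p - 1) * C2) * ENNReal.ofReal ((jap y ^ a * |g y|) ^ p) := by
        refine lintegral_mono fun y => ?_
        have p2 := hj y
        have m2 : Measurable (fun x => ENNReal.ofReal (‖y - x‖ ^ (α - n) * jap x ^ (-t))) :=
          ((by fun_prop : Measurable fun x => ‖y - x‖ ^ (α - n)).mul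
            (jap_rpow_continuous _).measurable).ennreal_ofReal
        calc _ = ∫⁻ x, ENNReal.ofReal (C1 ^ (p - 1) * (jap y ^ (s * (p - 1)) * |g y| ^ p)) *
              ENNReal.ofReal (‖y - x‖ ^ (α - n) * jap x ^ (-t)) := by
              refine lintegral_congr fun x => ?_
              have p1 := hj x
              rw [← ENNReal.ofReal_mul (by positivity), ← ENNReal.ofReal_mul (by positivity)]
              congr 1
              simp only [hk]
              rw [norm_sub_rev]; ring
          _ = _ := lintegral_const_mul _ m2
          _ ≤ _ := mul_le_mul_right (k2 y) _
          _ = _ := by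
              rw [← ENNReal.ofReal_mul (by positivity), ← ENNReal.ofReal_mul (by positivity)]
              congr 1
              rw [Real.mul_rpow (by positivity) (abs_nonneg _), ← Real.rpow_mul p2.le]
              have : jap y ^ (s * (p - 1)) * jap y ^ (α - t) = jap y ^ (a * p) := by
                rw [← Real.rpow_add p2]
                congr 1
                rw [hap, ht, hs]; ring
              rw [← this]; ring
    _ = _ := by
        unfold wt
        rw [lintegral_const_mul]
        exact (((jap_rpow_continuous _).measurable.mul (by fun_prop)).pow_const p).ennreal_ofReal

end schur

/-! ### Calderón–Zygmund inequality: local `L²` bounds -/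

section cz
variable {n : ℕ}

/-- Jensen's inequality for the mollifier, localized. -/
lemma Ker.rho_jensen (κ : Ker n) : ∃ B, 0 < B ∧ ∀ r, 0 < r → ∀ h : Euc n → ℝ, Continuous h →
    ∀ x, (cv (κ.rho r) h x) ^ 2 ≤ B * r ^ (-(n : ℝ)) * ∫ y in Metric.closedBall x r, h y ^ 2 := by
  obtain ⟨B, hB, hb⟩ := κ.rho_bound
  refine ⟨B, hB, fun r hr h hh x => ?_⟩
  have hi : ∀ φ : Euc n → ℝ, Continuous φ → Integrable (fun y => κ.rho r y * φ (x - y)) := by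
    intro φ hφ
    refine Continuous.integrable_of_hasCompactSupport ?_ (κ.rho_hcs hr).mul_right
    exact (κ.rho_smooth r).continuous.mul (hφ.comp (by fun_prop))
  set m := cv (κ.rho r) h x with hm
  have h1 : 0 ≤ ∫ y, κ.rho r y * (h (x - y) - m) ^ 2 :=
    integral_nonneg fun y => mul_nonneg (κ.rho_nonneg hr y) (sq_nonneg _)
  have h2 : ∫ y, κ.rho r y * (h (x - y) - m) ^ 2 = cv (κ.rho r) (fun y => h y ^ 2) x - m ^ 2 := by
    have e : ∀ y, κ.rho r y * (h (x - y) - m) ^ 2 = κ.rho r y * (h (x - y)) ^ 2 -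
        (2 * m) * (κ.rho r y * h (x - y)) + m ^ 2 * κ.rho r y := fun y => by ring
    simp only [e]
    rw [integral_add, integral_sub, integral_const_mul, integral_const_mul, κ.rho_int hr]
    · unfold cv at hm ⊢
      rw [← hm]; ring
    · exact hi (fun y => h y ^ 2) (hh.pow 2)
    · exact (hi h hh).const_mul _
    · exact (hi (fun y => h y ^ 2) (hh.pow 2)).sub ((hi h hh).const_mul _)
    · exact (κ.rho_integrable hr).const_mul _
  have h3 : m ^ 2 ≤ cv (κ.rho r) (fun y => h y ^ 2) x := by linarith
  refine h3.trans ?_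
  rw [cv_comm', ← integral_const_mul, ← integral_indicator measurableSet_closedBall]
  have hint : IntegrableOn (fun y => B * r ^ (-(n : ℝ)) * h y ^ 2) (Metric.closedBall x r) :=
    (by fun_prop : Continuous fun y => B * r ^ (-(n : ℝ)) * h y ^ 2).continuousOn.integrableOn_compact
      (isCompact_closedBall x r)
  refine integral_mono_of_nonneg ?_ (hint.integrable_indicator measurableSet_closedBall) ?_
  · exact Eventually.of_forall fun y => mul_nonneg (κ.rho_nonneg hr _) (sq_nonneg _)
  · refine Eventually.of_forall fun y => ?_
    by_cases hy : y ∈ Metric.closedBall x r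
    · rw [Set.indicator_of_mem hy]
      exact mul_le_mul_of_nonneg_right (hb r hr _) (sq_nonneg _)
    · rw [Set.indicator_of_notMem hy]
      simp only
      rw [κ.rho_out hr, zero_mul]
      rw [mem_closedBall_iff_norm, norm_sub_rev] at hy
      linarith

lemma vol_closedBall_real (b : Euc n) {r : ℝ} (hr : 0 ≤ r) :
    volume.real (Metric.closedBall b r) = volume.real (Metric.ball (0 : Euc n) 1) * r ^ n := by
  unfold Measure.real
  rw [Measure.addHaar_closedBall _ _ hr, finrank_euc, ENNReal.toReal_mul,
    ENNReal.toReal_ofReal (by positivity), mul_comm]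


lemma integrable_sq_hcs {g : Euc n → ℝ} (hg : Continuous g) (hc : HasCompactSupport g) :
    Integrable (fun x => g x ^ 2) := by
  have h : HasCompactSupport (fun x => g x * g x) := hc.mul_right
  have h2 : Integrable (fun x => g x * g x) := (hg.mul hg).integrable_of_hasCompactSupport h
  simpa only [pow_two] using h2

/-- `L²` bound, uniform in `r`, for the mollification at scale `r` of a function supported in a ball of
radius `14 r`. -/
lemma Ker.rho_L2 (κ : Ker n) : ∃ K, 0 < K ∧ ∀ g : Euc n → ℝ,
    ContDiff ℝ (⊤ : ℕ∞) g → HasCompactSupport g → ∀ b : Euc n, ∀ r, 0 < r →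
    (∀ x, x ∉ Metric.closedBall b (14 * r) → g x = 0) →
    ∫ x, cv (κ.rho r) g x ^ 2 ≤ K * ∫ x, g x ^ 2 := by
  obtain ⟨B, hB, hJ⟩ := κ.rho_jensen
  obtain ⟨ω, hω⟩ : ∃ ω, volume.real (Metric.ball (0 : Euc n) 1) = ω := ⟨_, rfl⟩
  have hω0 : 0 ≤ ω := hω ▸ measureReal_nonneg
  refine ⟨B * ω * 15 ^ n + 1, by positivity, fun g hgs hgc b r hr hgout => ?_⟩
  have hgsq := integrable_sq_hcs hgs.continuous hgc
  have hρl : LocallyIntegrable (κ.rho r) := (κ.rho_smooth r).continuous.locallyIntegrable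
  have hρgsq : Integrable (fun x => cv (κ.rho r) g x ^ 2) :=
    integrable_sq_hcs (contDiff_cv hρl hgs hgc).continuous (hasCompactSupport_cv (κ.rho_hcs hr) hgc)
  have hI0 : 0 ≤ ∫ x, g x ^ 2 := integral_nonneg fun x => sq_nonneg _
  obtain ⟨I, hI⟩ : ∃ I, ∫ x, g x ^ 2 = I := ⟨_, rfl⟩
  rw [hI] at hI0 ⊢
  have hρg : ∫ x, cv (κ.rho r) g x ^ 2 ≤ (B * ω * 15 ^ n) * I := by
    rw [← setIntegral_eq_integral_of_forall_compl_eq_zero (s := Metric.closedBall b (15 * r))]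
    · have hb : ∀ x ∈ Metric.closedBall b (15 * r),
          cv (κ.rho r) g x ^ 2 ≤ B * r ^ (-(n : ℝ)) * I := by
        intro x _
        refine (hJ r hr g hgs.continuous x).trans ?_
        refine mul_le_mul_of_nonneg_left (le_trans ?_ hI.le) (by positivity)
        exact setIntegral_le_integral hgsq (Eventually.of_forall fun x => sq_nonneg _)
      calc _ ≤ ∫ x in Metric.closedBall b (15 * r), B * r ^ (-(n : ℝ)) * I :=
            setIntegral_mono_on hρgsq.integrableOn (by
              refine integrableOn_const ?_ enorm_ne_top
              exact (isCompact_closedBall _ _).measure_lt_top.ne) measurableSet_closedBall hb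
        _ = _ := by
            rw [setIntegral_const, vol_closedBall_real _ (by positivity), smul_eq_mul,
              Real.rpow_neg hr.le, Real.rpow_natCast, mul_pow, hω]
            field_simp
    · intro x hx
      have : cv (κ.rho r) g x = cv (κ.rho r) (fun _ => 0) x := by
        refine Ker.cv_congr_ball (fun z hz => κ.rho_out hr hz) x fun z hz => hgout z ?_
        rw [mem_closedBall_iff_norm] at hx ⊢
        intro hz2
        apply hx
        calc ‖x - b‖ = ‖(z - b) - (z - x)‖ := by simp
          _ ≤ ‖z - b‖ + ‖z - x‖ := norm_sub_le _ _
          _ ≤ _ := by linarith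
      rw [this]; simp [cv]
  linarith

/-- Second derivatives of the truncated potential: by `integral_hess_sq_le` they are bounded by the
Laplacian `Δ(E_r ⋆ g) = g - ρ_r ⋆ g`. -/
lemma Ker.Es_L2 (κ : Ker n) (hn : 3 ≤ n) : ∃ K, 0 < K ∧ ∀ g : Euc n → ℝ,
    ContDiff ℝ (⊤ : ℕ∞) g → HasCompactSupport g → ∀ i j, ∀ b : Euc n, ∀ r, 0 < r →
    (∀ x, x ∉ Metric.closedBall b (14 * r) → g x = 0) →
    ∫ x, (pd i (pd j (cv (κ.Es r) g)) x) ^ 2 ≤ K * ∫ x, g x ^ 2 := by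
  obtain ⟨K, hK, hρ⟩ := κ.rho_L2
  refine ⟨2 + 2 * K, by positivity, fun g hgs hgc i j b r hr hgout => ?_⟩
  have hE := κ.Es_locInt hn r
  have hu1s : ContDiff ℝ (⊤ : ℕ∞) (cv (κ.Es r) g) := contDiff_cv hE hgs hgc
  have hu1c : HasCompactSupport (cv (κ.Es r) g) := hasCompactSupport_cv (κ.Es_hcs hr) hgc
  have hρl : LocallyIntegrable (κ.rho r) := (κ.rho_smooth r).continuous.locallyIntegrable
  have hgsq := integrable_sq_hcs hgs.continuous hgc
  have hρgsq : Integrable (fun x => cv (κ.rho r) g x ^ 2) :=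
    integrable_sq_hcs (contDiff_cv hρl hgs hgc).continuous (hasCompactSupport_cv (κ.rho_hcs hr) hgc)
  refine (integral_hess_sq_le hu1s hu1c i j).trans ?_
  calc _ ≤ ∫ x, (2 * g x ^ 2 + 2 * cv (κ.rho r) g x ^ 2) := by
        refine integral_mono_of_nonneg (Eventually.of_forall fun x => sq_nonneg _)
          ((hgsq.const_mul 2).add (hρgsq.const_mul 2)) (Eventually.of_forall fun x => ?_)
        simp only
        rw [lap_cv hE hgs hgc, κ.cv_Es_lap_hcs hn hr hgs hgc]
        nlinarith [sq_nonneg (g x + cv (κ.rho r) g x)]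
    _ = 2 * (∫ x, g x ^ 2) + 2 * ∫ x, cv (κ.rho r) g x ^ 2 := by
        rw [integral_add (hgsq.const_mul 2) (hρgsq.const_mul 2), integral_const_mul,
          integral_const_mul]
    _ ≤ _ := by linarith [hρ g hgs hgc b r hr hgout]

/-- Local `L²` bound for the second derivatives minus their mollification at scale `r`. -/
lemma Ker.local_L2 (κ : Ker n) (hn : 3 ≤ n) : ∃ K, 0 < K ∧ ∀ u : Euc n → ℝ,
    ContDiff ℝ (⊤ : ℕ∞) u → HasCompactSupport u → ∀ i j, ∀ b : Euc n, ∀ r, 0 < r →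
    ∫ x in Metric.closedBall b (5 * r),
      (pd i (pd j u) x - cv (κ.rho r) (pd i (pd j u)) x) ^ 2 ≤
      K * ∫ x in Metric.closedBall b (14 * r), lap u x ^ 2 := by
  obtain ⟨K, hK, hEs⟩ := κ.Es_L2 hn
  refine ⟨K, hK, fun u hu huc i j b r hr => ?_⟩
  have hfs : ContDiff ℝ (⊤ : ℕ∞) (lap u) := contDiff_lap hu
  have hr7 : 0 < 7 * r := by positivity
  obtain ⟨χ, hχ⟩ : ∃ χ : Euc n → ℝ, χ = fun x => cut (7 * r) (x - b) := ⟨_, rfl⟩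
  have hχs : ContDiff ℝ (⊤ : ℕ∞) χ := by
    rw [hχ]; exact (cut_contDiff _).comp (contDiff_id.sub contDiff_const)
  have hχc : HasCompactSupport χ := by
    rw [hχ]; exact (cut_hcs hr7).comp_homeomorph (Homeomorph.subRight b)
  have hχ1 : ∀ x, χ x ^ 2 ≤ 1 := by
    intro x
    have h0 := cut_nonneg (7 * r) (x - b)
    have h1 := cut_le_one (7 * r) (x - b)
    rw [hχ]
    exact pow_le_one₀ h0 h1
  obtain ⟨g, hg⟩ : ∃ g : Euc n → ℝ, g = fun x => χ x * lap u x := ⟨_, rfl⟩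
  have hgs : ContDiff ℝ (⊤ : ℕ∞) g := hg ▸ hχs.mul hfs
  have hgc : HasCompactSupport g := hg ▸ hχc.mul_right
  have hE := κ.Es_locInt hn r
  have hu1s : ContDiff ℝ (⊤ : ℕ∞) (cv (κ.Es r) g) := contDiff_cv hE hgs hgc
  have hu1c : HasCompactSupport (cv (κ.Es r) g) := hasCompactSupport_cv (κ.Es_hcs hr) hgc
  have hρl : LocallyIntegrable (κ.rho r) := (κ.rho_smooth r).continuous.locallyIntegrable
  -- inside the ball the difference is a second derivative of the localized potential
  have e1 : ∀ x ∈ Metric.closedBall b (5 * r),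
      pd i (pd j u) x - cv (κ.rho r) (pd i (pd j u)) x = pd i (pd j (cv (κ.Es r) g)) x := by
    intro x hx
    have hloc : u =ᶠ[𝓝 x] fun y => cv (κ.Es r) g y + cv (κ.rho r) u y := by
      have : Metric.ball b (6 * r) ∈ 𝓝 x := Metric.isOpen_ball.mem_nhds (by
        rw [Metric.mem_closedBall] at hx; rw [Metric.mem_ball]; linarith)
      filter_upwards [this] with y hy
      rw [κ.repr hn hr hu y]
      congr 1
      refine Ker.cv_congr_ball (fun z hz => κ.Es_out hr hz) y fun z hz => ?_
      have : ‖z - b‖ ≤ 7 * r := by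
        rw [mem_ball_iff_norm] at hy
        calc ‖z - b‖ = ‖(z - y) + (y - b)‖ := by simp
          _ ≤ ‖z - y‖ + ‖y - b‖ := norm_add_le _ _
          _ ≤ _ := by linarith
      simp only [hg, hχ]
      rw [cut_one hr7 this, one_mul]
    have hcv := contDiff_cv hρl hu huc
    rw [pd_congr (pd_congr_ev hloc j) i, pd_add hu1s.diff' hcv.diff',
      pd_add (contDiff_pd hu1s j).diff' (contDiff_pd hcv j).diff', pd_cv hρl hu huc,
      pd_cv hρl (contDiff_pd hu j) (huc.pd' j)]
    ring
  have hgout : ∀ x, x ∉ Metric.closedBall b (14 * r) → g x = 0 := by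
    intro x hx
    rw [mem_closedBall_iff_norm] at hx
    rw [hg, hχ]
    simp only
    rw [cut_zero hr7 (by linarith), zero_mul]
  have hgle : ∀ x, g x ^ 2 ≤ lap u x ^ 2 := by
    intro x
    rw [hg]
    simp only
    rw [mul_pow]
    exact mul_le_of_le_one_left (sq_nonneg _) (hχ1 x)
  have hg2 : ∫ x, g x ^ 2 ≤ ∫ x in Metric.closedBall b (14 * r), lap u x ^ 2 := by
    rw [← setIntegral_eq_integral_of_forall_compl_eq_zero (s := Metric.closedBall b (14 * r))
      (fun x hx => by rw [hgout x hx]; norm_num)]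
    refine setIntegral_mono (integrable_sq_hcs hgs.continuous hgc).integrableOn ?_ hgle
    exact (hfs.continuous.pow 2).continuousOn.integrableOn_compact (isCompact_closedBall _ _)
  calc _ = ∫ x in Metric.closedBall b (5 * r), (pd i (pd j (cv (κ.Es r) g)) x) ^ 2 := by
        refine setIntegral_congr_fun measurableSet_closedBall fun x hx => ?_
        rw [e1 x hx]
    _ ≤ ∫ x, (pd i (pd j (cv (κ.Es r) g)) x) ^ 2 := by
        refine setIntegral_le_integral ?_ (Eventually.of_forall fun x => sq_nonneg _)
        exact integrable_sq_hcs (contDiff_pd (contDiff_pd hu1s j) i).continuous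
          ((hu1c.pd' j).pd' i)
    _ ≤ _ := (hEs g hgs hgc i j b r hr hgout).trans (mul_le_mul_of_nonneg_left hg2 hK.le)

end cz

/-! ### Calderón–Zygmund inequality: stopping balls -/

section czb
variable {n : ℕ}

/-- Stopping-time selection: around a point where `G > l` there is a ball on which the average of
`G` is at least `l`, while on all balls of at least twice its radius the average is at most `l`. -/
lemma good_ball (hn : 3 ≤ n) {G : Euc n → ℝ} (hG : Continuous G) (hGc : HasCompactSupport G)
    (hG0 : ∀ x, 0 ≤ G x) {l : ℝ} (hl : 0 < l) : ∃ R, ∀ x, l < G x → ∃ r, 0 < r ∧ r ≤ R ∧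
      l * volume.real (Metric.closedBall x r) ≤ ∫ y in Metric.closedBall x r, G y ∧
      ∀ s, 2 * r ≤ s → ∫ y in Metric.closedBall x s, G y ≤ l * volume.real (Metric.closedBall x s) := by
  have hGi : Integrable G := hG.integrable_of_hasCompactSupport hGc
  have hω : 0 < volume.real (Metric.ball (0 : Euc n) 1) := by
    refine ENNReal.toReal_pos (Metric.measure_ball_pos _ _ one_pos).ne' measure_ball_lt_top.ne
  obtain ⟨ω, hω'⟩ : ∃ ω, volume.real (Metric.ball (0 : Euc n) 1) = ω := ⟨_, rfl⟩
  rw [hω'] at hω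
  have hI0 : 0 ≤ ∫ y, G y := integral_nonneg hG0
  refine ⟨max 1 ((∫ y, G y) / (l * ω)), fun x hx => ?_⟩
  obtain ⟨S, hS⟩ : ∃ S : Set ℝ, S = {r | 0 < r ∧
    l * volume.real (Metric.closedBall x r) ≤ ∫ y in Metric.closedBall x r, G y} := ⟨_, rfl⟩
  have hbd : ∀ r ∈ S, r ≤ max 1 ((∫ y, G y) / (l * ω)) := by
    intro r hr
    rw [hS] at hr
    obtain ⟨hr0, hr⟩ := hr
    by_contra hcon
    push Not at hcon
    obtain ⟨h1, h2⟩ := max_lt_iff.1 hcon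
    rw [div_lt_iff₀ (by positivity)] at h2
    rw [vol_closedBall_real _ hr0.le, hω'] at hr
    have h3 : ∫ y in Metric.closedBall x r, G y ≤ ∫ y, G y :=
      setIntegral_le_integral hGi (Eventually.of_forall hG0)
    have h4 : r ≤ r ^ n := le_self_pow₀ h1.le (by omega)
    have h5 : l * ω * r ≤ l * ω * r ^ n := mul_le_mul_of_nonneg_left h4 (by positivity)
    nlinarith
  have hne : S.Nonempty := by
    have hnb : {y | l < G y} ∈ 𝓝 x := (isOpen_lt continuous_const hG).mem_nhds hx
    obtain ⟨r, hr0, hr⟩ := Metric.nhds_basis_closedBall.mem_iff.1 hnb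
    refine ⟨r, ?_⟩
    rw [hS]
    refine ⟨hr0, ?_⟩
    have : ∫ y in Metric.closedBall x r, l ≤ ∫ y in Metric.closedBall x r, G y := by
      refine setIntegral_mono_on ?_ hGi.integrableOn measurableSet_closedBall fun y hy => (hr hy).le
      exact integrableOn_const (isCompact_closedBall _ _).measure_lt_top.ne enorm_ne_top
    rw [setIntegral_const, smul_eq_mul] at this
    linarith
  have hbdd : BddAbove S := ⟨_, hbd⟩
  obtain ⟨r0, hr0⟩ := hne
  have hr0' : 0 < r0 := by rw [hS] at hr0; exact hr0.1
  have hsup : 0 < sSup S := hr0'.trans_le (le_csSup hbdd hr0)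
  obtain ⟨r, hr, hr2⟩ := exists_lt_of_lt_csSup ⟨r0, hr0⟩ (by linarith : sSup S / 2 < sSup S)
  have hrS := hr
  rw [hS] at hr
  refine ⟨r, hr.1, hbd r hrS, hr.2, fun s hs => ?_⟩
  by_contra hcon
  push Not at hcon
  have : s ∈ S := by rw [hS]; exact ⟨by linarith [hr.1], hcon.le⟩
  linarith [le_csSup hbdd this]

/-- Half of the mass of `G` on a ball of average at least `l` comes from `{l / 2 < G}`. -/
lemma half_mass {G : Euc n → ℝ} (hG : Continuous G) {l : ℝ} (hl : 0 < l) (x : Euc n) (r : ℝ)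
    (h : l * volume.real (Metric.closedBall x r) ≤ ∫ y in Metric.closedBall x r, G y) :
    l * volume.real (Metric.closedBall x r) ≤
      2 * ∫ y in Metric.closedBall x r ∩ {y | l / 2 < G y}, G y := by
  have hi : IntegrableOn G (Metric.closedBall x r) :=
    hG.continuousOn.integrableOn_compact (isCompact_closedBall _ _)
  have hm : MeasurableSet {y | l / 2 < G y} := (isOpen_lt continuous_const hG).measurableSet
  have hv : volume (Metric.closedBall x r) < ⊤ := (isCompact_closedBall _ _).measure_lt_top
  have h1 := integral_inter_add_sdiff hm hi
  have h2 : ∫ y in Metric.closedBall x r \ {y | l / 2 < G y}, G y ≤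
      ∫ y in Metric.closedBall x r \ {y | l / 2 < G y}, l / 2 := by
    refine setIntegral_mono_on (hi.mono_set Set.sdiff_subset) ?_
      (measurableSet_closedBall.diff hm) fun y hy => not_lt.1 hy.2
    exact integrableOn_const ((measure_mono Set.sdiff_subset).trans_lt hv).ne enorm_ne_top
  rw [setIntegral_const, smul_eq_mul] at h2
  have h3 : volume.real (Metric.closedBall x r \ {y | l / 2 < G y}) ≤
      volume.real (Metric.closedBall x r) := measureReal_mono Set.sdiff_subset hv.ne
  nlinarith

/-- Estimate on one selected ball, centre `b` and radius `r`. The mollified second derivative is at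
most a multiple of `l^(1/2)` on the `5 r`-ball, by the stopping rule at radius `6 r`. Where
`(∂ᵢ∂ⱼu)² > K l` it is therefore dominated by the difference, which `Ker.local_L2` bounds by the
integral of `|Δu|² ≤ G / A` over the `14 r`-ball, again controlled by the stopping rule. -/
lemma Ker.one_ball (κ : Ker n) (hn : 3 ≤ n) : ∃ K C, 1 ≤ K ∧ 0 < C ∧ ∀ u : Euc n → ℝ,
    ContDiff ℝ (⊤ : ℕ∞) u → HasCompactSupport u → ∀ i j, ∀ A l, 1 ≤ A → 0 < l →
    ∀ G : Euc n → ℝ, (G = fun x => pd i (pd j u) x ^ 2 + A * lap u x ^ 2) →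
    ∀ b r, 0 < r → l * volume.real (Metric.closedBall b r) ≤ ∫ y in Metric.closedBall b r, G y →
    (∀ s, 2 * r ≤ s → ∫ y in Metric.closedBall b s, G y ≤ l * volume.real (Metric.closedBall b s)) →
    ∫ y in Metric.closedBall b (5 * r) ∩ {y | K * l < pd i (pd j u) y ^ 2}, pd i (pd j u) y ^ 2 ≤
      C / A * ∫ y in Metric.closedBall b r ∩ {y | l / 2 < G y}, G y := by
  obtain ⟨B, hB, hJ⟩ := κ.rho_jensen
  obtain ⟨K0, hK0, hL⟩ := κ.local_L2 hn
  obtain ⟨ω, hω⟩ : ∃ ω, volume.real (Metric.ball (0 : Euc n) 1) = ω := ⟨_, rfl⟩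
  have hω0 : 0 ≤ ω := hω ▸ measureReal_nonneg
  refine ⟨max 1 (4 * (B * ω * 6 ^ n)), 8 * K0 * 14 ^ n, le_max_left _ _, by positivity, ?_⟩
  intro u hu huc i j A l hA hl G hG b r hr h1 h2
  have hDs : Continuous (pd i (pd j u)) := (contDiff_pd (contDiff_pd hu j) i).continuous
  have hDc : HasCompactSupport (pd i (pd j u)) := (huc.pd' j).pd' i
  have hfs : Continuous (lap u) := (contDiff_lap hu).continuous
  have hf0 := hL u hu huc i j b r hr
  have hM : Continuous (cv (κ.rho r) (pd i (pd j u))) :=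
    (contDiff_cv (κ.rho_smooth r).continuous.locallyIntegrable
      (contDiff_pd (contDiff_pd hu j) i) hDc).continuous
  clear hL
  generalize pd i (pd j u) = D at *
  generalize lap u = f at *
  have hA0 : 0 < A := by linarith
  have hGc : Continuous G := by rw [hG]; fun_prop
  have hGon : ∀ s, IntegrableOn G (Metric.closedBall b s) := fun s =>
    hGc.continuousOn.integrableOn_compact (isCompact_closedBall _ _)
  have hDG : ∀ x, D x ^ 2 ≤ G x := fun x => by rw [hG]; simp only; nlinarith [sq_nonneg (f x)]
  have hfG : ∀ x, f x ^ 2 ≤ A⁻¹ * G x := fun x => by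
    rw [hG, inv_mul_eq_div, le_div_iff₀ hA0]; simp only; nlinarith [sq_nonneg (D x)]
  have hG0 : ∀ x, 0 ≤ G x := fun x => (sq_nonneg _).trans (hDG x)
  have hrn : 0 < r ^ n := by positivity
  have hv : ∀ c : ℝ, 0 ≤ c →
      volume.real (Metric.closedBall b (c * r)) = ω * (c ^ n * r ^ n) := fun c hc => by
    rw [vol_closedBall_real _ (by positivity), hω, mul_pow]
  -- the mollified derivative is controlled by the stopping rule
  have hm : ∀ x ∈ Metric.closedBall b (5 * r), cv (κ.rho r) D x ^ 2 ≤ B * ω * 6 ^ n * l := by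
    intro x hx
    refine (hJ r hr D hDs x).trans ?_
    have a1 : ∫ y in Metric.closedBall x r, D y ^ 2 ≤ ∫ y in Metric.closedBall x r, G y :=
      setIntegral_mono ((hDs.pow 2).continuousOn.integrableOn_compact (isCompact_closedBall _ _))
        (hGc.continuousOn.integrableOn_compact (isCompact_closedBall _ _)) hDG
    have a2 : ∫ y in Metric.closedBall x r, G y ≤ ∫ y in Metric.closedBall b (6 * r), G y :=
      setIntegral_mono_set (hGon _) (Eventually.of_forall hG0)
        (Metric.closedBall_subset_closedBall' (by
          rw [Metric.mem_closedBall] at hx; linarith)).eventuallyLE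
    have a3 := h2 (6 * r) (by linarith)
    rw [hv 6 (by norm_num)] at a3
    calc B * r ^ (-(n : ℝ)) * ∫ y in Metric.closedBall x r, D y ^ 2
        ≤ B * r ^ (-(n : ℝ)) * (l * (ω * (6 ^ n * r ^ n))) :=
          mul_le_mul_of_nonneg_left (by linarith) (by positivity)
      _ = _ := by
          rw [Real.rpow_neg hr.le, Real.rpow_natCast]
          field_simp
  have hsm : MeasurableSet {y | max 1 (4 * (B * ω * 6 ^ n)) * l < D y ^ 2} :=
    (isOpen_lt continuous_const (hDs.pow 2)).measurableSet
  have hd : IntegrableOn (fun y => 4 * (D y - cv (κ.rho r) D y) ^ 2) (Metric.closedBall b (5 * r)) :=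
    (by fun_prop : Continuous fun y => 4 * (D y - cv (κ.rho r) D y) ^ 2).continuousOn.integrableOn_compact
      (isCompact_closedBall _ _)
  have s1 : ∫ y in Metric.closedBall b (5 * r) ∩ {y | max 1 (4 * (B * ω * 6 ^ n)) * l < D y ^ 2},
      D y ^ 2 ≤ ∫ y in Metric.closedBall b (5 * r), 4 * (D y - cv (κ.rho r) D y) ^ 2 := by
    refine le_trans (setIntegral_mono_on ?_ (hd.mono_set Set.inter_subset_left)
      (measurableSet_closedBall.inter hsm) fun y hy => ?_)
      (setIntegral_mono_set hd (Eventually.of_forall fun y => by positivity)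
        (Set.inter_subset_left).eventuallyLE)
    · exact ((hDs.pow 2).continuousOn.integrableOn_compact
        (isCompact_closedBall b (5 * r))).mono_set Set.inter_subset_left
    · have e1 := hm y hy.1
      have e2 : max 1 (4 * (B * ω * 6 ^ n)) * l < D y ^ 2 := hy.2
      have e3 : 4 * (B * ω * 6 ^ n) * l ≤ max 1 (4 * (B * ω * 6 ^ n)) * l :=
        mul_le_mul_of_nonneg_right (le_max_right _ _) hl.le
      have e4 : (2 * cv (κ.rho r) D y) ^ 2 ≤ D y ^ 2 := by nlinarith
      have e5 := sq_le_sq.1 e4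
      have e6 : |D y| ≤ |2 * (D y - cv (κ.rho r) D y)| := by
        have := abs_sub_abs_le_abs_sub (2 * D y) (2 * cv (κ.rho r) D y)
        rw [abs_mul 2 (D y), abs_two] at this
        rw [mul_sub]
        linarith
      have := sq_le_sq.2 e6
      nlinarith
  rw [integral_const_mul] at s1
  have s2 : ∫ y in Metric.closedBall b (14 * r), f y ^ 2 ≤ A⁻¹ * (l * (ω * (14 ^ n * r ^ n))) := by
    calc _ ≤ ∫ y in Metric.closedBall b (14 * r), A⁻¹ * G y :=
          setIntegral_mono ((hfs.pow 2).continuousOn.integrableOn_compact (isCompact_closedBall _ _))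
            ((hGon _).const_mul _) hfG
      _ ≤ _ := by
        rw [integral_const_mul, ← hv 14 (by norm_num)]
        exact mul_le_mul_of_nonneg_left (h2 _ (by linarith)) (by positivity)
  have s3 := half_mass hGc hl b r h1
  have hv1 := hv 1 (by norm_num)
  rw [one_mul, one_pow, one_mul] at hv1
  rw [hv1] at s3
  calc _ ≤ _ := s1
    _ ≤ 4 * (K0 * (A⁻¹ * (l * (ω * (14 ^ n * r ^ n))))) := by
        refine mul_le_mul_of_nonneg_left (hf0.trans ?_) (by norm_num)
        exact mul_le_mul_of_nonneg_left s2 hK0.le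
    _ = 4 * K0 * 14 ^ n / A * (l * (ω * r ^ n)) := by field_simp
    _ ≤ 4 * K0 * 14 ^ n / A * _ := mul_le_mul_of_nonneg_left s3 (by positivity)
    _ = _ := by ring

end czb

/-! ### Calderón–Zygmund inequality: the good-`λ` argument -/

section czc
variable {n : ℕ}

/-- Good-`λ` inequality, obtained by summing `Ker.one_ball` over a Vitali family. -/
lemma Ker.good_lambda (κ : Ker n) (hn : 3 ≤ n) : ∃ K C, 1 ≤ K ∧ 0 < C ∧ ∀ u : Euc n → ℝ,
    ContDiff ℝ (⊤ : ℕ∞) u → HasCompactSupport u → ∀ i j, ∀ A l, 1 ≤ A → 0 < l →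
    ∀ G : Euc n → ℝ, (G = fun x => pd i (pd j u) x ^ 2 + A * lap u x ^ 2) →
    ∫⁻ y in {y | K * l < pd i (pd j u) y ^ 2}, ENNReal.ofReal (pd i (pd j u) y ^ 2) ≤
      ENNReal.ofReal (C / A) * ∫⁻ y in {y | l / 2 < G y}, ENNReal.ofReal (G y) := by
  obtain ⟨K, C, hK, hC, hone⟩ := κ.one_ball hn
  refine ⟨K, C, hK, hC, ?_⟩
  intro u hu huc i j A l hA hl G hG
  have hone' := hone u hu huc i j A l hA hl G hG
  have hDs : Continuous (pd i (pd j u)) := (contDiff_pd (contDiff_pd hu j) i).continuous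
  have hDc : HasCompactSupport (pd i (pd j u)) := (huc.pd' j).pd' i
  have hfs : Continuous (lap u) := (contDiff_lap hu).continuous
  have hfc : HasCompactSupport (lap u) := huc.lap'
  have hGc : Continuous G := by rw [hG]; fun_prop
  have hGcs : HasCompactSupport G := by
    have h1 : HasCompactSupport (fun x => pd i (pd j u) x * pd i (pd j u) x) := hDc.mul_right
    have h2 : HasCompactSupport (fun x => (A * lap u x) * lap u x) := hfc.mul_left
    have h3 : G = (fun x => pd i (pd j u) x * pd i (pd j u) x) +
        (fun x => (A * lap u x) * lap u x) := by
      rw [hG]; funext x; simp only [Pi.add_apply]; ring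
    rw [h3]; exact h1.add h2
  have hA0 : 0 < A := by linarith
  have hDi := integrable_sq_hcs hDs hDc
  clear hone hfc
  generalize pd i (pd j u) = D at *
  generalize lap u = f at *
  have hDG : ∀ x, D x ^ 2 ≤ G x := fun x => by rw [hG]; simp only; nlinarith [sq_nonneg (f x)]
  have hG0 : ∀ x, 0 ≤ G x := fun x => (sq_nonneg _).trans (hDG x)
  have hGi : Integrable G := hGc.integrable_of_hasCompactSupport hGcs
  obtain ⟨R, hR⟩ := good_ball hn hGc hGcs hG0 hl
  choose! r hr0 hrR hr1 hr2 using hR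
  obtain ⟨t, htsub, htd, htc⟩ := Vitali.exists_disjoint_subfamily_covering_enlargement_closedBall
    {x | l < G x} id r R (fun a ha => hrR a ha) 5 (by norm_num)
  simp only [id] at htd htc
  have hcount : t.Countable := htd.countable_of_nonempty_interior fun a ha =>
    ⟨a, by
      rw [interior_closedBall _ (hr0 a (htsub ha)).ne']
      exact Metric.mem_ball_self (hr0 a (htsub ha))⟩
  have hm2 : MeasurableSet {y | l / 2 < G y} := (isOpen_lt continuous_const hGc).measurableSet
  have hcov : {y | K * l < D y ^ 2} ⊆
      ⋃ a ∈ t, (Metric.closedBall a (5 * r a) ∩ {y | K * l < D y ^ 2}) := by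
    intro y hy
    have hy' : K * l < D y ^ 2 := hy
    have hyG : l < G y := by nlinarith [hDG y]
    obtain ⟨a, ha, hsub⟩ := htc y hyG
    simp only [Set.mem_iUnion]
    exact ⟨a, ha, hsub (Metric.mem_closedBall_self (hr0 y hyG).le), hy⟩
  have hball : ∀ a ∈ t, ∫⁻ y in Metric.closedBall a (5 * r a) ∩ {y | K * l < D y ^ 2},
      ENNReal.ofReal (D y ^ 2) ≤ ENNReal.ofReal (C / A) *
        ∫⁻ y in Metric.closedBall a (r a) ∩ {y | l / 2 < G y}, ENNReal.ofReal (G y) := by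
    intro a ha
    have := hone' a (r a) (hr0 a (htsub ha)) (hr1 a (htsub ha)) (hr2 a (htsub ha))
    rw [← ofReal_integral_eq_lintegral_ofReal hDi.integrableOn
      (Eventually.of_forall fun x => sq_nonneg _), ← ofReal_integral_eq_lintegral_ofReal
      hGi.integrableOn (Eventually.of_forall hG0), ← ENNReal.ofReal_mul (by positivity)]
    exact ENNReal.ofReal_le_ofReal this
  have : Countable t := hcount.to_subtype
  calc _ ≤ ∫⁻ y in ⋃ a ∈ t, (Metric.closedBall a (5 * r a) ∩ {y | K * l < D y ^ 2}),
        ENNReal.ofReal (D y ^ 2) := lintegral_mono_set hcov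
    _ ≤ ∑' a : t, ∫⁻ y in Metric.closedBall (a : Euc n) (5 * r a) ∩ {y | K * l < D y ^ 2},
        ENNReal.ofReal (D y ^ 2) := by
        rw [Set.biUnion_eq_iUnion]
        exact lintegral_iUnion_le _ _
    _ ≤ ∑' a : t, ENNReal.ofReal (C / A) *
        ∫⁻ y in Metric.closedBall (a : Euc n) (r a) ∩ {y | l / 2 < G y}, ENNReal.ofReal (G y) :=
        ENNReal.tsum_le_tsum fun a => hball a a.2
    _ = ENNReal.ofReal (C / A) * ∫⁻ y in ⋃ a ∈ t,
        (Metric.closedBall (a : Euc n) (r a) ∩ {y | l / 2 < G y}), ENNReal.ofReal (G y) := by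
        rw [ENNReal.tsum_mul_left, lintegral_biUnion hcount
          (fun a _ => measurableSet_closedBall.inter hm2)
          (htd.mono fun a => Set.inter_subset_left)]
    _ ≤ _ := by
        refine mul_le_mul_right (lintegral_mono_set ?_) _
        exact Set.iUnion₂_subset fun a _ => Set.inter_subset_right

/-- Integrating a good-`λ` inequality against `l^(m-1) dl`. -/
lemma layer_cake {m K c : ℝ} (hm : 0 < m) (hK : 0 < K) (hc : 0 ≤ c) {H G : Euc n → ℝ}
    (hH : Continuous H) (hG : Continuous G) (hH0 : ∀ x, 0 ≤ H x) (hG0 : ∀ x, 0 ≤ G x)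
    (h : ∀ l, 0 < l → ∫⁻ y in {y | K * l < H y}, ENNReal.ofReal (H y) ≤
      ENNReal.ofReal c * ∫⁻ y in {y | l / 2 < G y}, ENNReal.ofReal (G y)) :
    ∫⁻ y, ENNReal.ofReal (H y ^ (m + 1)) ≤
      ENNReal.ofReal (c * (2 * K) ^ m) * ∫⁻ y, ENNReal.ofReal (G y ^ (m + 1)) := by
  have hHm : Measurable fun y => ENNReal.ofReal (H y) := hH.measurable.ennreal_ofReal
  have hGm : Measurable fun y => ENNReal.ofReal (G y) := hG.measurable.ennreal_ofReal
  have key : ∫⁻ y, ENNReal.ofReal ((K⁻¹ * H y) ^ m) ∂(volume.withDensity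
      fun y => ENNReal.ofReal (H y)) ≤ ENNReal.ofReal c * ∫⁻ y, ENNReal.ofReal ((2 * G y) ^ m)
      ∂(volume.withDensity fun y => ENNReal.ofReal (G y)) := by
    rw [lintegral_rpow_eq_lintegral_meas_lt_mul _
        (Eventually.of_forall fun x => mul_nonneg (by positivity) (hH0 x))
        (by fun_prop) hm,
      lintegral_rpow_eq_lintegral_meas_lt_mul _
        (Eventually.of_forall fun x => mul_nonneg (by positivity) (hG0 x))
        (by fun_prop) hm, mul_left_comm,
      ← lintegral_const_mul' (ENNReal.ofReal c) _ ENNReal.ofReal_ne_top]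
    · refine mul_le_mul_right (setLIntegral_mono' measurableSet_Ioi fun t ht => ?_) _
      rw [← mul_assoc]
      refine mul_le_mul_left ?_ _
      have e1 : {a | t < K⁻¹ * H a} = {y | K * t < H y} := by
        ext y; simp only [Set.mem_ofPred_eq]; rw [inv_mul_eq_div, lt_div_iff₀' hK]
      have e2 : {a | t < 2 * G a} = {y | t / 2 < G y} := by
        ext y; simp only [Set.mem_ofPred_eq]; rw [div_lt_iff₀' two_pos]
      have m1 : MeasurableSet {y | K * t < H y} := (isOpen_lt continuous_const hH).measurableSet
      have m2 : MeasurableSet {y | t / 2 < G y} := (isOpen_lt continuous_const hG).measurableSet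
      rw [e1, e2, withDensity_apply _ m1, withDensity_apply _ m2]
      exact h t ht
  rw [lintegral_withDensity_eq_lintegral_mul _ hHm (by fun_prop),
    lintegral_withDensity_eq_lintegral_mul _ hGm (by fun_prop)] at key
  have r1 : ∀ y, ENNReal.ofReal (H y) * ENNReal.ofReal ((K⁻¹ * H y) ^ m) =
      ENNReal.ofReal (K ^ (-m)) * ENNReal.ofReal (H y ^ (m + 1)) := fun y => by
    rw [← ENNReal.ofReal_mul (hH0 y), ← ENNReal.ofReal_mul (by positivity)]
    congr 1
    rw [Real.mul_rpow (by positivity) (hH0 y), Real.rpow_add_one' (hH0 y) (by linarith),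
      Real.inv_rpow hK.le, Real.rpow_neg hK.le]
    ring
  have r2 : ∀ y, ENNReal.ofReal (G y) * ENNReal.ofReal ((2 * G y) ^ m) =
      ENNReal.ofReal (2 ^ m) * ENNReal.ofReal (G y ^ (m + 1)) := fun y => by
    rw [← ENNReal.ofReal_mul (hG0 y), ← ENNReal.ofReal_mul (by positivity)]
    congr 1
    rw [Real.mul_rpow (by positivity) (hG0 y), Real.rpow_add_one' (hG0 y) (by linarith)]
    ring
  simp only [Pi.mul_apply, r1, r2] at key
  rw [lintegral_const_mul' _ _ ENNReal.ofReal_ne_top,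
    lintegral_const_mul' _ _ ENNReal.ofReal_ne_top] at key
  have k2 := mul_le_mul_right key (ENNReal.ofReal (K ^ m))
  rw [← mul_assoc, ← ENNReal.ofReal_mul (by positivity), ← Real.rpow_add hK, add_neg_cancel,
    Real.rpow_zero, ENNReal.ofReal_one, one_mul, ← mul_assoc, ← mul_assoc,
    ← ENNReal.ofReal_mul (by positivity), ← ENNReal.ofReal_mul (by positivity)] at k2
  convert k2 using 3
  rw [Real.mul_rpow two_pos.le hK.le]; ring

lemma add_rpow_le_two {a b q : ℝ} (ha : 0 ≤ a) (hb : 0 ≤ b) (hq : 0 ≤ q) :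
    (a + b) ^ q ≤ 2 ^ q * (a ^ q + b ^ q) := by
  rcases le_total a b with hab | hab
  · calc _ ≤ (2 * b) ^ q := Real.rpow_le_rpow (by positivity) (by linarith) hq
      _ = 2 ^ q * b ^ q := Real.mul_rpow two_pos.le hb
      _ ≤ _ := mul_le_mul_of_nonneg_left (by linarith [Real.rpow_nonneg ha q]) (by positivity)
  · calc _ ≤ (2 * a) ^ q := Real.rpow_le_rpow (by positivity) (by linarith) hq
      _ = 2 ^ q * a ^ q := Real.mul_rpow two_pos.le ha
      _ ≤ _ := mul_le_mul_of_nonneg_left (by linarith [Real.rpow_nonneg hb q]) (by positivity)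

/-- The Calderón–Zygmund inequality for the Laplacian, in the range `p > 2`, from the good-`λ`
inequality with exponent `m + 1 = p / 2`. -/
lemma Ker.calderon_zygmund (κ : Ker n) (hn : 3 ≤ n) {p : ℝ} (hp : 2 < p) :
    ∃ C, 0 ≤ C ∧ ∀ u : Euc n → ℝ, ContDiff ℝ (⊤ : ℕ∞) u → HasCompactSupport u → ∀ i j,
    ∫⁻ x, ENNReal.ofReal (|pd i (pd j u) x| ^ p) ≤
      ENNReal.ofReal C * ∫⁻ x, ENNReal.ofReal (|lap u x| ^ p) := by
  obtain ⟨K, C, hK, hC, hgl⟩ := κ.good_lambda hn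
  obtain ⟨m, hm⟩ : ∃ m, m = p / 2 - 1 := ⟨_, rfl⟩
  have hm0 : 0 < m := by linarith
  have hK0 : 0 < K := by linarith
  obtain ⟨K4, hK4⟩ : ∃ K4, K4 = C * (2 * K) ^ m * 2 ^ (m + 1) := ⟨_, rfl⟩
  have hK40 : 0 < K4 := by rw [hK4]; positivity
  -- `A ≥ 2 K4` gives the Hessian on the right-hand side the coefficient `K4 / A ≤ 1 / 2`; its norm
  -- is finite by compact support, so it can be absorbed
  obtain ⟨A, hA⟩ : ∃ A, A = max 1 (2 * K4) := ⟨_, rfl⟩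
  have hA1 : 1 ≤ A := hA ▸ le_max_left _ _
  have hA2 : 2 * K4 ≤ A := hA ▸ le_max_right _ _
  have hA0 : 0 < A := by linarith
  refine ⟨2 * (K4 / A * A ^ (m + 1)), by positivity, fun u hu huc i j => ?_⟩
  have h1 := hgl u hu huc i j A
  have hDs : Continuous (pd i (pd j u)) := (contDiff_pd (contDiff_pd hu j) i).continuous
  have hDc : HasCompactSupport (pd i (pd j u)) := (huc.pd' j).pd' i
  have hfs : Continuous (lap u) := (contDiff_lap hu).continuous
  clear hgl
  generalize pd i (pd j u) = D at *
  generalize lap u = f at *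
  have hp0 : 0 < p := by linarith
  have h2 := layer_cake (m := m) (K := K) (c := C / A) hm0 hK0 (by positivity)
    (H := fun x => D x ^ 2) (G := fun x => D x ^ 2 + A * f x ^ 2) (by fun_prop) (by fun_prop)
    (fun x => sq_nonneg _) (fun x => by positivity)
    (fun l hl => h1 l hA1 hl _ rfl)
  have e : ∀ a : ℝ, (a ^ 2) ^ (m + 1) = |a| ^ p := fun a => by
    rw [← sq_abs, ← Real.rpow_natCast, ← Real.rpow_mul (abs_nonneg a), hm]
    congr 1
    push_cast
    ring
  have hG : ∀ x, ENNReal.ofReal ((D x ^ 2 + A * f x ^ 2) ^ (m + 1)) ≤ ENNReal.ofReal (2 ^ (m + 1)) *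
      (ENNReal.ofReal (|D x| ^ p) + ENNReal.ofReal (A ^ (m + 1)) * ENNReal.ofReal (|f x| ^ p)) := by
    intro x
    rw [← ENNReal.ofReal_mul (by positivity), ← ENNReal.ofReal_add (by positivity) (by positivity),
      ← ENNReal.ofReal_mul (by positivity)]
    refine ENNReal.ofReal_le_ofReal ?_
    rw [← e, ← e, ← Real.mul_rpow hA0.le (sq_nonneg _)]
    have ha := sq_nonneg (D x)
    have hb : 0 ≤ A * f x ^ 2 := by positivity
    exact add_rpow_le_two ha hb (by linarith)
  simp only [e] at h2
  have hfin : ∫⁻ x, ENNReal.ofReal (|D x| ^ p) < ⊤ := by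
    have hc : Continuous fun x => |D x| ^ p := hDs.abs.rpow_const fun x => Or.inr hp0.le
    have hcs : HasCompactSupport fun x => |D x| ^ p := by
      refine hDc.mono fun x hx => ?_
      rw [Function.mem_support] at hx ⊢
      intro h0
      apply hx
      rw [h0, abs_zero, Real.zero_rpow hp0.ne']
    have hi : Integrable fun x => |D x| ^ p := hc.integrable_of_hasCompactSupport hcs
    rw [← ofReal_integral_eq_lintegral_ofReal hi (Eventually.of_forall fun x => by positivity)]
    exact ENNReal.ofReal_lt_top
  obtain ⟨Y, hY⟩ : ∃ Y, ∫⁻ x, ENNReal.ofReal (|f x| ^ p) = Y := ⟨_, rfl⟩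
  have h3 : ∫⁻ y, ENNReal.ofReal (|D y| ^ p) ≤ ENNReal.ofReal (K4 / A) *
      ((∫⁻ y, ENNReal.ofReal (|D y| ^ p)) + ENNReal.ofReal (A ^ (m + 1)) * Y) := by
    refine h2.trans ?_
    refine (mul_le_mul_right (lintegral_mono hG) _).trans ?_
    have hDm : Measurable fun x => ENNReal.ofReal (|D x| ^ p) :=
      (hDs.abs.rpow_const fun x => Or.inr hp0.le).measurable.ennreal_ofReal
    rw [lintegral_const_mul' _ _ ENNReal.ofReal_ne_top, lintegral_add_left hDm,
      lintegral_const_mul' _ _ ENNReal.ofReal_ne_top, hY, ← mul_assoc,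
      ← ENNReal.ofReal_mul (by positivity)]
    refine mul_le_mul_left (ENNReal.ofReal_le_ofReal (le_of_eq ?_)) _
    rw [hK4]; ring
  rw [hY]
  generalize ∫⁻ y, ENNReal.ofReal (|D y| ^ p) = X at *
  rcases eq_or_ne Y ⊤ with hYt | hYt
  · rw [hYt, ENNReal.mul_top]
    · exact le_top
    · exact (ENNReal.ofReal_pos.2 (by positivity)).ne'
  lift X to NNReal using hfin.ne
  lift Y to NNReal using hYt
  have h4 : (X : ℝ) ≤ K4 / A * (X + A ^ (m + 1) * Y) := by
    have := ENNReal.toReal_mono (ENNReal.mul_ne_top ENNReal.ofReal_ne_top (ENNReal.add_ne_top.2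
      ⟨ENNReal.coe_ne_top, ENNReal.mul_ne_top ENNReal.ofReal_ne_top ENNReal.coe_ne_top⟩)) h3
    rw [ENNReal.toReal_mul, ENNReal.toReal_add ENNReal.coe_ne_top
      (ENNReal.mul_ne_top ENNReal.ofReal_ne_top ENNReal.coe_ne_top), ENNReal.toReal_mul,
      ENNReal.toReal_ofReal (by positivity), ENNReal.toReal_ofReal (by positivity)] at this
    simpa using this
  have h5 : K4 / A ≤ 1 / 2 := by rw [div_le_iff₀ hA0]; linarith
  have h6 : (X : ℝ) ≤ 2 * (K4 / A * A ^ (m + 1)) * Y := by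
    have : K4 / A * X ≤ 1 / 2 * (X : ℝ) := mul_le_mul_of_nonneg_right h5 X.2
    nlinarith
  rw [← ENNReal.ofReal_coe_nnreal, ← ENNReal.ofReal_coe_nnreal, ← ENNReal.ofReal_mul (by positivity)]
  exact ENNReal.ofReal_le_ofReal h6

end czc

/-! ### Symbol bounds for the weights -/

section wcz
variable {n : ℕ}

lemma jap_rpow_eq (a : ℝ) (x : Euc n) : jap x ^ a = (1 + ‖x‖ ^ 2) ^ (a / 2) := by
  unfold jap
  rw [Real.sqrt_eq_rpow, ← Real.rpow_mul (by positivity)]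
  congr 1; ring

lemma jap_rpow_contDiff (a : ℝ) : ContDiff ℝ (⊤ : ℕ∞) (fun x : Euc n => jap x ^ a) := by
  simp only [jap_rpow_eq]
  refine ContDiff.rpow_const_of_ne ?_ fun x => by positivity
  exact contDiff_const.add (contDiff_norm_sq ℝ)

lemma pd_jap_rpow (a : ℝ) (i : Fin n) :
    pd i (fun x : Euc n => jap x ^ a) = fun x => a * (x i * jap x ^ (a - 2)) := by
  funext x; unfold pd
  have h0 : HasDerivAt (fun t : ℝ => (1 + t) ^ (a / 2))
      (1 * (a / 2) * (1 + ‖x‖ ^ 2) ^ (a / 2 - 1)) (‖x‖ ^ 2) :=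
    ((hasDerivAt_id _).const_add 1).rpow_const (Or.inl (by positivity))
  have h := h0.comp_hasFDerivAt x ((hasStrictFDerivAt_norm_sq x).hasFDerivAt)
  have h' : HasFDerivAt (fun x : Euc n => (1 + ‖x‖ ^ 2) ^ (a / 2)) _ x := h
  simp only [jap_rpow_eq]
  rw [h'.fderiv]
  simp [EuclideanSpace.inner_single_right]
  rw [show (a - 2) / 2 = a / 2 - 1 by ring]
  ring

lemma abs_coord_le (x : Euc n) (i : Fin n) : |x i| ≤ jap x := by
  have h : ‖x i‖ ≤ ‖x‖ := PiLp.norm_apply_le x i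
  rw [Real.norm_eq_abs] at h
  exact h.trans (norm_le_jap x)

lemma abs_pd_coord_le (i j : Fin n) (x : Euc n) : |pd i (fun x : Euc n => x j) x| ≤ 1 := by
  unfold pd
  have h : HasFDerivAt (fun x : Euc n => x j) (EuclideanSpace.proj j : Euc n →L[ℝ] ℝ) x :=
    (EuclideanSpace.proj j : Euc n →L[ℝ] ℝ).hasFDerivAt
  rw [h.fderiv]
  by_cases hij : i = j
  · subst hij; simp
  · simp [Ne.symm hij]

lemma jap_rpow_sub_one (a : ℝ) (x : Euc n) : jap x * jap x ^ (a - 2) = jap x ^ (a - 1) := by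
  have h := jap_pos x
  rw [show a - 1 = (a - 2) + 1 by ring, Real.rpow_add_one h.ne', mul_comm]

lemma jap_bound1 (a : ℝ) (i : Fin n) (x : Euc n) :
    |pd i (fun x : Euc n => jap x ^ a) x| ≤ |a| * jap x ^ (a - 1) := by
  have h0 := jap_pos x
  rw [pd_jap_rpow]
  simp only
  rw [abs_mul, abs_mul, abs_of_pos (Real.rpow_pos_of_pos h0 _), ← jap_rpow_sub_one a x]
  exact mul_le_mul_of_nonneg_left (mul_le_mul_of_nonneg_right (abs_coord_le x i)
    (Real.rpow_nonneg h0.le _)) (abs_nonneg _)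

lemma jap_bound2 (a : ℝ) (i j : Fin n) (x : Euc n) :
    |pd i (pd j (fun x : Euc n => jap x ^ a)) x| ≤ |a| * (1 + |a - 2|) * jap x ^ (a - 2) := by
  have h0 := jap_pos x
  have hd := (jap_rpow_contDiff (n := n) (a - 2)).diff'
  have hc := (contDiff_coord (n := n) j).diff'
  rw [pd_jap_rpow, pd_const_mul (f := fun x : Euc n => x j * jap x ^ (a - 2)) a (hc.mul hd) i,
    pd_mul hc hd i]
  simp only
  rw [abs_mul, mul_assoc]
  refine mul_le_mul_of_nonneg_left ?_ (abs_nonneg _)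
  have b1 := abs_pd_coord_le i j x
  have b2 := jap_bound1 (a - 2) i x
  have b3 := abs_coord_le x j
  have hp := Real.rpow_pos_of_pos h0 (a - 2)
  have e : jap x * jap x ^ (a - 2 - 1) = jap x ^ (a - 2) := by
    rw [Real.rpow_sub_one h0.ne']; field_simp
  calc _ ≤ |pd i (fun x : Euc n => x j) x| * jap x ^ (a - 2) +
        |x j| * |pd i (fun x : Euc n => jap x ^ (a - 2)) x| := by
        refine (abs_add_le _ _).trans (le_of_eq ?_)
        rw [abs_mul, abs_mul, abs_of_pos hp]
    _ ≤ 1 * jap x ^ (a - 2) + jap x * (|a - 2| * jap x ^ (a - 2 - 1)) := by gcongr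
    _ = _ := by rw [← e]; ring

lemma exists_bound_hcs {φ : Euc n → ℝ} (h : Continuous φ) (hc : HasCompactSupport φ) :
    ∃ M, 0 ≤ M ∧ ∀ x, |φ x| ≤ M := by
  obtain ⟨M, hM⟩ := hc.exists_bound_of_continuous h
  exact ⟨M, (norm_nonneg _).trans (hM 0), hM⟩

/-- The cut-offs at scale `R ≥ 1` satisfy symbol-type bounds uniformly in `R`. -/
lemma cut_bounds : ∃ M, 0 ≤ M ∧ ∀ R, 1 ≤ R → ∀ (i j : Fin n) (x : Euc n),
    |pd i (cut R) x| ≤ M * jap x ^ (-1 : ℝ) ∧ |pd i (pd j (cut R)) x| ≤ M * jap x ^ (-2 : ℝ) := by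
  have hs := cut_contDiff (n := n) 1
  have hc := cut_hcs (n := n) one_pos
  choose M1 hM10 hM1 using fun i : Fin n =>
    exists_bound_hcs (contDiff_pd hs i).continuous (hc.pd' i)
  choose M2 hM20 hM2 using fun i : Fin n => fun j : Fin n =>
    exists_bound_hcs (contDiff_pd (contDiff_pd hs j) i).continuous ((hc.pd' j).pd' i)
  have hT : 0 ≤ 3 * ∑ i, M1 i + 9 * ∑ i, ∑ j, M2 i j := by
    have := Finset.sum_nonneg fun i (_ : i ∈ Finset.univ) => hM10 i
    have := Finset.sum_nonneg fun i (_ : i ∈ Finset.univ) =>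
      Finset.sum_nonneg fun j (_ : j ∈ Finset.univ) => hM20 i j
    positivity
  refine ⟨3 * ∑ i, M1 i + 9 * ∑ i, ∑ j, M2 i j, hT, ?_⟩
  intro R hR i j x
  have hR0 : 0 < R := by linarith
  have hj := jap_pos x
  have s1 : M1 i ≤ ∑ i, M1 i := Finset.single_le_sum (fun i _ => hM10 i) (Finset.mem_univ i)
  have s2 : M2 i j ≤ ∑ i, ∑ j, M2 i j :=
    (Finset.single_le_sum (fun j _ => hM20 i j) (Finset.mem_univ j)).trans
      (Finset.single_le_sum (f := fun i => ∑ j, M2 i j)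
        (fun i _ => Finset.sum_nonneg fun j _ => hM20 i j) (Finset.mem_univ i))
  have hMM1 := hM10 i
  have hMM2 := hM20 i j
  have e0 : (cut R : Euc n → ℝ) = fun x => cut 1 (R⁻¹ • x) := funext fun x => cut_smul x
  have e1 : ∀ j, pd j (cut R : Euc n → ℝ) = fun x => R⁻¹ * pd j (cut 1) (R⁻¹ • x) := fun j => by
    rw [e0, pd_smul_arg _ hs.diff']
  have e2 : pd i (pd j (cut R : Euc n → ℝ)) =
      fun x => R⁻¹ * (R⁻¹ * pd i (pd j (cut 1)) (R⁻¹ • x)) := by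
    rw [e1, pd_const_mul (f := fun x => pd j (cut 1) (R⁻¹ • x)) _
      ((contDiff_pd hs j).diff'.comp (by fun_prop)), pd_smul_arg _ (contDiff_pd hs j).diff']
  rcases lt_or_ge (2 * R) ‖x‖ with hx | hx
  · have hz : (cut R : Euc n → ℝ) =ᶠ[𝓝 x] fun _ => 0 := by
      filter_upwards [(isOpen_lt continuous_const continuous_norm).mem_nhds hx] with y hy
      exact cut_zero hR0 (le_of_lt hy)
    have z : ∀ i, pd i (fun _ : Euc n => (0 : ℝ)) = fun _ => 0 := fun i => by
      funext y; simp [pd]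
    rw [pd_congr hz i, pd_congr (pd_congr_ev hz j) i]
    simp only [z, abs_zero]
    exact ⟨mul_nonneg hT (Real.rpow_nonneg hj.le _), mul_nonneg hT (Real.rpow_nonneg hj.le _)⟩
  · have hRj : R⁻¹ ≤ 3 * (jap x)⁻¹ := by
      rw [← div_eq_mul_inv, le_div_iff₀ hj, inv_mul_le_iff₀ hR0]
      have := jap_le x
      linarith
    have hRi : 0 < R⁻¹ := by positivity
    rw [e1, e2]
    simp only
    have q1 := hM1 i (R⁻¹ • x)
    have q2 := hM2 i j (R⁻¹ • x)
    have hSS1 : 0 ≤ ∑ i, M1 i := hMM1.trans s1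
    have hSS2 : 0 ≤ ∑ i, ∑ j, M2 i j := hMM2.trans s2
    rw [abs_mul, abs_mul, abs_mul, abs_of_pos hRi, Real.rpow_neg_one,
      Real.rpow_neg hj.le, Real.rpow_two, ← inv_pow]
    have hji : 0 < (jap x)⁻¹ := by positivity
    generalize (jap x)⁻¹ = J at *
    generalize R⁻¹ = r at *
    constructor
    · calc r * |pd i (cut 1) (r • x)| ≤ (3 * J) * M1 i := by gcongr
        _ ≤ (3 * J) * ∑ i, M1 i := by gcongr
        _ ≤ _ := by nlinarith [mul_nonneg hSS2 hji.le]
    · calc r * (r * |pd i (pd j (cut 1)) (r • x)|) ≤ (3 * J) * ((3 * J) * M2 i j) := by gcongr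
        _ ≤ (3 * J) * ((3 * J) * ∑ i, ∑ j, M2 i j) := by gcongr
        _ ≤ _ := by nlinarith [mul_nonneg hSS1 (sq_nonneg J)]

/-- Symbol bounds for the truncated weight, uniform in the truncation radius. -/
lemma weight_bounds (a : ℝ) : ∃ M, 0 ≤ M ∧ ∀ R, 1 ≤ R → ∀ (i j : Fin n) (x : Euc n),
    |pd i (fun x => cut R x * jap x ^ a) x| ≤ M * jap x ^ (a - 1) ∧
    |pd i (pd j (fun x => cut R x * jap x ^ a)) x| ≤ M * jap x ^ (a - 2) := by
  obtain ⟨M, hM0, hM⟩ := cut_bounds (n := n)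
  refine ⟨M + |a| + (M + M * |a| + M * |a| + |a| * (1 + |a - 2|)), by positivity, ?_⟩
  intro R hR i j x
  have hc := cut_contDiff (n := n) R
  have hw := jap_rpow_contDiff (n := n) a
  have hj := jap_pos x
  have c0 := cut_nonneg R x
  have c1 := cut_le_one R x
  have c0' : |cut R x| ≤ 1 := by rwa [abs_of_nonneg c0]
  have w0 : |jap x ^ a| ≤ jap x ^ a := (abs_of_pos (Real.rpow_pos_of_pos hj a)).le
  have t1 : jap x ^ (-1 : ℝ) * jap x ^ a = jap x ^ (a - 1) := by
    rw [← Real.rpow_add hj]; congr 1; ring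
  have t2 : jap x ^ (-2 : ℝ) * jap x ^ a = jap x ^ (a - 2) := by
    rw [← Real.rpow_add hj]; congr 1; ring
  have t3 : jap x ^ (-1 : ℝ) * jap x ^ (a - 1) = jap x ^ (a - 2) := by
    rw [← Real.rpow_add hj]; congr 1; ring
  have p1 := Real.rpow_pos_of_pos hj (a - 1)
  have p2 := Real.rpow_pos_of_pos hj (a - 2)
  have q1 := Real.rpow_pos_of_pos hj (-1)
  have q2 := Real.rpow_pos_of_pos hj (-2)
  have q3 := Real.rpow_pos_of_pos hj a
  have e1 : ∀ j, pd j (fun x : Euc n => cut R x * jap x ^ a) = fun x =>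
      pd j (cut R) x * jap x ^ a + cut R x * pd j (fun x => jap x ^ a) x :=
    fun j => pd_mul hc.diff' hw.diff' j
  have e2 : pd i (pd j (fun x : Euc n => cut R x * jap x ^ a)) x =
      (pd i (pd j (cut R)) x * jap x ^ a + pd j (cut R) x * pd i (fun x => jap x ^ a) x) +
      (pd i (cut R) x * pd j (fun x => jap x ^ a) x +
        cut R x * pd i (pd j (fun x => jap x ^ a)) x) := by
    have hcj := contDiff_pd hc j
    have hwj := contDiff_pd hw j
    rw [e1, pd_add (f := fun x => pd j (cut R) x * jap x ^ a) (hcj.mul hw).diff'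
      (hc.mul hwj).diff', pd_mul hcj.diff' hw.diff', pd_mul hc.diff' hwj.diff']
  obtain ⟨A1, A2⟩ := hM R hR i j x
  obtain ⟨A1', _⟩ := hM R hR j j x
  have B1 := jap_bound1 a i x
  have B1' := jap_bound1 a j x
  have B2 := jap_bound2 a i j x
  constructor
  · rw [e1]
    simp only
    refine (abs_add_le _ _).trans ?_
    rw [abs_mul, abs_mul]
    calc _ ≤ (M * jap x ^ (-1 : ℝ)) * jap x ^ a + 1 * (|a| * jap x ^ (a - 1)) := by gcongr
      _ = (M + |a|) * jap x ^ (a - 1) := by rw [← t1]; ring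
      _ ≤ _ := by
        refine mul_le_mul_of_nonneg_right (le_add_of_nonneg_right (by positivity)) p1.le
  · rw [e2]
    refine (abs_add_le _ _).trans ((add_le_add (abs_add_le _ _) (abs_add_le _ _)).trans ?_)
    simp only [abs_mul]
    calc _ ≤ ((M * jap x ^ (-2 : ℝ)) * jap x ^ a + (M * jap x ^ (-1 : ℝ)) * (|a| * jap x ^ (a - 1)))
          + ((M * jap x ^ (-1 : ℝ)) * (|a| * jap x ^ (a - 1)) +
            1 * (|a| * (1 + |a - 2|) * jap x ^ (a - 2))) := by gcongr
      _ = M * (jap x ^ (-2 : ℝ) * jap x ^ a) + M * |a| * (jap x ^ (-1 : ℝ) * jap x ^ (a - 1))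
          + M * |a| * (jap x ^ (-1 : ℝ) * jap x ^ (a - 1)) +
            |a| * (1 + |a - 2|) * jap x ^ (a - 2) := by ring
      _ = (M + M * |a| + M * |a| + |a| * (1 + |a - 2|)) * jap x ^ (a - 2) := by
          rw [t2, t3]; ring
      _ ≤ _ := mul_le_mul_of_nonneg_right (le_add_of_nonneg_left (by positivity)) p2.le

end wcz

/-! ### Weighted Calderón–Zygmund estimate -/

section wczb
variable {n : ℕ}

lemma Lp_fin_mono {p : ℝ} (hp : 0 ≤ p) {g h : Euc n → ℝ} (h0 : ∀ x, |h x| ≤ |g x|)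
    (hg : ∫⁻ x, ENNReal.ofReal (|g x| ^ p) < ⊤) : ∫⁻ x, ENNReal.ofReal (|h x| ^ p) < ⊤ :=
  lt_of_le_of_lt (lintegral_mono fun x => ENNReal.ofReal_le_ofReal
    (Real.rpow_le_rpow (abs_nonneg _) (h0 x) hp)) hg

lemma Lp_add_le {p : ℝ} (hp : 0 ≤ p) {g h : Euc n → ℝ} (hg : Continuous g) :
    ∫⁻ x, ENNReal.ofReal (|g x + h x| ^ p) ≤ ENNReal.ofReal (2 ^ p) *
      ((∫⁻ x, ENNReal.ofReal (|g x| ^ p)) + ∫⁻ x, ENNReal.ofReal (|h x| ^ p)) := by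
  have hgm : Measurable fun x => ENNReal.ofReal (|g x| ^ p) :=
    (hg.abs.rpow_const fun x => Or.inr hp).measurable.ennreal_ofReal
  rw [← lintegral_add_left hgm, ← lintegral_const_mul' _ _ ENNReal.ofReal_ne_top]
  refine lintegral_mono fun x => ?_
  rw [← ENNReal.ofReal_add (by positivity) (by positivity), ← ENNReal.ofReal_mul (by positivity)]
  refine ENNReal.ofReal_le_ofReal ?_
  exact (Real.rpow_le_rpow (abs_nonneg _) (abs_add_le _ _) hp).trans
    (add_rpow_le_two (abs_nonneg _) (abs_nonneg _) hp)

lemma Lp_fin_add {p : ℝ} (hp : 0 ≤ p) {g h : Euc n → ℝ} (hgc : Continuous g)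
    (hg : ∫⁻ x, ENNReal.ofReal (|g x| ^ p) < ⊤) (hh : ∫⁻ x, ENNReal.ofReal (|h x| ^ p) < ⊤) :
    ∫⁻ x, ENNReal.ofReal (|g x + h x| ^ p) < ⊤ :=
  (Lp_add_le hp hgc).trans_lt (ENNReal.mul_lt_top ENNReal.ofReal_lt_top
    (ENNReal.add_lt_top.2 ⟨hg, hh⟩))

lemma Lp_fin_sum {p : ℝ} (hp : 0 < p) {ι : Type*} (s : Finset ι) {g : ι → Euc n → ℝ}
    (hgc : ∀ i, Continuous (g i)) (hg : ∀ i, ∫⁻ x, ENNReal.ofReal (|g i x| ^ p) < ⊤) :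
    ∫⁻ x, ENNReal.ofReal (|∑ i ∈ s, g i x| ^ p) < ⊤ := by
  classical
  induction s using Finset.induction_on with
  | empty => simp [Real.zero_rpow hp.ne']
  | insert i s hi ih =>
    simp only [Finset.sum_insert hi]
    exact Lp_fin_add hp.le (hgc i) (hg i) ih

lemma Lp_const_mul {p : ℝ} (c : ℝ) (g : Euc n → ℝ) :
    ∫⁻ x, ENNReal.ofReal (|c * g x| ^ p) =
      ENNReal.ofReal (|c| ^ p) * ∫⁻ x, ENNReal.ofReal (|g x| ^ p) := by
  rw [← lintegral_const_mul' _ _ ENNReal.ofReal_ne_top]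
  refine lintegral_congr fun x => ?_
  rw [← ENNReal.ofReal_mul (by positivity), abs_mul, Real.mul_rpow (abs_nonneg _) (abs_nonneg _)]

lemma wt_eq (p a : ℝ) (g : Euc n → ℝ) :
    wt p a g = ∫⁻ x, ENNReal.ofReal (|jap x ^ a * (|g x|)| ^ p) := by
  unfold wt
  refine lintegral_congr fun x => ?_
  rw [abs_of_nonneg (mul_nonneg (Real.rpow_nonneg (jap_pos x).le _) (abs_nonneg _))]

/-- Pointwise Leibniz bounds for the product of `v` with a truncated weight. -/
lemma leibniz_bounds (a : ℝ) : ∃ M, 0 ≤ M ∧ ∀ v : Euc n → ℝ, ContDiff ℝ (⊤ : ℕ∞) v →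
    ∀ R, 1 ≤ R → ∀ (i j : Fin n) (x : Euc n),
    |lap (fun x => (cut R x * jap x ^ a) * v x) x| ≤ M * (jap x ^ a * |lap v x| +
      (∑ k, jap x ^ (a - 1) * |pd k v x| + jap x ^ (a - 2) * |v x|)) ∧
    |(cut R x * jap x ^ a) * pd i (pd j v) x - pd i (pd j
      (fun x => (cut R x * jap x ^ a) * v x)) x| ≤ M * (jap x ^ a * |lap v x| +
      (∑ k, jap x ^ (a - 1) * |pd k v x| + jap x ^ (a - 2) * |v x|)) := by
  obtain ⟨M, hM0, hM⟩ := weight_bounds (n := n) a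
  refine ⟨1 + 2 * M + n * M, by positivity, fun v hv R hR i j x => ?_⟩
  have hj := jap_pos x
  have hWs : ContDiff ℝ (⊤ : ℕ∞) (fun x : Euc n => cut R x * jap x ^ a) :=
    (cut_contDiff R).mul (jap_rpow_contDiff a)
  have hW0 : |cut R x * jap x ^ a| ≤ jap x ^ a := by
    rw [abs_of_nonneg (mul_nonneg (cut_nonneg R x) (Real.rpow_nonneg hj.le _))]
    exact mul_le_of_le_one_left (Real.rpow_nonneg hj.le _) (cut_le_one R x)
  have hW := hM R hR
  rw [lap_mul hWs hv]
  have hWij : pd i (pd j (fun x => (cut R x * jap x ^ a) * v x)) x =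
      (pd i (pd j (fun x => cut R x * jap x ^ a)) x * v x +
        pd j (fun x => cut R x * jap x ^ a) x * pd i v x) +
      (pd i (fun x => cut R x * jap x ^ a) x * pd j v x +
        (cut R x * jap x ^ a) * pd i (pd j v) x) := by
    have hWj := contDiff_pd hWs j
    have hvj := contDiff_pd hv j
    rw [pd_mul hWs.diff' hv.diff', pd_add (hWj.mul hv).diff' (hWs.mul hvj).diff',
      pd_mul hWj.diff' hv.diff', pd_mul hWs.diff' hvj.diff']
  rw [hWij]
  have hlapW : |lap (fun x : Euc n => cut R x * jap x ^ a) x| ≤ n * M * jap x ^ (a - 2) := by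
    unfold lap
    refine (Finset.abs_sum_le_sum_abs _ _).trans ((Finset.sum_le_sum
      fun k _ => (hW k k x).2).trans (le_of_eq ?_))
    simp; ring
  have g1 := fun k => (hW k k x).1
  have g2 := (hW i j x).2
  clear hWij hW hM
  generalize (fun x : Euc n => cut R x * jap x ^ a) = W at *
  have p0 := Real.rpow_pos_of_pos hj a
  have p1 := Real.rpow_pos_of_pos hj (a - 1)
  have p2 := Real.rpow_pos_of_pos hj (a - 2)
  have hL : 0 ≤ jap x ^ a * |lap v x| := by positivity
  have hS : 0 ≤ ∑ k, jap x ^ (a - 1) * |pd k v x| := Finset.sum_nonneg fun k _ => by positivity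
  have hV : 0 ≤ jap x ^ (a - 2) * |v x| := by positivity
  have hSk : ∀ k, jap x ^ (a - 1) * |pd k v x| ≤ ∑ k, jap x ^ (a - 1) * |pd k v x| := fun k =>
    Finset.single_le_sum (f := fun k => jap x ^ (a - 1) * |pd k v x|)
      (fun k _ => by positivity) (Finset.mem_univ k)
  have hSM : |∑ k, pd k W x * pd k v x| ≤ M * ∑ k, jap x ^ (a - 1) * |pd k v x| := by
    refine (Finset.abs_sum_le_sum_abs _ _).trans ?_
    rw [Finset.mul_sum]
    refine Finset.sum_le_sum fun k _ => ?_
    rw [abs_mul, ← mul_assoc]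
    exact mul_le_mul_of_nonneg_right (g1 k) (abs_nonneg _)
  have h2 : |pd i (pd j W) x * v x| ≤ M * (jap x ^ (a - 2) * |v x|) := by
    rw [abs_mul, ← mul_assoc]; exact mul_le_mul_of_nonneg_right g2 (abs_nonneg _)
  have h3 : ∀ k l, |pd k W x * pd l v x| ≤ M * ∑ k, jap x ^ (a - 1) * |pd k v x| := fun k l => by
    refine le_trans ?_ (mul_le_mul_of_nonneg_left (hSk l) hM0)
    rw [abs_mul, ← mul_assoc]; exact mul_le_mul_of_nonneg_right (g1 k) (abs_nonneg _)
  have h4 : |lap W x * v x| ≤ n * M * (jap x ^ (a - 2) * |v x|) := by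
    rw [abs_mul, ← mul_assoc]; exact mul_le_mul_of_nonneg_right hlapW (abs_nonneg _)
  have hnM : 0 ≤ (n : ℝ) * M := by positivity
  generalize ∑ k, jap x ^ (a - 1) * |pd k v x| = S at *
  constructor
  · have h5 : |cut R x * jap x ^ a * lap v x| ≤ jap x ^ a * |lap v x| := by
      rw [abs_mul]; exact mul_le_mul_of_nonneg_right hW0 (abs_nonneg _)
    refine (abs_add_le _ _).trans ?_
    have h6 := abs_add_le (cut R x * jap x ^ a * lap v x) (2 * ∑ i, pd i W x * pd i v x)
    rw [abs_mul 2, abs_two] at h6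
    generalize jap x ^ a * |lap v x| = L at *
    generalize jap x ^ (a - 2) * |v x| = V at *
    nlinarith [mul_nonneg hM0 hL, mul_nonneg hM0 hS, mul_nonneg hM0 hV, mul_nonneg hnM hL,
      mul_nonneg hnM hS, mul_nonneg hnM hV]
  · have h5 : cut R x * jap x ^ a * pd i (pd j v) x - (pd i (pd j W) x * v x + pd j W x * pd i v x +
        (pd i W x * pd j v x + cut R x * jap x ^ a * pd i (pd j v) x)) =
        -(pd i (pd j W) x * v x + pd j W x * pd i v x + pd i W x * pd j v x) := by ring
    rw [h5, abs_neg]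
    refine (abs_add_le _ _).trans ?_
    have h6 := abs_add_le (pd i (pd j W) x * v x) (pd j W x * pd i v x)
    have h7 := h3 j i
    have h8 := h3 i j
    generalize jap x ^ a * |lap v x| = L at *
    generalize jap x ^ (a - 2) * |v x| = V at *
    nlinarith [mul_nonneg hM0 hL, mul_nonneg hM0 hS, mul_nonneg hM0 hV, mul_nonneg hnM hL,
      mul_nonneg hnM hS, mul_nonneg hnM hV]

/-- Weighted Calderón–Zygmund estimate: the unweighted inequality is applied to `cut R · ⟨x⟩^a · v`,
with commutators bounded uniformly in `R` by `leibniz_bounds`, and `R → ∞` by Fatou's lemma. -/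
lemma Ker.hess_wt (κ : Ker n) (hn : 3 ≤ n) {p : ℝ} (hp : 2 < p) (a : ℝ) {v : Euc n → ℝ}
    (hv : ContDiff ℝ (⊤ : ℕ∞) v) (h0 : wt p (a - 2) v < ⊤) (h1 : ∀ i, wt p (a - 1) (pd i v) < ⊤)
    (h2 : wt p a (lap v) < ⊤) (i j : Fin n) : wt p a (pd i (pd j v)) < ⊤ := by
  obtain ⟨C, hC0, hC⟩ := κ.calderon_zygmund hn hp
  obtain ⟨M, hM0, hM⟩ := leibniz_bounds (n := n) a
  have hp0 : 0 < p := by linarith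
  have hM' := hM v hv
  obtain ⟨H, hH⟩ : ∃ H : Euc n → ℝ, H = fun x => jap x ^ a * |lap v x| +
      (∑ k, jap x ^ (a - 1) * |pd k v x| + jap x ^ (a - 2) * |v x|) := ⟨_, rfl⟩
  have hlc := (contDiff_lap hv).continuous
  have hpc := fun k => (contDiff_pd hv k).continuous
  have hjc := fun b => jap_rpow_continuous (n := n) b
  have hvc := hv.continuous
  have hHfin : ∫⁻ x, ENNReal.ofReal (|H x| ^ p) < ⊤ := by
    rw [hH]
    refine Lp_fin_add hp0.le ((hjc a).mul hlc.abs) (wt_eq p a (lap v) ▸ h2) ?_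
    refine Lp_fin_add hp0.le ?_ ?_ (wt_eq p (a - 2) v ▸ h0)
    · exact continuous_finsetSum _ fun k _ => (hjc _).mul (hpc k).abs
    · exact Lp_fin_sum hp0 Finset.univ (g := fun k x => jap x ^ (a - 1) * |pd k v x|)
        (fun k => (hjc _).mul (hpc k).abs) fun k => wt_eq p (a - 1) (pd k v) ▸ h1 k
  have hMH : ∫⁻ x, ENNReal.ofReal (|M * H x| ^ p) < ⊤ := by
    rw [Lp_const_mul]; exact ENNReal.mul_lt_top ENNReal.ofReal_lt_top hHfin
  obtain ⟨Y, hY⟩ : ∃ Y, ∫⁻ x, ENNReal.ofReal (|M * H x| ^ p) = Y := ⟨_, rfl⟩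
  have hMHn : ∀ x, |M * H x| = M * H x := fun x => by
    refine abs_of_nonneg (mul_nonneg hM0 ?_)
    rw [hH]
    have := fun b => Real.rpow_nonneg (jap_pos x).le b
    have hS : 0 ≤ ∑ k, jap x ^ (a - 1) * |pd k v x| := Finset.sum_nonneg fun k _ =>
      mul_nonneg (this _) (abs_nonneg _)
    exact add_nonneg (mul_nonneg (this _) (abs_nonneg _))
      (add_nonneg hS (mul_nonneg (this _) (abs_nonneg _)))
  have hR : ∀ R, 1 ≤ R → ∫⁻ x, ENNReal.ofReal (|(cut R x * jap x ^ a) * pd i (pd j v) x| ^ p) ≤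
      ENNReal.ofReal (2 ^ p) * (ENNReal.ofReal C * Y + Y) := by
    intro R hR1
    have hR0 : 0 < R := by linarith
    have hWs : ContDiff ℝ (⊤ : ℕ∞) (fun x : Euc n => (cut R x * jap x ^ a) * v x) :=
      ((cut_contDiff R).mul (jap_rpow_contDiff a)).mul hv
    have hWc : HasCompactSupport (fun x : Euc n => (cut R x * jap x ^ a) * v x) :=
      ((cut_hcs hR0).mul_right (f' := fun x : Euc n => jap x ^ a)).mul_right
    have hcz := hC _ hWs hWc i j
    have hu : Continuous (pd i (pd j fun x : Euc n => (cut R x * jap x ^ a) * v x)) :=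
      (contDiff_pd (contDiff_pd hWs j) i).continuous
    have e : ∀ x, (cut R x * jap x ^ a) * pd i (pd j v) x =
        pd i (pd j fun x : Euc n => (cut R x * jap x ^ a) * v x) x +
        ((cut R x * jap x ^ a) * pd i (pd j v) x -
          pd i (pd j fun x : Euc n => (cut R x * jap x ^ a) * v x) x) := fun x => by ring
    have hle : ∫⁻ x, ENNReal.ofReal (|lap (fun x : Euc n => (cut R x * jap x ^ a) * v x) x| ^ p) ≤
        Y := by
      rw [← hY]
      refine lintegral_mono fun x => ENNReal.ofReal_le_ofReal
        (Real.rpow_le_rpow (abs_nonneg _) ?_ hp0.le)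
      rw [hMHn, hH]
      exact (hM' R hR1 i j x).1
    have hle2 : ∫⁻ x, ENNReal.ofReal (|(cut R x * jap x ^ a) * pd i (pd j v) x -
          pd i (pd j fun x : Euc n => (cut R x * jap x ^ a) * v x) x| ^ p) ≤ Y := by
      rw [← hY]
      refine lintegral_mono fun x => ENNReal.ofReal_le_ofReal
        (Real.rpow_le_rpow (abs_nonneg _) ?_ hp0.le)
      rw [hMHn, hH]
      exact (hM' R hR1 i j x).2
    calc _ = ∫⁻ x, ENNReal.ofReal (|pd i (pd j fun x : Euc n => (cut R x * jap x ^ a) * v x) x +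
        ((cut R x * jap x ^ a) * pd i (pd j v) x -
          pd i (pd j fun x : Euc n => (cut R x * jap x ^ a) * v x) x)| ^ p) :=
          lintegral_congr fun x => by rw [← e x]
      _ ≤ _ := Lp_add_le hp0.le hu
      _ ≤ _ := by
        refine mul_le_mul_right (add_le_add (hcz.trans (mul_le_mul_right hle _)) hle2) _
  have hD : Continuous (pd i (pd j v)) := (contDiff_pd (contDiff_pd hv j) i).continuous
  have hfat : wt p a (pd i (pd j v)) ≤ liminf (fun k : ℕ => ∫⁻ x,
      ENNReal.ofReal (|(cut ((k : ℝ) + 1) x * jap x ^ a) * pd i (pd j v) x| ^ p)) atTop := by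
    refine le_trans (le_of_eq ?_) (lintegral_liminf_le fun k => ?_)
    · unfold wt
      refine lintegral_congr fun x => ?_
      refine (Tendsto.liminf_eq ?_).symm
      refine tendsto_const_nhds.congr' ?_
      filter_upwards [eventually_ge_atTop (Nat.ceil ‖x‖)] with k hk
      have hk' : ‖x‖ ≤ (k : ℝ) + 1 := (Nat.ceil_le.1 hk).trans (by linarith)
      rw [cut_one (by positivity) hk', one_mul, abs_mul,
        abs_of_pos (Real.rpow_pos_of_pos (jap_pos x) a)]
    · refine Measurable.ennreal_ofReal (Continuous.measurable ?_)
      exact ((((cut_contDiff _).continuous.mul (hjc a)).mul hD).abs).rpow_const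
        fun x => Or.inr hp0.le
  refine lt_of_le_of_lt (hfat.trans (liminf_le_of_frequently_le'
    (x := ENNReal.ofReal (2 ^ p) * (ENNReal.ofReal C * Y + Y))
    (Frequently.of_forall fun k : ℕ => hR _ (by linarith [k.cast_nonneg (α := ℝ)])))) ?_
  have hYt : Y < ⊤ := hY ▸ hMH
  exact ENNReal.mul_lt_top ENNReal.ofReal_lt_top (ENNReal.add_lt_top.2
    ⟨ENNReal.mul_lt_top ENNReal.ofReal_lt_top hYt, hYt⟩)

end wczb

/-! ### Solvability in weighted spaces -/

section wsol
variable {n : ℕ}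

/-- A bound by the potential of a truncation `h` of `g`, as a Bochner integral, passes to the
`ℝ≥0∞`-valued Riesz potential of `g`. -/
lemma integral_le_riesz {C α : ℝ} (hC : 0 ≤ C) {g h : Euc n → ℝ} (hh : Measurable h)
    (hgh : ∀ y, |h y| ≤ |g y|) {t : ℝ} {x : Euc n}
    (ht : |t| ≤ C * ∫ y, ‖x - y‖ ^ (α - (n : ℝ)) * |h y|) :
    ENNReal.ofReal |t| ≤ ENNReal.ofReal C * riesz α g x := by
  refine (ENNReal.ofReal_le_ofReal ht).trans ?_
  rw [ENNReal.ofReal_mul hC]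
  refine mul_le_mul_right ?_ _
  rw [integral_eq_lintegral_of_nonneg_ae (Eventually.of_forall fun y => by positivity)
    (Measurable.aestronglyMeasurable (by fun_prop))]
  refine ENNReal.ofReal_toReal_le.trans (lintegral_mono fun y => ENNReal.ofReal_le_ofReal ?_)
  exact mul_le_mul_of_nonneg_left (hgh y) (by positivity)

lemma wt_of_riesz (hn : 3 ≤ n) {p δ α : ℝ} (hp : (n : ℝ) < p) (h1 : 2 - (n : ℝ) < δ)
    (h2 : δ < 0) (hα : 0 < α) (hα2 : α ≤ 2) {g u : Euc n → ℝ} (hg : Measurable g)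
    (hfin : wt p (2 - δ - n / p) g < ⊤) {C : ℝ}
    (hu : ∀ x, ENNReal.ofReal |u x| ≤ ENNReal.ofReal C * riesz α g x) :
    wt p (2 - δ - n / p - α) u < ⊤ := by
  have hp0 : 0 < p := lt_of_le_of_lt (by positivity) hp
  obtain ⟨K, hK, hKb⟩ := riesz_schur hn hp h1 h2 hα hα2
  have hb := (hKb g hg).trans_lt (ENNReal.mul_lt_top ENNReal.ofReal_lt_top hfin)
  have hb' := ENNReal.mul_lt_top (a := ENNReal.ofReal C ^ p)
    (ENNReal.rpow_lt_top_of_nonneg hp0.le ENNReal.ofReal_ne_top) hb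
  rw [← lintegral_const_mul' _ _ (ENNReal.rpow_lt_top_of_nonneg hp0.le ENNReal.ofReal_ne_top).ne]
    at hb'
  refine lt_of_le_of_lt (lintegral_mono fun x => ?_) hb'
  have hj := jap_pos x
  rw [Real.mul_rpow (by positivity) (abs_nonneg _), ENNReal.ofReal_mul (by positivity),
    ← Real.rpow_mul hj.le, ← ENNReal.ofReal_rpow_of_nonneg (abs_nonneg _) hp0.le, mul_left_comm,
    ← ENNReal.mul_rpow_of_nonneg _ _ hp0.le]
  exact mul_le_mul_right (ENNReal.rpow_le_rpow (hu x) hp0.le) _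

/-- Solvability of `Δv = g` in the weighted space with decay rate `δ ∈ (2-n, 0)`: the Newton
potential of `g` is the limit of the potentials of truncations of `g`. -/
lemma Ker.weighted_solution (κ : Ker n) (hn : 3 ≤ n) {p δ : ℝ} (hp : (n : ℝ) < p)
    (h1 : 2 - (n : ℝ) < δ) (h2 : δ < 0) {g : Euc n → ℝ} (hg : ContDiff ℝ (⊤ : ℕ∞) g)
    (hfin : wt p (2 - δ - n / p) g < ⊤) :
    ∃ v : Euc n → ℝ, ContDiff ℝ (⊤ : ℕ∞) v ∧ (∀ x, lap v x = g x) ∧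
      (∃ K, ∀ x, |v x| ≤ K * jap x ^ δ) ∧ wt p (2 - δ - n / p - 2) v < ⊤ ∧
      (∀ i, wt p (2 - δ - n / p - 1) (pd i v) < ⊤) ∧
      (∀ i j, wt p (2 - δ - n / p) (pd i (pd j v)) < ⊤) := by
  have hn' : (3 : ℝ) ≤ n := by exact_mod_cast hn
  have hp0 : 0 < p := by linarith
  have hgm := hg.continuous.measurable
  have hC := κ.C_pos.le
  obtain ⟨K, hK, hKb⟩ := riesz_pointwise hn hp h1 h2
  have hB := hKb g hgm
  have hWtop : (wt p (2 - δ - n / p) g) ^ (1 / p) ≠ ⊤ :=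
    (ENNReal.rpow_lt_top_of_nonneg (by positivity) hfin.ne).ne
  obtain ⟨B, hBe⟩ : ∃ B, B = ((wt p (2 - δ - n / p) g) ^ (1 / p)).toReal := ⟨_, rfl⟩
  have hB0 : 0 ≤ B := by rw [hBe]; positivity
  have hB' : ∀ x, riesz 2 g x ≤ ENNReal.ofReal (K * jap x ^ δ * B) := fun x => by
    refine (hB x).trans (le_of_eq ?_)
    rw [ENNReal.ofReal_mul (p := K * jap x ^ δ) (by have := jap_pos x; positivity), hBe,
      ENNReal.ofReal_toReal hWtop]
  have hjle : ∀ x : Euc n, jap x ^ δ ≤ 1 := fun x =>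
    Real.rpow_le_one_of_one_le_of_nonpos (one_le_jap x) h2.le
  obtain ⟨gk, hgk⟩ : ∃ gk : ℕ → Euc n → ℝ, gk = fun (k : ℕ) x => cut ((k : ℝ) + 1) x * g x := ⟨_, rfl⟩
  have hk0 : ∀ k : ℕ, (0 : ℝ) < (k : ℝ) + 1 := fun k => by positivity
  have hgks : ∀ k, ContDiff ℝ (⊤ : ℕ∞) (gk k) := fun k => by
    rw [hgk]; exact (cut_contDiff _).mul hg
  have hgkc : ∀ k, HasCompactSupport (gk k) := fun k => by
    rw [hgk]; exact (cut_hcs (hk0 k)).mul_right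
  have hgkle : ∀ k y, |gk k y| ≤ |g y| := fun k y => by
    rw [hgk]; simp only [abs_mul, abs_of_nonneg (cut_nonneg _ _)]
    exact mul_le_of_le_one_left (abs_nonneg _) (cut_le_one _ _)
  have hgkeq : ∀ (k : ℕ) y, ‖y‖ ≤ k + 1 → gk k y = g y := fun k y hy => by
    rw [hgk]; simp only [cut_one (hk0 k) hy, one_mul]
  obtain ⟨v, hv⟩ : ∃ v : ℕ → Euc n → ℝ, v = fun k => cv κ.Gam (gk k) := ⟨_, rfl⟩
  have hN : ∀ k, _ := fun k => κ.newton_hcs hn (hgks k) (hgkc k)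
  have hv0 : ∀ k x, ENNReal.ofReal |v k x| ≤ ENNReal.ofReal κ.C * riesz 2 g x := fun k x => by
    rw [hv]
    exact integral_le_riesz hC (hgks k).continuous.measurable (hgkle k) ((hN k).2.2.1 x)
  have hv1 : ∀ k i x, ENNReal.ofReal |pd i (v k) x| ≤ ENNReal.ofReal κ.C * riesz 1 g x :=
    fun k i x => by
      rw [hv]
      exact integral_le_riesz hC (hgks k).continuous.measurable (hgkle k) ((hN k).2.2.2 i x)
  have hvb : ∀ k x, |v k x| ≤ κ.C * (K * jap x ^ δ * B) := fun k x => by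
    have hj := jap_pos x
    have h := (hv0 k x).trans (mul_le_mul_right (hB' x) _)
    rw [← ENNReal.ofReal_mul hC] at h
    exact (ENNReal.ofReal_le_ofReal_iff (by positivity)).1 h
  have hlim : ∀ x, Tendsto (fun k => v k x) atTop (𝓝 (∫ y, κ.Gam (x - y) * g y)) := by
    intro x
    have e : (fun k => v k x) = fun k => ∫ y, κ.Gam (x - y) * gk k y := by
      funext k; rw [hv]; exact cv_comm' _ _ _
    rw [e]
    refine tendsto_integral_of_dominated_convergence
      (fun y => κ.C * (‖x - y‖ ^ ((2 : ℝ) - n) * |g y|)) (fun k => ?_) ?_ (fun k => ?_) ?_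
    · exact ((κ.Gam_meas.comp (measurable_const.sub measurable_id)).mul
        (hgks k).continuous.measurable).aestronglyMeasurable
    · refine Integrable.const_mul ⟨Measurable.aestronglyMeasurable (by fun_prop), ?_⟩ _
      rw [hasFiniteIntegral_iff_ofReal (Eventually.of_forall fun y => by positivity)]
      exact (hB' x).trans_lt ENNReal.ofReal_lt_top
    · filter_upwards [Ker.ae_sub_ne hn x] with y hy
      rw [Real.norm_eq_abs, abs_mul, ← mul_assoc]
      exact mul_le_mul (κ.Gam_bound hy) (hgkle k y) (abs_nonneg _) (by positivity)
    · refine Eventually.of_forall fun y => ?_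
      refine tendsto_const_nhds.congr' ?_
      obtain ⟨N, hNy⟩ := exists_nat_ge ‖y‖
      filter_upwards [eventually_ge_atTop N] with k hk
      have : (N : ℝ) ≤ k := by exact_mod_cast hk
      rw [hgkeq k y (by linarith)]
  obtain ⟨w, hw⟩ : ∃ w : Euc n → ℝ, w = fun x => ∫ y, κ.Gam (x - y) * g y := ⟨_, rfl⟩
  have hlimw : ∀ x, Tendsto (fun k => v k x) atTop (𝓝 (w x)) := by rw [hw]; exact hlim
  have hLS := κ.limit_solution hn (v := v) (w := w) (g := g) (M := κ.C * (K * 1 * B))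
    (fun k => by rw [hv]; exact (hN k).1)
    (fun k x => (hvb k x).trans (by have := hjle x; gcongr)) hlimw hg (fun R => by
      obtain ⟨N, hNR⟩ := exists_nat_ge R
      filter_upwards [eventually_ge_atTop N] with k hk x hx
      have : (N : ℝ) ≤ k := by exact_mod_cast hk
      rw [hv]
      exact ((hN k).2.1 x).trans (hgkeq k x (by linarith)))
  obtain ⟨hws, hwl, hwp, -⟩ := hLS
  have w0 : wt p (2 - δ - n / p - 2) w < ⊤ := by
    refine wt_of_riesz hn hp h1 h2 two_pos le_rfl hgm hfin (C := κ.C) fun x => ?_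
    exact le_of_tendsto' ((ENNReal.continuous_ofReal.tendsto _).comp (hlimw x).abs)
      fun k => hv0 k x
  have w1 : ∀ i, wt p (2 - δ - n / p - 1) (pd i w) < ⊤ := fun i => by
    refine wt_of_riesz hn hp h1 h2 one_pos one_le_two hgm hfin (C := κ.C) fun x => ?_
    exact le_of_tendsto' ((ENNReal.continuous_ofReal.tendsto _).comp (hwp i x).abs)
      fun k => hv1 k i x
  refine ⟨w, hws, hwl, ⟨κ.C * (K * B), fun x => ?_⟩, w0, w1, fun i j => ?_⟩
  · exact le_of_tendsto' (hlimw x).abs fun k => (hvb k x).trans (le_of_eq (by ring))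
  · refine κ.hess_wt hn (by linarith) _ hws w0 w1 ?_ i j
    rwa [show lap w = g from funext hwl]

end wsol

/-! ### The radial model and gluing along the unit sphere -/

section fin
variable {n : ℕ}

lemma euc_sum (y : Euc n) : y = ∑ i, y i • EuclideanSpace.single i (1 : ℝ) := by
  ext j
  simp [Pi.single_apply]

lemma clm_norm_le {F : Type*} [NormedAddCommGroup F] [NormedSpace ℝ F] (L : Euc n →L[ℝ] F) :
    ‖L‖ ≤ ∑ i, ‖L (EuclideanSpace.single i 1)‖ := by
  refine ContinuousLinearMap.opNorm_le_bound _ (by positivity) fun y => ?_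
  conv_lhs => rw [euc_sum y]
  rw [map_sum, Finset.sum_mul]
  refine (norm_sum_le _ _).trans (Finset.sum_le_sum fun i _ => ?_)
  rw [map_smul, norm_smul, mul_comm]
  exact mul_le_mul_of_nonneg_left (by simpa using PiLp.norm_apply_le y i) (norm_nonneg _)

lemma norm_iter_one_le (v : Euc n → ℝ) (x : Euc n) :
    ‖iteratedFDeriv ℝ 1 v x‖ ≤ ∑ i, |pd i v x| := by
  rw [norm_iteratedFDeriv_one]
  exact clm_norm_le _

lemma norm_iter_two_le {v : Euc n → ℝ} (hv : ContDiff ℝ (⊤ : ℕ∞) v) (x : Euc n) :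
    ‖iteratedFDeriv ℝ 2 v x‖ ≤ ∑ i, ∑ j, |pd i (pd j v) x| := by
  rw [show (2 : ℕ) = 1 + 1 from rfl, ← norm_iteratedFDeriv_fderiv, norm_iteratedFDeriv_one]
  refine (clm_norm_le _).trans (Finset.sum_le_sum fun i _ => ?_)
  refine (clm_norm_le _).trans (Finset.sum_le_sum fun j _ => le_of_eq ?_)
  have hd : DifferentiableAt ℝ (fderiv ℝ v) x :=
    ((hv.fderiv_right (m := 1) (WithTop.coe_le_coe.2 le_top)).differentiable (by simp)) x
  have : pd i (pd j v) x = fderiv ℝ (fderiv ℝ v) x (EuclideanSpace.single i 1)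
      (EuclideanSpace.single j 1) := by
    unfold pd
    rw [fderiv_clm_apply hd (differentiableAt_const _)]
    simp
  rw [this, Real.norm_eq_abs]

/-- Weighted integrability is insensitive to modifications on the unit ball: a function that agrees
with a smooth function inside the unit ball and with `v` outside it is as good as `v`. The unit
sphere, where no differentiability is available, is a null set. -/
lemma glue_fin (hn : 3 ≤ n) {u v z : Euc n → ℝ} {p b : ℝ} (hp : 0 < p)
    (hz : ContDiff ℝ (⊤ : ℕ∞) z) (hout : ∀ x, 1 < ‖x‖ → u =ᶠ[𝓝 x] v)
    (hin : ∀ x, ‖x‖ < 1 → u =ᶠ[𝓝 x] z) (j : ℕ)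
    (hfin : ∫⁻ x, ENNReal.ofReal ((jap x ^ b * ‖iteratedFDeriv ℝ j v x‖) ^ p) < ⊤) :
    ∫⁻ x, ENNReal.ofReal ((jap x ^ b * ‖iteratedFDeriv ℝ j u x‖) ^ p) < ⊤ := by
  have := nontrivial_euc hn
  have hs : ∀ᵐ x : Euc n, ‖x‖ ≠ 1 := by
    have h := Measure.addHaar_sphere (volume : Measure (Euc n)) 0 1
    filter_upwards [compl_mem_ae_iff.2 h] with x hx hx1
    exact hx (by simpa using hx1)
  have hzc : Continuous fun x => ENNReal.ofReal ((jap x ^ b * ‖iteratedFDeriv ℝ j z x‖) ^ p) := by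
    refine ENNReal.continuous_ofReal.comp (Continuous.rpow_const ?_ fun x => Or.inr hp.le)
    exact (jap_rpow_continuous b).mul
      (hz.continuous_iteratedFDeriv (WithTop.coe_le_coe.2 le_top)).norm
  obtain ⟨Z, hZ⟩ : ∃ Z : Euc n → ℝ≥0∞, Z = (Metric.closedBall 0 1).indicator
    fun x => ENNReal.ofReal ((jap x ^ b * ‖iteratedFDeriv ℝ j z x‖) ^ p) := ⟨_, rfl⟩
  have hZm : Measurable Z := by
    rw [hZ]; exact hzc.measurable.indicator Metric.isClosed_closedBall.measurableSet
  have hZf : ∫⁻ x, Z x < ⊤ := by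
    rw [hZ, lintegral_indicator Metric.isClosed_closedBall.measurableSet]
    have hK := isCompact_closedBall (0 : Euc n) 1
    obtain ⟨x₀, -, hx₀⟩ := hK.exists_isMaxOn ⟨0, by simp⟩ hzc.continuousOn
    refine (setLIntegral_mono' hK.measurableSet fun x hx => hx₀ hx).trans_lt ?_
    rw [setLIntegral_const]
    exact ENNReal.mul_lt_top ENNReal.ofReal_lt_top hK.measure_lt_top
  have hle : ∫⁻ x, ENNReal.ofReal ((jap x ^ b * ‖iteratedFDeriv ℝ j u x‖) ^ p) ≤
      ∫⁻ x, (Z x + ENNReal.ofReal ((jap x ^ b * ‖iteratedFDeriv ℝ j v x‖) ^ p)) := by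
    refine lintegral_mono_ae ?_
    filter_upwards [hs] with x hx
    rcases lt_or_gt_of_ne hx with h | h
    · rw [((hin x h).iteratedFDeriv ℝ j).eq_of_nhds]
      refine le_add_right (le_of_eq ?_)
      rw [hZ, Set.indicator_of_mem (by simpa using h.le)]
    · rw [((hout x h).iteratedFDeriv ℝ j).eq_of_nhds]
      exact le_add_left le_rfl
  refine hle.trans_lt ?_
  rw [lintegral_add_left hZm]
  exact ENNReal.add_lt_top.2 ⟨hZf, hfin⟩

/-- `Δ‖x‖^γ = (γ² + (n-2)γ) ‖x‖^(γ-2)`, for the smooth modification of `‖x‖^γ` near the origin. -/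
lemma lap_cutPow (γ : ℝ) {x : Euc n} (hx : 1 ≤ ‖x‖) :
    lap (fun x : Euc n => cutPow (γ / 2) (‖x‖ ^ 2)) x =
      (γ ^ 2 + ((n : ℝ) - 2) * γ) * ‖x‖ ^ (γ - 2) := by
  have hc := cutPow_contDiff (γ / 2)
  have hc' := deriv_contDiff hc
  rw [lap_radial (q := cutPow (γ / 2)) (q' := deriv (cutPow (γ / 2)))
    (q'' := deriv (deriv (cutPow (γ / 2))))
    (fun t => (hc.differentiable (by simp) t).hasDerivAt)
    (fun t => (hc'.differentiable (by simp) t).hasDerivAt)]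
  have d1 : ∀ t : ℝ, 1 / 2 < t → deriv (cutPow (γ / 2)) t = γ / 2 * t ^ (γ / 2 - 1) := by
    intro t ht
    have : cutPow (γ / 2) =ᶠ[𝓝 t] fun s => s ^ (γ / 2) := by
      filter_upwards [lt_mem_nhds ht] with s hs using cutPow_eq hs.le
    rw [this.deriv_eq, Real.deriv_rpow_const]
  have d2 : ∀ t : ℝ, 1 / 2 < t → deriv (deriv (cutPow (γ / 2))) t =
      γ / 2 * ((γ / 2 - 1) * t ^ (γ / 2 - 1 - 1)) := by
    intro t ht
    have : deriv (cutPow (γ / 2)) =ᶠ[𝓝 t] fun s => γ / 2 * s ^ (γ / 2 - 1) := by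
      filter_upwards [lt_mem_nhds ht] with s hs using d1 s hs
    rw [this.deriv_eq, deriv_const_mul_field, Real.deriv_rpow_const]
  have hx0 : 0 < ‖x‖ := by linarith
  have ht : 1 / 2 < ‖x‖ ^ 2 := by nlinarith
  rw [d1 _ ht, d2 _ ht]
  have e : (‖x‖ ^ 2) ^ (γ / 2 - 1) = ‖x‖ ^ (γ - 2) := by
    rw [← Real.rpow_natCast, ← Real.rpow_mul hx0.le]; congr 1; push_cast; ring
  have e2 : ‖x‖ ^ 2 * (‖x‖ ^ 2) ^ (γ / 2 - 1 - 1) = ‖x‖ ^ (γ - 2) := by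
    rw [Real.rpow_sub_one (by positivity), ← e]; field_simp
  linear_combination (4 * (γ / 2) * (γ / 2 - 1)) * e2 + (2 * n * (γ / 2)) * e

lemma cutPow_norm {γ : ℝ} {x : Euc n} (hx : 1 ≤ ‖x‖) :
    cutPow (γ / 2) (‖x‖ ^ 2) = ‖x‖ ^ γ := by
  rw [cutPow_eq (by nlinarith), ← Real.rpow_natCast, ← Real.rpow_mul (norm_nonneg _)]
  congr 1; push_cast; ring

/-- A continuous function tending to zero at infinity is bounded. -/
lemma bounded_of_tendsto {u : Euc n → ℝ} (hu : Continuous u)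
    (h0 : Tendsto u (cocompact (Euc n)) (𝓝 0)) : ∃ M, ∀ x, |u x| ≤ M := by
  have h1 : ∀ᶠ x in cocompact (Euc n), |u x| < 1 := by
    have := h0.abs
    rw [abs_zero] at this
    exact this.eventually (gt_mem_nhds one_pos)
  obtain ⟨s, hs, hsu⟩ := mem_cocompact.1 h1
  obtain ⟨M, hM⟩ := hs.exists_bound_of_continuousOn hu.continuousOn
  refine ⟨max M 1, fun x => ?_⟩
  by_cases hx : x ∈ s
  · exact (hM x hx).trans (le_max_left _ _)
  · exact (le_of_lt (hsu hx)).trans (le_max_right _ _)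

lemma tendsto_cutPow {γ : ℝ} (hγ : γ < 0) :
    Tendsto (fun x : Euc n => cutPow (γ / 2) (‖x‖ ^ 2)) (cocompact (Euc n)) (𝓝 0) := by
  have h := (tendsto_rpow_neg_atTop (y := -γ) (by linarith)).comp
    (tendsto_norm_cocompact_atTop (E := Euc n))
  refine h.congr' ?_
  filter_upwards [tendsto_norm_cocompact_atTop (E := Euc n) |>.eventually_ge_atTop 1] with x hx
  simp [cutPow_norm hx]

lemma tendsto_jap_rpow {δ : ℝ} (hδ : δ < 0) :
    Tendsto (fun x : Euc n => jap x ^ δ) (cocompact (Euc n)) (𝓝 0) := by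
  have hj : Tendsto (fun x : Euc n => jap x) (cocompact (Euc n)) atTop :=
    tendsto_atTop_mono norm_le_jap tendsto_norm_cocompact_atTop
  have h := (tendsto_rpow_neg_atTop (y := -δ) (by linarith)).comp hj
  simpa [Function.comp_def] using h

end fin

/-! ### The polyhomogeneous solution -/

section fin2
variable {n : ℕ}

lemma sob_fin_aux {p b b' : ℝ} (hp : 0 < p) (hb : b ≤ b') {m : Euc n → ℝ} {H : Euc n → ℝ}
    (hm0 : ∀ x, 0 ≤ m x) (hm : ∀ x, jap x ^ b' * m x ≤ H x)
    (hH : ∫⁻ x, ENNReal.ofReal (|H x| ^ p) < ⊤) :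
    ∫⁻ x, ENNReal.ofReal ((jap x ^ b * m x) ^ p) < ⊤ := by
  refine lt_of_le_of_lt (lintegral_mono fun x => ENNReal.ofReal_le_ofReal ?_) hH
  have hj := jap_pos x
  refine Real.rpow_le_rpow (mul_nonneg (by positivity) (hm0 x)) ?_ hp.le
  refine (mul_le_mul_of_nonneg_right ?_ (hm0 x)).trans ((hm x).trans (le_abs_self _))
  exact Real.rpow_le_rpow_of_exponent_le (one_le_jap x) hb

/-- The coordinate bounds with rate `δ` give the iterated-derivative bounds occurring in `SobW 2 p δ'`
for every weaker rate `δ' ≥ δ`. -/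
lemma sob_fin {p δ δ' : ℝ} (hp : 0 < p) (hδ : δ ≤ δ') {v : Euc n → ℝ}
    (hv : ContDiff ℝ (⊤ : ℕ∞) v) (w0 : wt p (2 - δ - n / p - 2) v < ⊤)
    (w1 : ∀ i, wt p (2 - δ - n / p - 1) (pd i v) < ⊤)
    (w2 : ∀ i j, wt p (2 - δ - n / p) (pd i (pd j v)) < ⊤) {j : ℕ} (hj : j < 3) :
    ∫⁻ x, ENNReal.ofReal
      ((jap x ^ (-δ' - (n : ℝ) / p + (j : ℝ)) * ‖iteratedFDeriv ℝ j v x‖) ^ p) < ⊤ := by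
  interval_cases j
  · refine sob_fin_aux hp (b' := 2 - δ - n / p - 2)
      (H := fun x => jap x ^ (2 - δ - n / p - 2) * |v x|) (by push_cast; linarith)
      (fun x => norm_nonneg _) (fun x => ?_) (wt_eq p _ v ▸ w0)
    rw [norm_iteratedFDeriv_zero, Real.norm_eq_abs]
  · refine sob_fin_aux hp (b' := 2 - δ - n / p - 1)
      (H := fun x => ∑ i, jap x ^ (2 - δ - n / p - 1) * |pd i v x|) (by push_cast; linarith)
      (fun x => norm_nonneg _) (fun x => ?_) ?_
    · rw [← Finset.mul_sum]
      have := jap_pos x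
      exact mul_le_mul_of_nonneg_left (norm_iter_one_le v x) (by positivity)
    · exact Lp_fin_sum hp Finset.univ
        (g := fun i x => jap x ^ (2 - δ - n / p - 1) * |pd i v x|)
        (fun i => (jap_rpow_continuous _).mul (contDiff_pd hv i).continuous.abs)
        fun i => wt_eq p _ (pd i v) ▸ w1 i
  · refine sob_fin_aux hp (b' := 2 - δ - n / p)
      (H := fun x => ∑ k : Fin n × Fin n, jap x ^ (2 - δ - n / p) * |pd k.1 (pd k.2 v) x|)
      (by push_cast; linarith) (fun x => norm_nonneg _) (fun x => ?_) ?_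
    · rw [← Finset.mul_sum, Fintype.sum_prod_type (fun k : Fin n × Fin n => |pd k.1 (pd k.2 v) x|)]
      have hj := Real.rpow_nonneg (jap_pos x).le (2 - δ - n / p)
      exact mul_le_mul_of_nonneg_left (norm_iter_two_le hv x) hj
    · refine Lp_fin_sum hp Finset.univ
        (g := fun (k : Fin n × Fin n) x => jap x ^ (2 - δ - n / p) * |pd k.1 (pd k.2 v) x|)
        (fun k => (jap_rpow_continuous _).mul
          (contDiff_pd (contDiff_pd hv k.2) k.1).continuous.abs) fun k => ?_
      rw [← wt_eq p _ (pd k.1 (pd k.2 v))]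
      exact w2 k.1 k.2

end fin2

/-- **Solutions with inhomogeneity of exact polyhomogeneous leading order
(flat case of Proposition 3.2).** -/
theorem polyhomogeneous_solution (n : ℕ) (hn : 3 ≤ n) (p γ γ' γ'' : ℝ)
    (hp : (n : ℝ) < p) (hγ1 : 2 - (n : ℝ) < γ) (hγ2 : γ < 0)
    (hγ'1 : 2 - (n : ℝ) < γ') (hγ'2 : γ' < 0) (hγ'γ : γ' < γ)
    (hγ'' : (2 - (n : ℝ) < max γ' (2 * γ) ∧ γ'' = max γ' (2 * γ)) ∨
            (max γ' (2 * γ) ≤ 2 - (n : ℝ) ∧ 2 - (n : ℝ) < γ'' ∧ γ'' < γ))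
    (f : Euc n → ℝ) (hf : ContDiff ℝ (⊤ : ℕ∞) f)
    (hfhat : LpW p (γ' - 2)
      (fun x => if 1 ≤ ‖x‖ then f x - ‖x‖ ^ (γ - 2) else 0) < ⊤)
    (hfloc : (∫⁻ x, ENNReal.ofReal (|if ‖x‖ < 1 then f x else 0| ^ p)) < ⊤) :
    ∃ w : Euc n → ℝ,
      (ContDiff ℝ (⊤ : ℕ∞) w ∧ (∃ M, ∀ x, |w x| ≤ M) ∧
        Tendsto w (cocompact (Euc n)) (𝓝 0) ∧ (∀ x, lap w x = f x)) ∧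
      (∀ w' : Euc n → ℝ, ContDiff ℝ (⊤ : ℕ∞) w' → (∃ M, ∀ x, |w' x| ≤ M) →
        Tendsto w' (cocompact (Euc n)) (𝓝 0) → (∀ x, lap w' x = f x) → w' = w) ∧
      SobW 2 p γ'' (fun x =>
        if 1 ≤ ‖x‖ then w x - (γ ^ 2 + ((n : ℝ) - 2) * γ)⁻¹ * ‖x‖ ^ γ
        else w x - (γ ^ 2 + ((n : ℝ) - 2) * γ)⁻¹) < ⊤ := by
  obtain ⟨κ⟩ := exists_ker n hn
  have hn' : (3 : ℝ) ≤ n := by exact_mod_cast hn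
  have hp0 : 0 < p := by linarith
  -- Since `γ' > 2 - n`, the maximum exceeds `2 - n` and only the first alternative can hold.
  have hle : γ' ≤ γ'' := by
    rcases hγ'' with ⟨-, h⟩ | ⟨h, -, -⟩
    · rw [h]; exact le_max_left _ _
    · exact absurd ((le_max_left _ _).trans h) (not_le.2 hγ'1)
  have hA : γ ^ 2 + ((n : ℝ) - 2) * γ ≠ 0 := by
    rw [show γ ^ 2 + ((n : ℝ) - 2) * γ = γ * (γ + (n - 2)) by ring]
    exact mul_ne_zero hγ2.ne (by linarith : (0 : ℝ) < γ + (n - 2)).ne'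
  obtain ⟨c, hc⟩ : ∃ c, (γ ^ 2 + ((n : ℝ) - 2) * γ)⁻¹ = c := ⟨_, rfl⟩
  rw [hc]
  obtain ⟨q, hq⟩ : ∃ q : Euc n → ℝ, q = fun x => cutPow (γ / 2) (‖x‖ ^ 2) := ⟨_, rfl⟩
  have hqs : ContDiff ℝ (⊤ : ℕ∞) q := by rw [hq]; exact contDiff_radial (cutPow_contDiff _)
  have hq1 : ∀ x, 1 ≤ ‖x‖ → q x = ‖x‖ ^ γ := fun x hx => by rw [hq]; exact cutPow_norm hx
  have hql : ∀ x, 1 ≤ ‖x‖ → c * lap q x = ‖x‖ ^ (γ - 2) := fun x hx => by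
    rw [hq, lap_cutPow γ hx, ← hc, inv_mul_cancel_left₀ hA]
  have hqt : Tendsto q (cocompact (Euc n)) (𝓝 0) := by rw [hq]; exact tendsto_cutPow hγ2
  obtain ⟨g, hg⟩ : ∃ g : Euc n → ℝ, g = fun x => f x - c * lap q x := ⟨_, rfl⟩
  have hgs : ContDiff ℝ (⊤ : ℕ∞) g := by
    rw [hg]; exact hf.sub (contDiff_const.mul (contDiff_lap hqs))
  -- `g` agrees with `f̂` outside the unit ball and is smooth inside
  have hgfin : wt p (2 - γ' - n / p) g < ⊤ := by
    have h1 : ∫⁻ x : Euc n, ENNReal.ofReal ((jap x ^ (2 - γ' - n / p) *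
        ‖if 1 ≤ ‖x‖ then f x - ‖x‖ ^ (γ - 2) else 0‖) ^ p) < ⊤ := by
      have h := (ENNReal.rpow_lt_top_iff_of_pos (one_div_pos.2 hp0)).1 hfhat
      rwa [show -(γ' - 2) - (n : ℝ) / p = 2 - γ' - n / p by ring] at h
    have h2 := glue_fin (u := g) (v := fun x => if 1 ≤ ‖x‖ then f x - ‖x‖ ^ (γ - 2) else 0)
      (z := g) (b := 2 - γ' - n / p) hn hp0 hgs (fun x hx => ?_) (fun x _ => EventuallyEq.rfl) 0
      (by simpa only [norm_iteratedFDeriv_zero] using h1)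
    · unfold wt
      simpa only [norm_iteratedFDeriv_zero, Real.norm_eq_abs] using h2
    · filter_upwards [continuous_norm.continuousAt.eventually (lt_mem_nhds hx)] with y hy
      rw [if_pos hy.le, hg]
      simp only [hql y hy.le]
  obtain ⟨v, hvs, hvl, ⟨K, hK⟩, w0, w1, w2⟩ := κ.weighted_solution hn hp hγ'1 hγ'2 hgs hgfin
  have hvt : Tendsto v (cocompact (Euc n)) (𝓝 0) := by
    refine squeeze_zero_norm hK ?_
    simpa using (tendsto_jap_rpow hγ'2).const_mul K
  obtain ⟨w, hw⟩ : ∃ w : Euc n → ℝ, w = fun x => v x + c * q x := ⟨_, rfl⟩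
  have hws : ContDiff ℝ (⊤ : ℕ∞) w := by rw [hw]; exact hvs.add (contDiff_const.mul hqs)
  have hwt : Tendsto w (cocompact (Euc n)) (𝓝 0) := by
    rw [hw]; simpa using hvt.add (hqt.const_mul c)
  have hwl : ∀ x, lap w x = f x := fun x => by
    rw [hw, lap_add hvs (contDiff_const.mul hqs), lap_const_mul c hqs]
    simp only [hvl, hg]
    ring
  refine ⟨w, ⟨hws, bounded_of_tendsto hws.continuous hwt, hwt, hwl⟩, ?_, ?_⟩
  · intro w' hw's _ hw't hw'l
    have hd : Tendsto (fun x => w' x - w x) (cocompact (Euc n)) (𝓝 0) := by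
      simpa using hw't.sub hwt
    have h := κ.harmonic_zero hn (h := fun x => w' x - w x) (hw's.sub hws)
      (fun x => by rw [lap_sub hw's hws]; simp only [hw'l, hwl, sub_self])
      (bounded_of_tendsto (hw's.sub hws).continuous hd) hd
    funext x
    exact sub_eq_zero.1 (congrFun h x)
  · unfold SobW
    refine ENNReal.sum_lt_top.2 fun j hj => ?_
    refine ENNReal.rpow_lt_top_of_nonneg (one_div_pos.2 hp0).le (ne_of_lt ?_)
    refine glue_fin (v := v) (z := fun x => w x - c) hn hp0 (hws.sub contDiff_const)
      (fun x hx => ?_) (fun x hx => ?_) j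
      (sob_fin hp0 hle hvs w0 w1 w2 (Finset.mem_range.1 hj))
    · filter_upwards [continuous_norm.continuousAt.eventually (lt_mem_nhds hx)] with y hy
      rw [if_pos hy.le, hw]
      simp only [hq1 y hy.le]
      ring
    · filter_upwards [continuous_norm.continuousAt.eventually (gt_mem_nhds hx)] with y hy
      rw [if_neg (not_le.2 hy)]
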